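/- Let M ≥ 3 be an integer and let T_j : ℂ → ℂ, j = 1,…,M, be the self-similarity maps T_j(z) = z/M + c_j, where the points c_1,…,c_M ∈ ℂ are not all collinear. Assume the T_j satisfy the open set condition: there is a nonempty bounded open set U ⊆ ℂ with T_j(U) ⊆ U for every j and with the sets T_1(U),…,T_M(U) pairwise disjoint. Let E_n := ⋃ over all words (j_1,…,j_n) ∈ {1,…,M}^n of the sets (T_{j_1} ∘ ⋯ ∘ T_{j_n})(U). Then there exist constants c > 0 and C > 0 such that for all n ≥ 2, Fav(E_n) ≤ C e^{-c √(log n)}. -/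

import Mathlib

open MeasureTheory

/-- Projection of a planar set onto the direction `θ`. -/
noncomputable def projDir (θ : ℝ) (E : Set ℂ) : Set ℝ :=
  (fun z : ℂ => (Complex.exp (-(θ : ℂ) * Complex.I) * z).re) '' E

/-- Favard length: the average over directions of the length of the projection. -/
noncomputable def fav (E : Set ℂ) : ℝ :=
  (1 / Real.pi) * ∫ θ in (0:ℝ)..Real.pi, (volume (projDir θ E)).toReal

/-- Image of `U` under the composition `T_{j₁} ∘ ⋯ ∘ T_{jₙ}` for the word `[j₁,…,jₙ]`. -/
def iterImg {M : ℕ} (T : Fin M → ℂ → ℂ) (U : Set ℂ) : List (Fin M) → Set ℂ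
  | [] => U
  | j :: w => T j '' iterImg T U w

/-!
In direction `θ` the set `E_n` projects into a union of `M ^ n` intervals of length comparable to
`M⁻ⁿ`, the `n`-th generation of a self-similar set on the line with translations
`t j = proj_θ (c j)`. If the multiplicity function of these intervals has large `L²` norm at one
level, then a definite proportion of the words is crowded, i.e. their intervals meet places of
multiplicity at least `K`. The crowded intervals cover only length `O(1 / K)`, and repeating the
argument inside each of the others makes the remaining length decay geometrically.

The `L²` norm of the multiplicity function dominates the energy of the Riesz product
`∏ₖ φ (Mᵏ y)`, `φ (u) = M⁻¹ ∑ⱼ exp (i u t j)`, on a fixed interval `[-δ, δ]`. Cut this interval into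
shells of ratio `M ^ l`. If the energy were bounded at all levels, every shell would contribute a
definite amount, which is absurd once there are enough shells: the low-frequency factors can be
small only on a thin set, since one of the first `M` derivatives of `φ` is always large when some
`t i₀` is separated from the other `t j`, and the thin set carries little energy as long as a block
of high-frequency factors is small.

That block is small unless, at most levels `k`, the vector of the two numbers
`Mᵏ y (t j - t i₀) / 2π`, for a suitable pair of indices `j`, is close to the integer lattice.
Rounding such an orbit leaves few possible itineraries, and because the two differences `c j - c i₀`
are linearly independent each itinerary determines `θ` up to a small error. Hence outside a set of
directions of measure `O(M⁻ˢ)` the projection has length `O(M⁻ˢ)` once `n ≥ M ^ (p s²)`, and `M⁻ˢ`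
is then `exp (-c √(log n))`.
-/

namespace FavardLength

open scoped ENNReal

section TentTransform

theorem integral_neg_self_eq_zero_of_odd {f : ℝ → ℝ} (hf : Function.Odd f) (h : ℝ) :
    ∫ y in (-h)..h, f y = 0 := by
  have hneg := intervalIntegral.integral_comp_neg (a := -h) (b := h) f
  simp only [hf _, intervalIntegral.integral_neg, neg_neg] at hneg
  linarith

theorem integral_neg_self_eq_two_mul_of_even {f : ℝ → ℝ} (hf : Function.Even f)
    (hc : Continuous f) (h : ℝ) :
    ∫ y in (-h)..h, f y = 2 * ∫ y in (0 : ℝ)..h, f y := by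
  have hneg := intervalIntegral.integral_comp_neg (a := 0) (b := h) f
  simp only [hf _, neg_zero] at hneg
  rw [← intervalIntegral.integral_add_adjacent_intervals (hc.intervalIntegrable _ 0)
    (hc.intervalIntegrable _ _), ← hneg, two_mul]

/-- The cosine transform of the tent `y ↦ h - |y|` on `[-h, h]`: the Fejér kernel in the
variable `d`, up to normalisation. It is nonnegative and decays quadratically. -/
noncomputable def tentTransform (h d : ℝ) : ℝ :=
  ∫ y in (-h)..h, (h - |y|) * Real.cos (d * y)

theorem tentTransform_eq_two_mul_integral {h : ℝ} (hh : 0 ≤ h) (d : ℝ) :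
    tentTransform h d = 2 * ∫ y in (0 : ℝ)..h, (h - y) * Real.cos (d * y) := by
  have heven : Function.Even fun y => (h - |y|) * Real.cos (d * y) := fun y => by
    simp only [abs_neg, mul_neg, Real.cos_neg]
  rw [tentTransform, integral_neg_self_eq_two_mul_of_even heven (by fun_prop)]
  congr 1
  refine intervalIntegral.integral_congr fun y hy => ?_
  rw [Set.uIcc_of_le hh] at hy
  simp only [abs_of_nonneg hy.1]

theorem tentTransform_zero {h : ℝ} (hh : 0 ≤ h) : tentTransform h 0 = h ^ 2 := by
  rw [tentTransform_eq_two_mul_integral hh]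
  simp only [zero_mul, Real.cos_zero, mul_one]
  rw [intervalIntegral.integral_sub (by simp) (by simp), integral_id]
  simp
  ring

theorem tentTransform_of_ne_zero {h d : ℝ} (hh : 0 ≤ h) (hd : d ≠ 0) :
    tentTransform h d = 2 * (1 - Real.cos (d * h)) / d ^ 2 := by
  have hderiv : ∀ x, HasDerivAt
      (fun y => (h - y) * Real.sin (d * y) / d - Real.cos (d * y) / d ^ 2)
      ((h - x) * Real.cos (d * x)) x := fun x => by
    have hsin : HasDerivAt (fun y => Real.sin (d * y)) (Real.cos (d * x) * (d * 1)) x :=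
      ((hasDerivAt_id x).const_mul d).sin
    have hcos : HasDerivAt (fun y => Real.cos (d * y)) (-Real.sin (d * x) * (d * 1)) x :=
      ((hasDerivAt_id x).const_mul d).cos
    have hlin : HasDerivAt (fun y => h - y) (-1) x := by
      simpa using (hasDerivAt_id x).const_sub h
    refine (((hlin.mul hsin).div_const d).sub (hcos.div_const (d ^ 2))).congr_deriv ?_
    field_simp
    ring
  rw [tentTransform_eq_two_mul_integral hh,
    intervalIntegral.integral_eq_sub_of_hasDerivAt (fun x _ => hderiv x)
      (Continuous.intervalIntegrable (by fun_prop) _ _)]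
  simp
  ring

theorem tentTransform_nonneg {h : ℝ} (hh : 0 ≤ h) (d : ℝ) : 0 ≤ tentTransform h d := by
  rcases eq_or_ne d 0 with rfl | hd
  · rw [tentTransform_zero hh]
    positivity
  · rw [tentTransform_of_ne_zero hh hd]
    have := Real.cos_le_one (d * h)
    exact div_nonneg (by linarith) (sq_nonneg d)

theorem tentTransform_le_sq {h : ℝ} (hh : 0 ≤ h) (d : ℝ) : tentTransform h d ≤ h ^ 2 := by
  rw [← tentTransform_zero hh]
  refine intervalIntegral.integral_mono_on (by linarith)
    (Continuous.intervalIntegrable (by fun_prop) _ _)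
    (Continuous.intervalIntegrable (by fun_prop) _ _) fun y hy => ?_
  rw [zero_mul, Real.cos_zero]
  exact mul_le_mul_of_nonneg_left (Real.cos_le_one _) (sub_nonneg.2 (abs_le.2 hy))

theorem tentTransform_le_four_div_sq {h d : ℝ} (hh : 0 ≤ h) (hd : d ≠ 0) :
    tentTransform h d ≤ 4 / d ^ 2 := by
  rw [tentTransform_of_ne_zero hh hd]
  gcongr
  linarith [Real.neg_one_le_cos (d * h)]

end TentTransform

section TentAverage

variable {f : ℝ → ℝ}

theorem mul_integral_le_integral_tent_mul (hc : Continuous f) (hf : 0 ≤ f) (a : ℝ) {h : ℝ}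
    (hh : 0 ≤ h) :
    h * ∫ y in (a - h)..(a + h), f y ≤
      ∫ y in (-(2 * h))..(2 * h), (2 * h - |y|) * f (a + y) := by
  have htranslate : ∫ y in (a - h)..(a + h), f y = ∫ y in (-h)..h, f (a + y) := by
    rw [intervalIntegral.integral_comp_add_left, sub_eq_add_neg]
  rw [htranslate, ← intervalIntegral.integral_const_mul]
  calc ∫ y in (-h)..h, h * f (a + y) ≤ ∫ y in (-h)..h, (2 * h - |y|) * f (a + y) := by
        refine intervalIntegral.integral_mono_on (by linarith)
          (Continuous.intervalIntegrable (by fun_prop) _ _)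
          (Continuous.intervalIntegrable (by fun_prop) _ _) fun y hy => ?_
        have : |y| ≤ h := abs_le.2 hy
        exact mul_le_mul_of_nonneg_right (by linarith) (hf _)
    _ ≤ ∫ y in (-(2 * h))..(2 * h), (2 * h - |y|) * f (a + y) := by
        refine intervalIntegral.integral_mono_interval (by linarith) (by linarith) (by linarith)
          ?_ (Continuous.intervalIntegrable (by fun_prop) _ _)
        filter_upwards [ae_restrict_mem measurableSet_Ioc] with y hy
        exact mul_nonneg (sub_nonneg.2 (abs_le.2 ⟨hy.1.le, hy.2⟩)) (hf _)

theorem integral_tent_mul_le (hc : Continuous f) (hf : 0 ≤ f) {h : ℝ} (hh : 0 ≤ h) :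
    ∫ y in (-h)..h, (h - |y|) * f y ≤ h * ∫ y in (-h)..h, f y := by
  rw [← intervalIntegral.integral_const_mul]
  refine intervalIntegral.integral_mono_on (by linarith)
    (Continuous.intervalIntegrable (by fun_prop) _ _)
    (Continuous.intervalIntegrable (by fun_prop) _ _) fun y _ => ?_
  exact mul_le_mul_of_nonneg_right (by linarith [abs_nonneg y]) (hf _)

end TentAverage

section ExponentialSums

variable {ι : Type*} [Fintype ι]

/-- The squared modulus `|∑ᵢ e^{i y lᵢ}|²` of the exponential sum with frequencies `l`. -/
noncomputable def expSumSq (l : ι → ℝ) (y : ℝ) : ℝ :=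
  ‖∑ i, Complex.exp ((y * l i : ℝ) * Complex.I)‖ ^ 2

@[fun_prop]
theorem continuous_expSumSq (l : ι → ℝ) : Continuous (expSumSq l) := by
  unfold expSumSq
  fun_prop

theorem expSumSq_nonneg (l : ι → ℝ) : 0 ≤ expSumSq l := fun _ => sq_nonneg _

theorem expSumSq_eq_sum_cos (l : ι → ℝ) (y : ℝ) :
    expSumSq l y = ∑ i, ∑ j, Real.cos ((l i - l j) * y) := by
  rw [expSumSq, Complex.sq_norm, Complex.normSq_apply]
  simp only [Complex.re_sum, Complex.im_sum, Complex.exp_ofReal_mul_I_re,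
    Complex.exp_ofReal_mul_I_im, Finset.sum_mul_sum, ← Finset.sum_add_distrib]
  refine Finset.sum_congr rfl fun i _ => Finset.sum_congr rfl fun j _ => ?_
  rw [← Real.cos_sub]
  congr 1
  ring

theorem integral_tent_mul_expSumSq (l : ι → ℝ) (a h : ℝ) :
    ∫ y in (-h)..h, (h - |y|) * expSumSq l (a + y) =
      ∑ i, ∑ j, Real.cos ((l i - l j) * a) * tentTransform h (l i - l j) := by
  have hexpand : ∀ y, (h - |y|) * expSumSq l (a + y) = ∑ i, ∑ j,
      (Real.cos ((l i - l j) * a) * ((h - |y|) * Real.cos ((l i - l j) * y)) -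
        Real.sin ((l i - l j) * a) * ((h - |y|) * Real.sin ((l i - l j) * y))) := fun y => by
    simp only [expSumSq_eq_sum_cos, Finset.mul_sum, mul_add, Real.cos_add]
    exact Finset.sum_congr rfl fun i _ => Finset.sum_congr rfl fun j _ => by ring
  have hodd : ∀ d, Function.Odd fun y => (h - |y|) * Real.sin (d * y) := fun d y => by
    simp only [abs_neg, mul_neg, Real.sin_neg]
  simp_rw [hexpand]
  rw [intervalIntegral.integral_finsetSum
    fun i _ => Continuous.intervalIntegrable (by fun_prop) _ _]
  refine Finset.sum_congr rfl fun i _ => ?_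
  rw [intervalIntegral.integral_finsetSum
    fun j _ => Continuous.intervalIntegrable (by fun_prop) _ _]
  refine Finset.sum_congr rfl fun j _ => ?_
  rw [intervalIntegral.integral_sub (Continuous.intervalIntegrable (by fun_prop) _ _)
      (Continuous.intervalIntegrable (by fun_prop) _ _),
    intervalIntegral.integral_const_mul, intervalIntegral.integral_const_mul,
    integral_neg_self_eq_zero_of_odd (hodd _), mul_zero, sub_zero, tentTransform]

-- All Fourier coefficients of the tent are nonnegative, so the tent average is largest at `a = 0`.
theorem integral_expSumSq_translate_le (l : ι → ℝ) (a : ℝ) {h : ℝ} (hh : 0 < h) :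
    ∫ y in (a - h)..(a + h), expSumSq l y ≤
      2 * ∫ y in (-(2 * h))..(2 * h), expSumSq l y := by
  have h2 : 0 ≤ 2 * h := by positivity
  refine le_of_mul_le_mul_left ?_ hh
  calc h * ∫ y in (a - h)..(a + h), expSumSq l y
      ≤ ∑ i, ∑ j, Real.cos ((l i - l j) * a) * tentTransform (2 * h) (l i - l j) := by
        rw [← integral_tent_mul_expSumSq]
        exact mul_integral_le_integral_tent_mul (continuous_expSumSq l) (expSumSq_nonneg l) a hh.le
    _ ≤ ∑ i, ∑ j, Real.cos ((l i - l j) * 0) * tentTransform (2 * h) (l i - l j) := by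
        gcongr with i _ j _
        · exact tentTransform_nonneg h2 _
        · rw [mul_zero, Real.cos_zero]
          exact Real.cos_le_one _
    _ ≤ 2 * h * ∫ y in (-(2 * h))..(2 * h), expSumSq l y := by
        rw [← integral_tent_mul_expSumSq]
        simp only [zero_add]
        exact integral_tent_mul_le (continuous_expSumSq l) (expSumSq_nonneg l) h2
    _ = h * (2 * ∫ y in (-(2 * h))..(2 * h), expSumSq l y) := by ring

theorem mul_card_le_integral_expSumSq (l : ι → ℝ) {h : ℝ} (hh : 0 < h) :
    h * Fintype.card ι ≤ ∫ y in (-h)..h, expSumSq l y := by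
  refine le_of_mul_le_mul_left ?_ hh
  calc h * (h * Fintype.card ι) = ∑ i, tentTransform h (l i - l i) := by
        simp only [sub_self, tentTransform_zero hh.le, Finset.sum_const, Finset.card_univ,
          nsmul_eq_mul]
        ring
    _ ≤ ∑ i, ∑ j, tentTransform h (l i - l j) := by
        gcongr with i _
        exact Finset.single_le_sum (f := fun j => tentTransform h (l i - l j))
          (fun j _ => tentTransform_nonneg hh.le _) (Finset.mem_univ i)
    _ = ∫ y in (-h)..h, (h - |y|) * expSumSq l y := by
        have := integral_tent_mul_expSumSq l 0 h
        simpa only [zero_add, mul_zero, Real.cos_zero, one_mul] using this.symm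
    _ ≤ h * ∫ y in (-h)..h, expSumSq l y :=
        integral_tent_mul_le (continuous_expSumSq l) (expSumSq_nonneg l) hh.le

theorem mul_integral_expSumSq_le_sum_tentTransform (l : ι → ℝ) {h : ℝ} (hh : 0 ≤ h) :
    h * ∫ y in (-h)..h, expSumSq l y ≤ ∑ i, ∑ j, tentTransform (2 * h) (l i - l j) := by
  have := mul_integral_le_integral_tent_mul (continuous_expSumSq l) (expSumSq_nonneg l) 0 hh
  rw [integral_tent_mul_expSumSq] at this
  simpa only [zero_sub, zero_add, mul_zero, Real.cos_zero, one_mul] using this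

end ExponentialSums

section Words

variable {M : ℕ}

/-- The point `∑ₖ t_{wₖ} M^{-k}` of the line coded by the word `w`: the image of `0` under the
composition of the similarities `x ↦ x / M + t_{wₖ}` along `w`. -/
noncomputable def wordPoint (t : Fin M → ℝ) {n : ℕ} (w : Fin n → Fin M) : ℝ :=
  ∑ k, t (w k) / (M : ℝ) ^ (k : ℕ)

theorem wordPoint_zero (t : Fin M → ℝ) (w : Fin 0 → Fin M) : wordPoint t w = 0 := by
  simp [wordPoint]

theorem wordPoint_cons (t : Fin M → ℝ) {n : ℕ} (j : Fin M) (w : Fin n → Fin M) :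
    wordPoint t (Fin.cons j w : Fin (n + 1) → Fin M) = t j + wordPoint t w / M := by
  unfold wordPoint
  rw [Fin.sum_univ_succ, Finset.sum_div]
  simp [pow_succ, div_div]

theorem sum_words_succ {A : Type*} [AddCommMonoid A] (n : ℕ) (F : (Fin (n + 1) → Fin M) → A) :
    ∑ w, F w = ∑ j : Fin M, ∑ w : Fin n → Fin M, F (Fin.cons j w : Fin (n + 1) → Fin M) := by
  rw [← (Fin.consEquiv fun _ : Fin (n + 1) => Fin M).sum_comp, Fintype.sum_prod_type]
  rfl

theorem card_words (n : ℕ) : Fintype.card (Fin n → Fin M) = M ^ n := by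
  simp only [Fintype.card_fun, Fintype.card_fin]

end Words

section Overlap

variable {M : ℕ}

open Classical in
/-- The words of length `n` whose interval, of centre `wordPoint t w` and radius `R / M ^ n`,
contains `x`. -/
noncomputable def wordsNear (t : Fin M → ℝ) (R : ℝ) (n : ℕ) (x : ℝ) : Finset (Fin n → Fin M) :=
  {w | x ∈ Metric.closedBall (wordPoint t w) (R / (M : ℝ) ^ n)}

/-- The multiplicity with which the `n`-th generation intervals cover `x`. -/
noncomputable def overlap (t : Fin M → ℝ) (R : ℝ) (n : ℕ) (x : ℝ) : ℕ :=
  (wordsNear t R n x).card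

theorem mem_wordsNear {t : Fin M → ℝ} {R : ℝ} {n : ℕ} {x : ℝ} {w : Fin n → Fin M} :
    w ∈ wordsNear t R n x ↔ |x - wordPoint t w| ≤ R / (M : ℝ) ^ n := by
  simp [wordsNear, Real.dist_eq]

theorem mem_wordsNear_iff_abs_mul_le (hM : 0 < M) {t : Fin M → ℝ} {R : ℝ} {n : ℕ} {x : ℝ}
    {w : Fin n → Fin M} :
    w ∈ wordsNear t R n x ↔ |(M : ℝ) ^ n * (x - wordPoint t w)| ≤ R := by
  have hMn : (0 : ℝ) < (M : ℝ) ^ n := by positivity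
  rw [mem_wordsNear, abs_mul, abs_of_pos hMn, le_div_iff₀ hMn, mul_comm]

open Classical in
theorem overlap_eq_sum (t : Fin M → ℝ) (R : ℝ) (n : ℕ) (x : ℝ) :
    overlap t R n x =
      ∑ w : Fin n → Fin M, if |x - wordPoint t w| ≤ R / (M : ℝ) ^ n then 1 else 0 := by
  simp only [overlap, wordsNear, Metric.mem_closedBall, Real.dist_eq, Finset.card_filter]

theorem overlap_zero (t : Fin M → ℝ) (R x : ℝ) :
    overlap t R 0 x = if |x| ≤ R then 1 else 0 := by
  simp [overlap_eq_sum, wordPoint_zero]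

theorem overlap_le (t : Fin M → ℝ) (R : ℝ) (n : ℕ) (x : ℝ) : overlap t R n x ≤ M ^ n :=
  (Finset.card_le_univ _).trans_eq (card_words n)

theorem overlap_succ (hM : 0 < M) (t : Fin M → ℝ) (R : ℝ) (n : ℕ) (x : ℝ) :
    overlap t R (n + 1) x = ∑ j, overlap t R n (M * (x - t j)) := by
  classical
  have hM0 : (0 : ℝ) < M := by positivity
  simp only [overlap_eq_sum, sum_words_succ, wordPoint_cons]
  refine Finset.sum_congr rfl fun j _ => Finset.sum_congr rfl fun w _ => if_congr ?_ rfl rfl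
  have hscale : (M : ℝ) * (x - t j) - wordPoint t w = M * (x - (t j + wordPoint t w / M)) := by
    field_simp
    ring
  rw [hscale, abs_mul, abs_of_pos hM0, pow_succ, ← div_div, le_div_iff₀ hM0, mul_comm]

theorem overlap_add (hM : 0 < M) (t : Fin M → ℝ) (R : ℝ) (m n : ℕ) (x : ℝ) :
    overlap t R (m + n) x =
      ∑ u : Fin m → Fin M, overlap t R n ((M : ℝ) ^ m * (x - wordPoint t u)) := by
  have _ : (0 : ℝ) < M := by positivity
  induction m generalizing x with
  | zero => simp [wordPoint_zero]
  | succ m ih =>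
    rw [show m + 1 + n = (m + n) + 1 by ring, overlap_succ hM, sum_words_succ]
    refine Finset.sum_congr rfl fun j _ => (ih _).trans <| Finset.sum_congr rfl fun w _ => ?_
    rw [wordPoint_cons]
    congr 1
    field_simp
    ring

-- The hypothesis on `R` says that each map `x ↦ x / M + t j` sends `[-R, R]` into itself.
theorem abs_le_of_overlap_ne_zero (hM : 0 < M) {t : Fin M → ℝ} {R : ℝ}
    (hR : ∀ j, R / M + |t j| ≤ R) {n : ℕ} {x : ℝ} (h : overlap t R n x ≠ 0) : |x| ≤ R := by
  have hM0 : (0 : ℝ) < M := by positivity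
  induction n generalizing x with
  | zero =>
    by_contra hx
    simp [overlap_zero, hx] at h
  | succ n ih =>
    rw [overlap_succ hM] at h
    obtain ⟨j, _, hj⟩ := Finset.exists_ne_zero_of_sum_ne_zero h
    have hxj := ih hj
    rw [abs_mul, abs_of_pos hM0, mul_comm, ← le_div_iff₀ hM0] at hxj
    calc |x| = |(x - t j) + t j| := by rw [sub_add_cancel]
      _ ≤ |x - t j| + |t j| := abs_add_le _ _
      _ ≤ R := by linarith [hR j]

theorem overlap_add_eq_sum_wordsNear (hM : 0 < M) {t : Fin M → ℝ} {R : ℝ}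
    (hR : ∀ j, R / M + |t j| ≤ R) (m n : ℕ) (x : ℝ) :
    overlap t R (m + n) x =
      ∑ u ∈ wordsNear t R m x, overlap t R n ((M : ℝ) ^ m * (x - wordPoint t u)) := by
  rw [overlap_add hM]
  refine (Finset.sum_subset (Finset.subset_univ _) fun u _ hu => ?_).symm
  contrapose! hu
  exact (mem_wordsNear_iff_abs_mul_le hM).2 (abs_le_of_overlap_ne_zero hM hR hu)

theorem overlap_succ_le (hM : 0 < M) {t : Fin M → ℝ} {R : ℝ} (hR : ∀ j, R / M + |t j| ≤ R)
    (n : ℕ) (x : ℝ) : overlap t R (n + 1) x ≤ M * overlap t R n x := by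
  calc overlap t R (n + 1) x
      ≤ ∑ u ∈ wordsNear t R n x, M ^ 1 := by
        rw [overlap_add_eq_sum_wordsNear hM hR]
        exact Finset.sum_le_sum fun u _ => overlap_le t R 1 _
    _ = M * overlap t R n x := by
        rw [Finset.sum_const, smul_eq_mul, pow_one, mul_comm, overlap]

theorem overlap_eq_sum_indicator (t : Fin M → ℝ) (R : ℝ) (n : ℕ) (x : ℝ) :
    (overlap t R n x : ℝ≥0∞) =
      ∑ w : Fin n → Fin M, (Metric.closedBall (wordPoint t w) (R / M ^ n)).indicator 1 x := by
  classical
  rw [overlap_eq_sum]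
  push_cast
  simp [Set.indicator_apply, Real.dist_eq]

theorem measurable_overlap (t : Fin M → ℝ) (R : ℝ) (n : ℕ) :
    Measurable fun x => (overlap t R n x : ℝ≥0∞) := by
  simp_rw [overlap_eq_sum_indicator]
  exact Finset.measurable_sum _ fun w _ => measurable_one.indicator measurableSet_closedBall

theorem lintegral_overlap (hM : 0 < M) (t : Fin M → ℝ) (R : ℝ) (n : ℕ) :
    ∫⁻ x, (overlap t R n x : ℝ≥0∞) = ENNReal.ofReal (2 * R) := by
  simp_rw [overlap_eq_sum_indicator]
  rw [lintegral_finsetSum _ fun w _ => measurable_one.indicator measurableSet_closedBall]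
  simp only [lintegral_indicator_one measurableSet_closedBall, Real.volume_closedBall,
    Finset.sum_const, Finset.card_univ, card_words, nsmul_eq_mul]
  rw [← ENNReal.ofReal_natCast, ← ENNReal.ofReal_mul (by positivity)]
  congr 1
  push_cast
  field_simp

end Overlap

section CrowdedWords

variable {M : ℕ}

open Classical in
/-- The words of length `n` whose interval contains a point of multiplicity at least `K`. -/
noncomputable def crowdedWords (t : Fin M → ℝ) (R : ℝ) (K n : ℕ) : Finset (Fin n → Fin M) :=
  {w | ∃ x, w ∈ wordsNear t R n x ∧ K ≤ overlap t R n x}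

/-- The proportion of crowded words among the words of length `n`. -/
noncomputable def crowdedRatio (t : Fin M → ℝ) (R : ℝ) (K n : ℕ) : ℝ :=
  (crowdedWords t R K n).card / (M : ℝ) ^ n

theorem mem_crowdedWords {t : Fin M → ℝ} {R : ℝ} {K n : ℕ} {w : Fin n → Fin M} :
    w ∈ crowdedWords t R K n ↔ ∃ x, w ∈ wordsNear t R n x ∧ K ≤ overlap t R n x := by
  simp [crowdedWords]

theorem card_crowdedWords_le (t : Fin M → ℝ) (R : ℝ) (K n : ℕ) :
    (crowdedWords t R K n).card ≤ M ^ n :=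
  (Finset.card_le_univ _).trans_eq (card_words n)

theorem crowdedRatio_nonneg (t : Fin M → ℝ) (R : ℝ) (K n : ℕ) : 0 ≤ crowdedRatio t R K n := by
  unfold crowdedRatio
  positivity

theorem crowdedRatio_le_one (t : Fin M → ℝ) (R : ℝ) (K n : ℕ) : crowdedRatio t R K n ≤ 1 :=
  div_le_one_of_le₀ (mod_cast card_crowdedWords_le t R K n) (by positivity)

theorem wordsNear_subset_crowdedWords {t : Fin M → ℝ} {R : ℝ} {K n : ℕ} {x : ℝ}
    (hx : K ≤ overlap t R n x) : wordsNear t R n x ⊆ crowdedWords t R K n :=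
  fun _ hw => mem_crowdedWords.2 ⟨x, hw, hx⟩

theorem exists_first_crowded_level (hM : 0 < M) {t : Fin M → ℝ} {R : ℝ}
    (hR : ∀ j, R / M + |t j| ≤ R) {K n : ℕ} (hK : 2 ≤ K) {x : ℝ} (h : K ≤ overlap t R n x) :
    ∃ m ∈ Finset.Icc 1 n, K ≤ overlap t R m x ∧ overlap t R m x ≤ M * K := by
  classical
  have hex : ∃ m, K ≤ overlap t R m x := ⟨n, h⟩
  rcases hfind : Nat.find hex with _ | m
  · have := (hfind ▸ Nat.find_spec hex).trans_eq (overlap_zero t R x)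
    split_ifs at this <;> omega
  · have hlt : overlap t R m x < K := not_le.1 (Nat.find_min hex (by omega))
    have hle : m + 1 ≤ n := hfind ▸ Nat.find_min' hex h
    exact ⟨m + 1, Finset.mem_Icc.2 ⟨by omega, hle⟩, hfind ▸ Nat.find_spec hex,
      (overlap_succ_le hM hR m x).trans (Nat.mul_le_mul_left _ hlt.le)⟩

-- Cauchy–Schwarz over the at most `M K` words present at the first crowded level.
theorem overlap_sq_le (hM : 0 < M) {t : Fin M → ℝ} {R : ℝ} (hR : ∀ j, R / M + |t j| ≤ R)
    {K : ℕ} (hK : 2 ≤ K) (n : ℕ) (x : ℝ) :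
    overlap t R n x ^ 2 ≤ K * overlap t R n x + ∑ m ∈ Finset.Icc 1 n,
      ∑ u ∈ crowdedWords t R K m,
        M * K * overlap t R (n - m) ((M : ℝ) ^ m * (x - wordPoint t u)) ^ 2 := by
  rcases lt_or_ge (overlap t R n x) K with h | h
  · exact (sq (overlap t R n x) ▸ Nat.mul_le_mul_right _ h.le).trans (Nat.le_add_right _ _)
  obtain ⟨m, hmn, hm, hle⟩ := exists_first_crowded_level hM hR hK h
  let N (u : Fin m → Fin M) := overlap t R (n - m) ((M : ℝ) ^ m * (x - wordPoint t u))
  calc overlap t R n x ^ 2 = (∑ u ∈ wordsNear t R m x, N u) ^ 2 := by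
        rw [← overlap_add_eq_sum_wordsNear hM hR, Nat.add_sub_cancel' (Finset.mem_Icc.1 hmn).2]
    _ ≤ (wordsNear t R m x).card * ∑ u ∈ wordsNear t R m x, N u ^ 2 := sq_sum_le_card_mul_sum_sq
    _ ≤ M * K * ∑ u ∈ crowdedWords t R K m, N u ^ 2 :=
        Nat.mul_le_mul hle (Finset.sum_le_sum_of_subset (wordsNear_subset_crowdedWords hm))
    _ = ∑ u ∈ crowdedWords t R K m, M * K * N u ^ 2 := Finset.mul_sum _ _ _
    _ ≤ ∑ m ∈ Finset.Icc 1 n, ∑ u ∈ crowdedWords t R K m,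
          M * K * overlap t R (n - m) ((M : ℝ) ^ m * (x - wordPoint t u)) ^ 2 :=
        Finset.single_le_sum (f := fun m => ∑ u ∈ crowdedWords t R K m,
          M * K * overlap t R (n - m) ((M : ℝ) ^ m * (x - wordPoint t u)) ^ 2)
          (fun _ _ => Nat.zero_le _) hmn
    _ ≤ _ := Nat.le_add_left _ _

theorem lintegral_comp_mul_sub (f : ℝ → ℝ≥0∞) {c : ℝ} (hc : 0 < c) (a : ℝ) :
    ∫⁻ x, f (c * (x - a)) = ENNReal.ofReal c⁻¹ * ∫⁻ x, f x := by
  rw [lintegral_sub_right_eq_self (fun x => f (c * x)) a]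
  have := lintegral_map_equiv (μ := volume) f (Homeomorph.mulLeft₀ c hc.ne').toMeasurableEquiv
  simp only [Homeomorph.toMeasurableEquiv_coe, Homeomorph.coe_mulLeft₀] at this
  rw [← this, Real.map_volume_mul_left hc.ne', lintegral_smul_measure,
    abs_of_pos (by positivity), smul_eq_mul]

theorem lintegral_overlap_sq_le (hM : 0 < M) {t : Fin M → ℝ} {R : ℝ}
    (hR : ∀ j, R / M + |t j| ≤ R) {K : ℕ} (hK : 2 ≤ K) (n : ℕ) :
    ∫⁻ x, (overlap t R n x : ℝ≥0∞) ^ 2 ≤ ENNReal.ofReal (2 * R * K) +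
      ∑ m ∈ Finset.Icc 1 n, ENNReal.ofReal (M * K * crowdedRatio t R K m) *
        ∫⁻ x, (overlap t R (n - m) x : ℝ≥0∞) ^ 2 := by
  have hpoint : ∀ x, (overlap t R n x : ℝ≥0∞) ^ 2 ≤ K * overlap t R n x +
      ∑ m ∈ Finset.Icc 1 n, ∑ u ∈ crowdedWords t R K m, (M * K : ℝ≥0∞) *
        (overlap t R (n - m) ((M : ℝ) ^ m * (x - wordPoint t u)) : ℝ≥0∞) ^ 2 := fun x => by
    exact_mod_cast overlap_sq_le hM hR hK n x
  have hmeas : ∀ m a, Measurable fun x : ℝ =>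
      (overlap t R (n - m) ((M : ℝ) ^ m * (x - a)) : ℝ≥0∞) ^ 2 := fun m a =>
    ((measurable_overlap t R (n - m)).comp
      (by fun_prop : Measurable fun x : ℝ => (M : ℝ) ^ m * (x - a))).pow_const 2
  refine (lintegral_mono hpoint).trans_eq ?_
  rw [lintegral_add_left ((measurable_overlap t R n).const_mul _),
    lintegral_const_mul _ (measurable_overlap t R n), lintegral_overlap hM,
    lintegral_finsetSum _ fun m _ =>
      Finset.measurable_sum _ fun u _ => (hmeas m _).const_mul _]
  congr 1
  · rw [mul_comm, ENNReal.ofReal_mul' (Nat.cast_nonneg K), ENNReal.ofReal_natCast]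
  refine Finset.sum_congr rfl fun m _ => ?_
  rw [lintegral_finsetSum _ fun u _ => (hmeas m _).const_mul _]
  simp_rw [lintegral_const_mul _ (hmeas m _), lintegral_comp_mul_sub
    (fun x => (overlap t R (n - m) x : ℝ≥0∞) ^ 2) (by positivity : (0 : ℝ) < (M : ℝ) ^ m)]
  rw [Finset.sum_const, nsmul_eq_mul, crowdedRatio, div_eq_mul_inv,
    ENNReal.ofReal_mul (by positivity), ENNReal.ofReal_mul (by positivity),
    ENNReal.ofReal_mul (by positivity)]
  simp only [ENNReal.ofReal_natCast]
  ring

theorem lintegral_overlap_sq_le_of_crowdedRatio_le (hM : 0 < M) {t : Fin M → ℝ} {R : ℝ}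
    (hR0 : 0 ≤ R) (hR : ∀ j, R / M + |t j| ≤ R) {K N : ℕ} (hK : 2 ≤ K)
    (hcrowded : ∀ m ∈ Finset.Icc 1 N, crowdedRatio t R K m * (2 * M * K * N) ≤ 1)
    {n : ℕ} (hn : n ≤ N) :
    ∫⁻ x, (overlap t R n x : ℝ≥0∞) ^ 2 ≤ ENNReal.ofReal (4 * R * K) := by
  induction n using Nat.strong_induction_on with
  | _ n ih =>
  have hterm : ∀ m ∈ Finset.Icc 1 n, ENNReal.ofReal (M * K * crowdedRatio t R K m) *
      ∫⁻ x, (overlap t R (n - m) x : ℝ≥0∞) ^ 2 ≤ ENNReal.ofReal (2 * R * K / N) := by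
    intro m hm
    rw [Finset.mem_Icc] at hm
    have hN : (0 : ℝ) < N := by exact_mod_cast (by omega : 0 < N)
    have hratio := hcrowded m (Finset.mem_Icc.2 ⟨hm.1, hm.2.trans hn⟩)
    have hcoeff : M * K * crowdedRatio t R K m ≤ 1 / (2 * N) := by
      rw [le_div_iff₀ (by positivity)]
      linarith
    calc _ ≤ ENNReal.ofReal (1 / (2 * N)) * ENNReal.ofReal (4 * R * K) := by
          gcongr
          exact ih (n - m) (by omega) (by omega)
      _ = ENNReal.ofReal (2 * R * K / N) := by
          rw [← ENNReal.ofReal_mul (by positivity)]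
          congr 1
          field_simp
          ring
  have hsum : (n : ℝ) * (2 * R * K / N) ≤ 2 * R * K := by
    rw [mul_div_left_comm]
    exact mul_le_of_le_one_right (by positivity)
      (div_le_one_of_le₀ (mod_cast hn) (by positivity))
  calc _ ≤ _ := lintegral_overlap_sq_le hM hR hK n
    _ ≤ ENNReal.ofReal (2 * R * K) + ∑ m ∈ Finset.Icc 1 n, ENNReal.ofReal (2 * R * K / N) := by
        gcongr with m hm
        exact hterm m hm
    _ = ENNReal.ofReal (2 * R * K + n * (2 * R * K / N)) := by
        rw [Finset.sum_const, Nat.card_Icc, Nat.add_sub_cancel, nsmul_eq_mul,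
          ENNReal.ofReal_add (by positivity) (by positivity),
          ENNReal.ofReal_mul (p := (n : ℝ)) (by positivity), ENNReal.ofReal_natCast]
    _ ≤ _ := ENNReal.ofReal_le_ofReal (by linarith)

end CrowdedWords

section Shadow

variable {M : ℕ} {t : Fin M → ℝ} {R : ℝ}

/-- The union of the `n`-th generation intervals `[wordPoint t w - R / M ^ n, wordPoint t w +
R / M ^ n]`, which contains the projection of the `n`-th generation of a planar self-similar
set. -/
def shadow (t : Fin M → ℝ) (R : ℝ) (n : ℕ) : Set ℝ := {x | overlap t R n x ≠ 0}

theorem antitone_shadow (hM : 0 < M) (hR : ∀ j, R / M + |t j| ≤ R) : Antitone (shadow t R) := by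
  refine antitone_nat_of_succ_le fun n x hx h0 => hx ?_
  have := overlap_succ_le hM hR n x
  rwa [h0, mul_zero, Nat.le_zero] at this

theorem volume_shadow_le (hM : 0 < M) (hR : ∀ j, R / M + |t j| ≤ R) (n : ℕ) :
    volume (shadow t R n) ≤ ENNReal.ofReal (2 * R) := by
  rw [← Real.volume_closedBall 0]
  refine measure_mono fun x hx => ?_
  simpa using abs_le_of_overlap_ne_zero hM hR hx

theorem volume_preimage_mul_sub (S : Set ℝ) {c : ℝ} (hc : 0 < c) (a : ℝ) :
    volume {x | c * (x - a) ∈ S} = ENNReal.ofReal c⁻¹ * volume S := by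
  have hcomp : {x | c * (x - a) ∈ S} = (fun x => x + -a) ⁻¹' ((fun x => c * x) ⁻¹' S) := rfl
  rw [hcomp, measure_preimage_add_right, Real.volume_preimage_mul_left hc.ne',
    abs_of_pos (by positivity)]

theorem le_card_crowdedWords_dist_le {K n : ℕ} {w : Fin n → Fin M} (hw : w ∈ crowdedWords t R K n)
    {x : ℝ} (hx : w ∈ wordsNear t R n x) :
    (K : ℝ≥0∞) ≤ ∑ u ∈ crowdedWords t R K n,
      (Metric.closedBall (wordPoint t u) (3 * R / M ^ n)).indicator 1 x := by
  classical
  obtain ⟨x', hx', hK⟩ := mem_crowdedWords.1 hw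
  have hnear : wordsNear t R n x' ⊆ (crowdedWords t R K n).filter
      fun u => x ∈ Metric.closedBall (wordPoint t u) (3 * R / M ^ n) := fun u hu => by
    refine Finset.mem_filter.2 ⟨wordsNear_subset_crowdedWords hK hu, ?_⟩
    rw [mem_wordsNear] at hx hx' hu
    rw [abs_sub_comm] at hx'
    rw [Metric.mem_closedBall, Real.dist_eq]
    calc |x - wordPoint t u|
        = |(x - wordPoint t w) + (wordPoint t w - x') + (x' - wordPoint t u)| := by ring_nf
      _ ≤ R / M ^ n + R / M ^ n + R / M ^ n := (abs_add_three _ _ _).trans (by gcongr)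
      _ = 3 * R / M ^ n := by ring
  calc (K : ℝ≥0∞) ≤ ((crowdedWords t R K n).filter
        fun u => x ∈ Metric.closedBall (wordPoint t u) (3 * R / M ^ n)).card :=
        Nat.cast_le.2 (hK.trans (Finset.card_le_card hnear))
    _ = _ := by
        rw [Finset.card_filter]
        push_cast
        exact Finset.sum_congr rfl fun u _ => by simp [Set.indicator_apply]

theorem volume_crowded_le (hM : 0 < M) {K : ℕ} (hK : 0 < K) (n : ℕ) :
    volume {x | ∃ w ∈ crowdedWords t R K n, w ∈ wordsNear t R n x} ≤
      ENNReal.ofReal (6 * R / K * crowdedRatio t R K n) := by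
  have _ : (0 : ℝ) < M := by positivity
  have hK0 : (0 : ℝ) < K := by positivity
  have hmeas : ∀ w ∈ crowdedWords t R K n, Measurable
      ((Metric.closedBall (wordPoint t w) (3 * R / M ^ n)).indicator (1 : ℝ → ℝ≥0∞)) :=
    fun w _ => measurable_one.indicator measurableSet_closedBall
  calc _ ≤ volume {x | (K : ℝ≥0∞) ≤ ∑ w ∈ crowdedWords t R K n,
          (Metric.closedBall (wordPoint t w) (3 * R / M ^ n)).indicator 1 x} :=
        measure_mono <| by
          rintro x ⟨w, hw, hx⟩
          exact le_card_crowdedWords_dist_le hw hx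
    _ ≤ (∫⁻ x, ∑ w ∈ crowdedWords t R K n,
          (Metric.closedBall (wordPoint t w) (3 * R / M ^ n)).indicator 1 x) / K :=
        meas_ge_le_lintegral_div (Finset.measurable_sum _ hmeas).aemeasurable
          (by exact_mod_cast hK.ne') (ENNReal.natCast_ne_top K)
    _ = ENNReal.ofReal (6 * R / K * crowdedRatio t R K n) := by
        rw [lintegral_finsetSum _ hmeas]
        simp only [lintegral_indicator_one measurableSet_closedBall, Real.volume_closedBall,
          Finset.sum_const, nsmul_eq_mul]
        rw [← ENNReal.ofReal_natCast, ← ENNReal.ofReal_natCast,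
          ← ENNReal.ofReal_mul (by positivity), ← ENNReal.ofReal_div_of_pos hK0, crowdedRatio]
        congr 1
        field_simp
        ring

theorem shadow_add_subset (hM : 0 < M) (hR : ∀ j, R / M + |t j| ≤ R) (K n m : ℕ) :
    shadow t R (n + m) ⊆ {x | ∃ w ∈ crowdedWords t R K n, w ∈ wordsNear t R n x} ∪
      ⋃ w ∈ {w | w ∉ crowdedWords t R K n},
        {x | (M : ℝ) ^ n * (x - wordPoint t w) ∈ shadow t R m} := by
  intro x hx
  rw [shadow, Set.mem_ofPred_eq, overlap_add_eq_sum_wordsNear hM hR] at hx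
  obtain ⟨u, hux, hu⟩ := Finset.exists_ne_zero_of_sum_ne_zero hx
  by_cases hG : u ∈ crowdedWords t R K n
  · exact Or.inl ⟨u, hG, hux⟩
  · exact Or.inr (Set.mem_biUnion (x := u) hG hu)

theorem volume_shadow_add_le (hM : 0 < M) (hR0 : 0 ≤ R) (hR : ∀ j, R / M + |t j| ≤ R) {K : ℕ}
    (hK : 0 < K) (n m : ℕ) {v : ℝ} (hv : 0 ≤ v) (hm : volume (shadow t R m) ≤ ENNReal.ofReal v) :
    volume (shadow t R (n + m)) ≤
      ENNReal.ofReal (6 * R / K * crowdedRatio t R K n + (1 - crowdedRatio t R K n) * v) := by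
  classical
  have hMn : (0 : ℝ) < (M : ℝ) ^ n := by positivity
  have hratio := crowdedRatio_nonneg t R K n
  have hsparse : volume (⋃ w ∈ {w | w ∉ crowdedWords t R K n},
      {x | (M : ℝ) ^ n * (x - wordPoint t w) ∈ shadow t R m}) ≤
      ENNReal.ofReal ((1 - crowdedRatio t R K n) * v) := by
    have hcompl : {w | w ∉ crowdedWords t R K n} =
        ((crowdedWords t R K n)ᶜ : Finset (Fin n → Fin M)) := by
      ext; simp
    rw [hcompl]
    calc _ ≤ ∑ w ∈ (crowdedWords t R K n)ᶜ,
          volume {x | (M : ℝ) ^ n * (x - wordPoint t w) ∈ shadow t R m} :=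
          measure_biUnion_finset_le _ _
      _ = ((M ^ n - (crowdedWords t R K n).card : ℕ) : ℝ≥0∞) *
            (ENNReal.ofReal ((M : ℝ) ^ n)⁻¹ * volume (shadow t R m)) := by
          simp_rw [volume_preimage_mul_sub _ hMn]
          rw [Finset.sum_const, Finset.card_compl, card_words, nsmul_eq_mul]
      _ ≤ ((M ^ n - (crowdedWords t R K n).card : ℕ) : ℝ≥0∞) *
            (ENNReal.ofReal ((M : ℝ) ^ n)⁻¹ * ENNReal.ofReal v) := by gcongr
      _ = ENNReal.ofReal ((1 - crowdedRatio t R K n) * v) := by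
          rw [← ENNReal.ofReal_natCast, ← ENNReal.ofReal_mul (by positivity),
            ← ENNReal.ofReal_mul (by positivity),
            Nat.cast_sub (card_crowdedWords_le t R K n), crowdedRatio]
          congr 1
          push_cast
          field_simp
  calc _ ≤ _ := measure_mono (shadow_add_subset hM hR K n m)
    _ ≤ _ := measure_union_le _ _
    _ ≤ _ := add_le_add (volume_crowded_le hM hK n) hsparse
    _ = _ := (ENNReal.ofReal_add (by positivity)
        (mul_nonneg (sub_nonneg.2 (crowdedRatio_le_one t R K n)) hv)).symm

theorem volume_shadow_mul_le (hM : 0 < M) (hR0 : 0 ≤ R) (hR : ∀ j, R / M + |t j| ≤ R) {K : ℕ}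
    (hK : 0 < K) (m J : ℕ) :
    volume (shadow t R (J * m)) ≤
      ENNReal.ofReal (6 * R / K + 2 * R * (1 - crowdedRatio t R K m) ^ J) := by
  have hratio := sub_nonneg.2 (crowdedRatio_le_one t R K m)
  induction J with
  | zero =>
    refine (volume_shadow_le hM hR _).trans (ENNReal.ofReal_le_ofReal ?_)
    have : 0 ≤ 6 * R / K := by positivity
    linarith
  | succ J ih =>
    have := volume_shadow_add_le hM hR0 hR hK m (J * m) (by positivity) ih
    rw [show (J + 1) * m = m + J * m by ring]
    exact this.trans_eq (congrArg ENNReal.ofReal (by ring))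

-- Large overlap energy at one level makes a definite proportion of words crowded at some level,
-- and iterating that level shrinks the shadow geometrically.
theorem volume_shadow_le_of_lt_lintegral_overlap_sq (hM : 0 < M) (hR0 : 0 ≤ R)
    (hR : ∀ j, R / M + |t j| ≤ R) {K N n : ℕ} (hK : 2 ≤ K) (hn : n ≤ N)
    (henergy : ENNReal.ofReal (4 * R * K) < ∫⁻ x, (overlap t R n x : ℝ≥0∞) ^ 2) (J : ℕ) :
    volume (shadow t R (J * N)) ≤
      ENNReal.ofReal (6 * R / K + 2 * R * (1 - 1 / (2 * M * K * N)) ^ J) := by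
  have hK0 : 0 < K := by omega
  obtain ⟨m, hm, hcrowded⟩ : ∃ m ∈ Finset.Icc 1 N, 1 < crowdedRatio t R K m * (2 * M * K * N) := by
    by_contra! hc
    exact henergy.not_ge (lintegral_overlap_sq_le_of_crowdedRatio_le hM hR0 hR hK hc hn)
  rw [Finset.mem_Icc] at hm
  have hN : (0 : ℝ) < N := by exact_mod_cast (by omega : 0 < N)
  have hratio : 1 / (2 * M * K * N) ≤ crowdedRatio t R K m :=
    (div_le_iff₀ (by positivity)).2 hcrowded.le
  refine (measure_mono (antitone_shadow hM hR (Nat.mul_le_mul_left J hm.2))).trans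
    ((volume_shadow_mul_le hM hR0 hR hK0 m J).trans (ENNReal.ofReal_le_ofReal ?_))
  have := sub_nonneg.2 (crowdedRatio_le_one t R K m)
  gcongr

end Shadow

section RieszProduct

variable {M : ℕ}

/-- The average of the exponentials with frequencies `t j`, evaluated at `u`: the Fourier transform
of the equidistributed probability measure on the points `t j`. -/
noncomputable def meanExp (t : Fin M → ℝ) (u : ℝ) : ℂ :=
  1 / M * ∑ j, Complex.exp ((u * t j : ℝ) * Complex.I)

/-- The Riesz product of length `n`: the Fourier transform, at scale `M ^ n`, of the equidistributed
probability measure on the points `wordPoint t w`, `w` a word of length `n`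
(see `rieszProd_eq_sum`). -/
noncomputable def rieszProd (t : Fin M → ℝ) (n : ℕ) (y : ℝ) : ℂ :=
  ∏ k ∈ Finset.range n, meanExp t ((M : ℝ) ^ (k + 1) * y)

@[fun_prop]
theorem continuous_meanExp (t : Fin M → ℝ) : Continuous (meanExp t) := by
  unfold meanExp
  fun_prop

@[fun_prop]
theorem continuous_rieszProd (t : Fin M → ℝ) (n : ℕ) : Continuous (rieszProd t n) := by
  unfold rieszProd
  fun_prop

theorem norm_meanExp_le_one (t : Fin M → ℝ) (u : ℝ) : ‖meanExp t u‖ ≤ 1 := by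
  have hsum : ‖∑ j, Complex.exp ((u * t j : ℝ) * Complex.I)‖ ≤ M :=
    (norm_sum_le _ _).trans (by simp_rw [Complex.norm_exp_ofReal_mul_I]; simp)
  rw [meanExp, norm_mul, norm_div, norm_one, Complex.norm_natCast, one_div_mul_eq_div]
  exact div_le_one_of_le₀ hsum (Nat.cast_nonneg M)

theorem norm_rieszProd_le_one (t : Fin M → ℝ) (n : ℕ) (y : ℝ) : ‖rieszProd t n y‖ ≤ 1 := by
  rw [rieszProd, norm_prod]
  exact Finset.prod_le_one (fun _ _ => norm_nonneg _) fun _ _ => norm_meanExp_le_one _ _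

theorem rieszProd_succ (t : Fin M → ℝ) (n : ℕ) (y : ℝ) :
    rieszProd t (n + 1) y = rieszProd t n y * meanExp t ((M : ℝ) ^ (n + 1) * y) :=
  Finset.prod_range_succ _ _

theorem rieszProd_add (t : Fin M → ℝ) (a b : ℕ) (y : ℝ) :
    rieszProd t (a + b) y = rieszProd t a y * rieszProd t b ((M : ℝ) ^ a * y) := by
  simp only [rieszProd, Finset.prod_range_add]
  congr 1
  refine Finset.prod_congr rfl fun k _ => ?_
  congr 1
  ring

theorem rieszProd_eq_sum (hM : 0 < M) (t : Fin M → ℝ) (n : ℕ) (y : ℝ) :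
    rieszProd t n y = 1 / (M : ℂ) ^ n *
      ∑ w : Fin n → Fin M, Complex.exp ((y * ((M : ℝ) ^ n * wordPoint t w) : ℝ) * Complex.I) := by
  have hM0 : (M : ℝ) ≠ 0 := by positivity
  induction n with
  | zero => simp [rieszProd, wordPoint_zero]
  | succ n ih =>
    have hcons : ∀ (j : Fin M) (w : Fin n → Fin M),
        Complex.exp ((y * ((M : ℝ) ^ (n + 1) * wordPoint t (Fin.cons j w : Fin (n + 1) → Fin M)) :
          ℝ) * Complex.I) =
        Complex.exp (((M : ℝ) ^ (n + 1) * y * t j : ℝ) * Complex.I) *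
          Complex.exp ((y * ((M : ℝ) ^ n * wordPoint t w) : ℝ) * Complex.I) := fun j w => by
      rw [← Complex.exp_add, wordPoint_cons, ← add_mul, ← Complex.ofReal_add]
      congr 3
      field_simp
      ring
    simp_rw [rieszProd_succ, ih, sum_words_succ, hcons, ← Finset.mul_sum, ← Finset.sum_mul, meanExp]
    ring

theorem norm_rieszProd_sq (hM : 0 < M) (t : Fin M → ℝ) (n : ℕ) (y : ℝ) :
    ‖rieszProd t n y‖ ^ 2 =
      expSumSq (fun w : Fin n → Fin M => (M : ℝ) ^ n * wordPoint t w) y / ((M : ℝ) ^ n) ^ 2 := by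
  rw [rieszProd_eq_sum hM, norm_mul, mul_pow, expSumSq, norm_div, norm_pow, Complex.norm_natCast,
    norm_one, div_pow, one_pow, one_div_mul_eq_div]

theorem one_sub_mul_abs_le_norm_meanExp (hM : 0 < M) {t : Fin M → ℝ} {T : ℝ}
    (hT : ∀ j, |t j| ≤ T) (u : ℝ) : 1 - T * |u| ≤ ‖meanExp t u‖ := by
  have hM1 : (M : ℂ) ≠ 0 := by exact_mod_cast hM.ne'
  have hterm : ∀ j, ‖Complex.exp ((u * t j : ℝ) * Complex.I) - 1‖ ≤ T * |u| := fun j => by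
    rw [mul_comm _ Complex.I]
    refine (Real.norm_exp_I_mul_ofReal_sub_one_le (x := u * t j)).trans ?_
    rw [Real.norm_eq_abs, abs_mul, mul_comm]
    exact mul_le_mul_of_nonneg_right (hT j) (abs_nonneg u)
  have hsub : meanExp t u - 1 = 1 / M * ∑ j, (Complex.exp ((u * t j : ℝ) * Complex.I) - 1) := by
    rw [meanExp, Finset.sum_sub_distrib]
    simp [mul_sub, hM1]
  have hdist : ‖meanExp t u - 1‖ ≤ T * |u| := by
    rw [hsub, norm_mul, norm_div, norm_one, Complex.norm_natCast, one_div_mul_eq_div,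
      div_le_iff₀' (by positivity)]
    simpa using norm_sum_le_of_le Finset.univ fun j _ => hterm j
  have htri := norm_sub_norm_le 1 (meanExp t u)
  rw [norm_sub_rev, norm_one] at htri
  linarith

theorem one_sub_mul_abs_le_norm_rieszProd (hM : 2 ≤ M) {t : Fin M → ℝ} {T : ℝ} (hT0 : 0 ≤ T)
    (hT : ∀ j, |t j| ≤ T) (n : ℕ) (y : ℝ) :
    1 - 2 * T * ((M : ℝ) ^ n * |y|) ≤ ‖rieszProd t n y‖ := by
  have hM0 : (2 : ℝ) ≤ M := by exact_mod_cast hM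
  induction n with
  | zero =>
    have : 0 ≤ T * |y| := by positivity
    simp only [rieszProd, Finset.range_zero, Finset.prod_empty, norm_one, pow_zero]
    linarith
  | succ n ih =>
    have hprod := norm_rieszProd_le_one t n y
    have hmean := norm_meanExp_le_one t ((M : ℝ) ^ (n + 1) * y)
    have hlow := one_sub_mul_abs_le_norm_meanExp (by omega) hT ((M : ℝ) ^ (n + 1) * y)
    have hnn : 0 ≤ T * ((M : ℝ) ^ n * |y|) := by positivity
    have hpow : (M : ℝ) ^ (n + 1) * |y| = M * ((M : ℝ) ^ n * |y|) := by ring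
    rw [abs_mul, abs_of_pos (by positivity : (0 : ℝ) < (M : ℝ) ^ (n + 1)), hpow] at hlow
    rw [rieszProd_succ, norm_mul, hpow]
    nlinarith [mul_nonneg (sub_nonneg.2 hprod) (sub_nonneg.2 hmean)]

theorem half_le_norm_rieszProd (hM : 2 ≤ M) {t : Fin M → ℝ} {T : ℝ} (hT0 : 0 ≤ T)
    (hT : ∀ j, |t j| ≤ T) {δ : ℝ} (hδ : 4 * T * δ ≤ 1) {n : ℕ} {y : ℝ}
    (hy : (M : ℝ) ^ n * |y| ≤ δ) : 1 / 2 ≤ ‖rieszProd t n y‖ := by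
  have := one_sub_mul_abs_le_norm_rieszProd hM hT0 hT n y
  nlinarith [mul_le_mul_of_nonneg_left hy hT0]

end RieszProduct

section SchurTest

/-- The constant `∑ 1 / (1 + k ^ 2)`, over the integers `k`, of the Schur test in
`sum_sum_tentTransform_le`. -/
noncomputable def intCauchySum : ℝ := ∑' k : ℤ, 1 / (1 + (k : ℝ) ^ 2)

theorem summable_one_div_one_add_int_sq : Summable fun k : ℤ => 1 / (1 + (k : ℝ) ^ 2) := by
  refine Summable.of_norm_bounded_eventually
    (Real.summable_one_div_int_pow.2 one_lt_two : Summable fun k : ℤ => 1 / (k : ℝ) ^ 2) ?_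
  filter_upwards [(Set.finite_singleton (0 : ℤ)).compl_mem_cofinite] with k hk
  have : (k : ℝ) ≠ 0 := by exact_mod_cast hk
  rw [Real.norm_of_nonneg (by positivity)]
  gcongr
  linarith

theorem sum_one_div_one_add_sub_sq_le (S : Finset ℤ) (i : ℤ) :
    ∑ j ∈ S, 1 / (1 + ((i - j : ℤ) : ℝ) ^ 2) ≤ intCauchySum := by
  rw [← Finset.sum_image (f := fun k : ℤ => 1 / (1 + (k : ℝ) ^ 2)) (g := fun j => i - j)
    fun a _ b _ hab => by simpa using hab]
  exact summable_one_div_one_add_int_sq.sum_le_tsum _ fun k _ => by positivity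

theorem one_le_intCauchySum : 1 ≤ intCauchySum := by
  simpa using sum_one_div_one_add_sub_sq_le {0} 0

theorem tentTransform_sub_le_floor {δ : ℝ} (h0 : 0 ≤ δ) (h1 : δ ≤ 1 / 4) (x y : ℝ) :
    tentTransform (2 * δ) (x - y) ≤ 20 * (1 / (1 + ((⌊x⌋ - ⌊y⌋ : ℤ) : ℝ) ^ 2)) := by
  push_cast
  set m : ℝ := (⌊x⌋ : ℝ) - ⌊y⌋
  have hx := Int.floor_le x
  have hx' := Int.lt_floor_add_one x
  have hy := Int.floor_le y
  have hy' := Int.lt_floor_add_one y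
  have hm_le : |m| ≤ |x - y| + 1 := by
    have := abs_le.1 (le_refl |x - y|)
    exact abs_le.2 ⟨by linarith, by linarith⟩
  rw [mul_one_div]
  rcases lt_or_ge |m| 2 with hnear | hfar
  · have : m ^ 2 ≤ 4 := by rw [← sq_abs]; nlinarith [abs_nonneg m]
    refine (tentTransform_le_sq (by linarith) _).trans ?_
    rw [le_div_iff₀ (by positivity)]
    nlinarith
  · have hne : x - y ≠ 0 := abs_pos.1 (by linarith)
    refine (tentTransform_le_four_div_sq (by linarith) hne).trans ?_
    rw [div_le_div_iff₀ (by positivity) (by positivity), ← sq_abs m, ← sq_abs (x - y)]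
    nlinarith [abs_nonneg m, abs_nonneg (x - y)]

theorem sum_sum_comp_le_mul_sum_card_sq {ι α : Type*} [Fintype ι] [DecidableEq α] (b : ι → α)
    {f : α → α → ℝ} (hf0 : ∀ i j, 0 ≤ f i j) (hf : ∀ i j, f i j = f j i) {C : ℝ}
    (hC : ∀ i, ∑ j ∈ Finset.univ.image b, f i j ≤ C) :
    ∑ u, ∑ v, f (b u) (b v) ≤
      C * ∑ i ∈ Finset.univ.image b, ((Finset.univ.filter fun u => b u = i).card : ℝ) ^ 2 := by
  set S := Finset.univ.image b
  set N : α → ℝ := fun i => (Finset.univ.filter fun u => b u = i).card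
  have hfiber : ∀ F : α → ℝ, ∑ u, F (b u) = ∑ i ∈ S, N i * F i := fun F => by
    simp_rw [Finset.sum_comp F b, nsmul_eq_mul]
    rfl
  calc ∑ u, ∑ v, f (b u) (b v) = ∑ i ∈ S, ∑ j ∈ S, N i * (N j * f i j) := by
        simp_rw [hfiber, hfiber fun i => ∑ j ∈ S, N j * f i j, Finset.mul_sum]
    _ ≤ ∑ i ∈ S, ∑ j ∈ S, (N i ^ 2 / 2 * f i j + N j ^ 2 / 2 * f j i) := by
        refine Finset.sum_le_sum fun i _ => Finset.sum_le_sum fun j _ => ?_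
        rw [← hf i j]
        nlinarith [mul_nonneg (sq_nonneg (N i - N j)) (hf0 i j)]
    _ = ∑ i ∈ S, N i ^ 2 * ∑ j ∈ S, f i j := by
        simp_rw [Finset.sum_add_distrib]
        rw [Finset.sum_comm (f := fun i j => N j ^ 2 / 2 * f j i), ← Finset.sum_add_distrib]
        refine Finset.sum_congr rfl fun i _ => ?_
        rw [← Finset.mul_sum]
        ring
    _ ≤ C * ∑ i ∈ S, N i ^ 2 := by
        rw [Finset.mul_sum]
        refine Finset.sum_le_sum fun i _ => ?_
        rw [mul_comm]
        exact mul_le_mul_of_nonneg_right (hC i) (sq_nonneg _)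

theorem sum_sum_tentTransform_le {ι : Type*} [Fintype ι] (l : ι → ℝ) {δ : ℝ} (h0 : 0 ≤ δ)
    (h1 : δ ≤ 1 / 4) :
    ∑ u, ∑ v, tentTransform (2 * δ) (l u - l v) ≤ 20 * intCauchySum *
      ∑ i ∈ Finset.univ.image fun u => ⌊l u⌋,
        ((Finset.univ.filter fun u => ⌊l u⌋ = i).card : ℝ) ^ 2 := by
  have hschur := sum_sum_comp_le_mul_sum_card_sq (fun u => ⌊l u⌋)
    (f := fun i j => 1 / (1 + ((i - j : ℤ) : ℝ) ^ 2)) (fun i j => by positivity)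
    (fun i j => by push_cast; ring_nf) (sum_one_div_one_add_sub_sq_le _)
  calc _ ≤ ∑ u, ∑ v, 20 * (1 / (1 + ((⌊l u⌋ - ⌊l v⌋ : ℤ) : ℝ) ^ 2)) :=
        Finset.sum_le_sum fun u _ => Finset.sum_le_sum fun v _ =>
          tentTransform_sub_le_floor h0 h1 _ _
    _ = 20 * ∑ u, ∑ v, 1 / (1 + ((⌊l u⌋ - ⌊l v⌋ : ℤ) : ℝ) ^ 2) := by simp_rw [Finset.mul_sum]
    _ ≤ _ := by
        rw [mul_assoc]
        exact mul_le_mul_of_nonneg_left hschur (by norm_num)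

end SchurTest

section Energy

variable {M : ℕ}

theorem card_floor_eq_le_overlap (hM : 0 < M) (t : Fin M → ℝ) {R : ℝ} (hR : 1 ≤ R) (n : ℕ) (x : ℝ) :
    (Finset.univ.filter fun w : Fin n → Fin M =>
      ⌊(M : ℝ) ^ n * wordPoint t w⌋ = ⌊(M : ℝ) ^ n * x⌋).card ≤ overlap t R n x := by
  refine Finset.card_le_card fun w hw => (mem_wordsNear_iff_abs_mul_le hM).2 ?_
  rw [mul_sub]
  exact ((Int.abs_sub_lt_one_of_floor_eq_floor (Finset.mem_filter.1 hw).2.symm).trans_le hR).le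

theorem mul_sum_le_lintegral_of_floor_le {c : ℝ} (hc : 0 < c) {a : ℤ → ℝ≥0∞} {f : ℝ → ℝ≥0∞}
    (hf : ∀ x, a ⌊c * x⌋ ≤ f x) (S : Finset ℤ) :
    ENNReal.ofReal c⁻¹ * ∑ i ∈ S, a i ≤ ∫⁻ x, f x := by
  let cell : ℤ → Set ℝ := fun i => {x | ⌊c * x⌋ = i}
  have hmeas : ∀ i, MeasurableSet (cell i) := fun i =>
    measurableSet_eq_fun (by fun_prop) measurable_const
  have hvol : ∀ i, volume (cell i) = ENNReal.ofReal c⁻¹ := fun i => by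
    have : cell i = {x | c * (x - 0) ∈ Set.Ico (i : ℝ) (i + 1)} := by
      ext x
      simp [cell, Int.floor_eq_iff]
    rw [this, volume_preimage_mul_sub _ hc]
    simp
  have hdisj : Set.PairwiseDisjoint (S : Set ℤ) cell := fun i _ j _ hij =>
    Set.disjoint_left.2 fun x hi hj => hij (Eq.trans (Eq.symm hi) hj)
  calc ENNReal.ofReal c⁻¹ * ∑ i ∈ S, a i = ∑ i ∈ S, ∫⁻ _ in cell i, a i := by
        simp_rw [Finset.mul_sum, setLIntegral_const, hvol, mul_comm]
    _ ≤ ∑ i ∈ S, ∫⁻ x in cell i, f x := Finset.sum_le_sum fun i _ =>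
        setLIntegral_mono' (hmeas i) fun x (hx : ⌊c * x⌋ = i) => hx ▸ hf x
    _ = ∫⁻ x in ⋃ i ∈ S, cell i, f x :=
        (lintegral_biUnion_finset hdisj (fun i _ => hmeas i) f).symm
    _ ≤ ∫⁻ x, f x := setLIntegral_le_lintegral _ _

theorem sum_card_floor_sq_le_lintegral_overlap_sq (hM : 0 < M) (t : Fin M → ℝ) {R : ℝ} (hR : 1 ≤ R)
    (n : ℕ) (S : Finset ℤ) :
    ENNReal.ofReal (((M : ℝ) ^ n)⁻¹ * ∑ i ∈ S, ((Finset.univ.filter fun w : Fin n → Fin M =>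
      ⌊(M : ℝ) ^ n * wordPoint t w⌋ = i).card : ℝ) ^ 2) ≤
      ∫⁻ x, (overlap t R n x : ℝ≥0∞) ^ 2 := by
  rw [ENNReal.ofReal_mul (by positivity), ENNReal.ofReal_sum_of_nonneg fun _ _ => by positivity]
  refine mul_sum_le_lintegral_of_floor_le (c := (M : ℝ) ^ n) (by positivity) (fun x => ?_) S
  rw [ENNReal.ofReal_pow (Nat.cast_nonneg _), ENNReal.ofReal_natCast]
  gcongr
  exact card_floor_eq_le_overlap hM t hR n x

/-- The `L²` energy of the Riesz product of length `n` on the interval `[-δ, δ]`, normalised by the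
factor `M ^ n` so that it stays bounded below. -/
noncomputable def rieszEnergy (t : Fin M → ℝ) (δ : ℝ) (n : ℕ) : ℝ :=
  (M : ℝ) ^ n * ∫ y in (-δ)..δ, ‖rieszProd t n y‖ ^ 2

theorem rieszEnergy_eq (hM : 0 < M) (t : Fin M → ℝ) (δ : ℝ) (n : ℕ) :
    rieszEnergy t δ n = ((M : ℝ) ^ n)⁻¹ *
      ∫ y in (-δ)..δ, expSumSq (fun w : Fin n → Fin M => (M : ℝ) ^ n * wordPoint t w) y := by
  have _ : (0 : ℝ) < M := by positivity
  simp_rw [rieszEnergy, norm_rieszProd_sq hM, intervalIntegral.integral_div]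
  field_simp

theorem mul_rieszEnergy_le_lintegral_overlap_sq (hM : 0 < M) (t : Fin M → ℝ) {R : ℝ} (hR : 1 ≤ R)
    {δ : ℝ} (h0 : 0 ≤ δ) (h1 : δ ≤ 1 / 4) (n : ℕ) :
    ENNReal.ofReal (δ * rieszEnergy t δ n) ≤
      ENNReal.ofReal (20 * intCauchySum) * ∫⁻ x, (overlap t R n x : ℝ≥0∞) ^ 2 := by
  have hC : 0 ≤ 20 * intCauchySum := by linarith [one_le_intCauchySum]
  have hsum := (mul_integral_expSumSq_le_sum_tentTransform
    (fun w : Fin n → Fin M => (M : ℝ) ^ n * wordPoint t w) h0).trans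
    (sum_sum_tentTransform_le _ h0 h1)
  refine le_trans ?_ (mul_le_mul_right (sum_card_floor_sq_le_lintegral_overlap_sq hM t hR n
    (Finset.univ.image fun w : Fin n → Fin M => ⌊(M : ℝ) ^ n * wordPoint t w⌋)) _)
  rw [← ENNReal.ofReal_mul hC, rieszEnergy_eq hM, mul_left_comm, mul_left_comm (20 * intCauchySum)]
  exact ENNReal.ofReal_le_ofReal (mul_le_mul_of_nonneg_left hsum (by positivity))

end Energy

section SublevelSets

theorem mul_sub_le_sub_of_le_hasDerivAt {g g' : ℝ → ℝ} (hg : ∀ x, HasDerivAt g (g' x) x) {S : Set ℝ}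
    (hS : Convex ℝ S) {κ : ℝ} (hκ : ∀ x ∈ S, κ ≤ g' x) {x y : ℝ} (hx : x ∈ S) (hy : y ∈ S)
    (hxy : x ≤ y) : κ * (y - x) ≤ g y - g x :=
  hS.mul_sub_le_image_sub_of_le_deriv (fun x _ => (hg x).continuousAt.continuousWithinAt)
    (fun x _ => (hg x).differentiableAt.differentiableWithinAt)
    (fun x hx => (hg x).deriv ▸ hκ x (interior_subset hx)) x hx y hy hxy

variable {ν : Measure ℝ} {β : ℝ≥0∞} {h : ℝ}

theorem measure_abs_lt_le_of_mul_sub_le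
    (hν : ∀ S : Set ℝ, (∀ x ∈ S, ∀ y ∈ S, |x - y| ≤ 2 * h) → ν S ≤ β) {κ : ℝ} (hκ : 0 < κ)
    {g : ℝ → ℝ} {S : Set ℝ} (hg : ∀ x ∈ S, ∀ y ∈ S, x ≤ y → κ * (y - x) ≤ g y - g x) :
    ν {x | x ∈ S ∧ |g x| < κ * h} ≤ β := by
  refine hν _ fun x hx y hy => ?_
  have hx' := abs_lt.1 hx.2
  have hy' := abs_lt.1 hy.2
  rcases le_total x y with hxy | hxy
  · have := hg x hx.1 y hy.1 hxy
    rw [abs_sub_comm, abs_of_nonneg (by linarith)]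
    nlinarith
  · have := hg y hy.1 x hx.1 hxy
    rw [abs_of_nonneg (by linarith)]
    nlinarith

-- Where the `p`-th derivative is at least `κ`, the preceding one is monotone. It is therefore at
-- least `κ * h` in absolute value outside a set of diameter at most `2 * h`, and one recurses on
-- the two remaining convex pieces.
theorem measure_abs_lt_le_of_le_hasDerivAt (hh : 0 < h)
    (hν : ∀ S : Set ℝ, (∀ x ∈ S, ∀ y ∈ S, |x - y| ≤ 2 * h) → ν S ≤ β) (p : ℕ) {κ : ℝ} (hκ : 0 < κ)
    {G : ℕ → ℝ → ℝ} (hG : ∀ i x, HasDerivAt (G i) (G (i + 1) x) x) {S : Set ℝ} (hS : Convex ℝ S)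
    (hp : ∀ x ∈ S, κ ≤ G p x) : ν {x | x ∈ S ∧ |G 0 x| < κ * h ^ p} ≤ 3 ^ p * β := by
  induction p generalizing κ G S with
  | zero =>
    have hempty : {x | x ∈ S ∧ |G 0 x| < κ * h ^ 0} = ∅ :=
      Set.eq_empty_of_forall_notMem fun x ⟨hxS, hx⟩ => by
        rw [pow_zero, mul_one] at hx
        exact ((hp x hxS).trans (le_abs_self _)).not_gt hx
    rw [hempty, measure_empty]
    exact zero_le
  | succ p ih =>
    have hincr : ∀ x ∈ S, ∀ y ∈ S, x ≤ y → κ * (y - x) ≤ G p y - G p x := fun x hx y hy hxy =>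
      mul_sub_le_sub_of_le_hasDerivAt (hG p) hS hp hx hy hxy
    have hmono : MonotoneOn (G p) S := fun x hx y hy hxy => by
      have := hincr x hx y hy hxy
      nlinarith
    have hmid := measure_abs_lt_le_of_mul_sub_le hν hκ hincr
    have hright := ih (κ := κ * h) (by positivity) hG (hmono.quasiconcaveOn hS (κ * h))
      fun x hx => hx.2
    have hleft := ih (κ := κ * h) (by positivity) (fun i x => (hG i x).neg)
      (hmono.neg.quasiconcaveOn hS (κ * h)) fun x hx => hx.2
    simp only [abs_neg, Pi.neg_apply] at hleft
    have hcover : {x | x ∈ S ∧ |G 0 x| < κ * h ^ (p + 1)} ⊆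
        {x | x ∈ {x ∈ S | κ * h ≤ G p x} ∧ |G 0 x| < κ * h * h ^ p} ∪
        ({x | x ∈ {x ∈ S | κ * h ≤ -G p x} ∧ |G 0 x| < κ * h * h ^ p} ∪
          {x | x ∈ S ∧ |G p x| < κ * h}) := by
      rintro x ⟨hxS, hx⟩
      rw [pow_succ', ← mul_assoc] at hx
      rcases lt_or_ge |G p x| (κ * h) with hlt | hge
      · exact Or.inr (Or.inr ⟨hxS, hlt⟩)
      · rcases le_abs.1 hge with hpos | hneg
        · exact Or.inl ⟨⟨hxS, hpos⟩, hx⟩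
        · exact Or.inr (Or.inl ⟨⟨hxS, hneg⟩, hx⟩)
    calc _ ≤ 3 ^ p * β + (3 ^ p * β + β) :=
          (measure_mono hcover).trans <| (measure_union_le _ _).trans <| add_le_add hright <|
            (measure_union_le _ _).trans <| add_le_add hleft hmid
      _ ≤ 3 ^ p * β + (3 ^ p * β + 3 ^ p * β) := by
          gcongr
          exact le_mul_of_one_le_left' (one_le_pow₀ (by norm_num))
      _ = 3 ^ (p + 1) * β := by ring

end SublevelSets

section SmallValues

open Polynomial

variable {M : ℕ} {t : Fin M → ℝ} {T τ : ℝ}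

/-- The function `P(d/du) (meanExp t)`, for a polynomial `P`: the exponential of frequency `t j`
is weighted by the value of `P` at `i * t j`. -/
noncomputable def polyMeanExp (t : Fin M → ℝ) (P : ℂ[X]) (u : ℝ) : ℂ :=
  1 / M * ∑ j, P.eval (Complex.I * t j) * Complex.exp ((u * t j : ℝ) * Complex.I)

theorem polyMeanExp_one (t : Fin M → ℝ) (u : ℝ) : polyMeanExp t 1 u = meanExp t u := by
  simp [polyMeanExp, meanExp]

theorem hasDerivAt_polyMeanExp (t : Fin M → ℝ) (P : ℂ[X]) (u : ℝ) :
    HasDerivAt (polyMeanExp t P) (polyMeanExp t (X * P) u) u := by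
  refine HasDerivAt.const_mul _ (HasDerivAt.fun_sum fun j _ => ?_)
  have hlin : HasDerivAt (fun u : ℝ => u * t j) (t j) u := by
    simpa using (hasDerivAt_id u).mul_const (t j)
  refine ((hlin.ofReal_comp.mul_const Complex.I).cexp.const_mul _).congr_deriv ?_
  simp only [eval_mul, eval_X]
  ring

theorem norm_polyMeanExp_X_pow_le (hT0 : 0 ≤ T) (hT : ∀ j, |t j| ≤ T) (p : ℕ) (u : ℝ) :
    ‖polyMeanExp t (X ^ p) u‖ ≤ T ^ p := by
  have hterm : ∀ j, ‖(X ^ p : ℂ[X]).eval (Complex.I * t j) *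
      Complex.exp ((u * t j : ℝ) * Complex.I)‖ ≤ T ^ p := fun j => by
    rw [norm_mul, Complex.norm_exp_ofReal_mul_I, mul_one, eval_pow, eval_X, norm_pow, norm_mul,
      Complex.norm_I, one_mul, Complex.norm_real, Real.norm_eq_abs]
    exact pow_le_pow_left₀ (abs_nonneg _) (hT j) p
  rw [polyMeanExp, norm_mul, norm_div, norm_one, Complex.norm_natCast, one_div_mul_eq_div]
  refine div_le_of_le_mul₀ (Nat.cast_nonneg M) (by positivity) ?_
  simpa [mul_comm] using norm_sum_le_of_le Finset.univ fun j _ => hterm j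

theorem norm_polyMeanExp_prod_le (hT0 : 0 ≤ T) (hT : ∀ j, |t j| ≤ T) (u κ : ℝ) (S : Finset (Fin M))
    (p : ℕ) (hp : ∀ q ≤ p + S.card, ‖polyMeanExp t (X ^ q) u‖ ≤ κ) :
    ‖polyMeanExp t (X ^ p * ∏ k ∈ S, (X - C (Complex.I * t k))) u‖ ≤ (1 + T) ^ S.card * κ := by
  classical
  induction S using Finset.induction_on generalizing p with
  | empty => simpa using hp p (by simp)
  | insert a S ha ih =>
    rw [Finset.card_insert_of_notMem ha] at hp ⊢
    have hexpand : polyMeanExp t (X ^ p * ∏ k ∈ insert a S, (X - C (Complex.I * t k))) u =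
        polyMeanExp t (X ^ (p + 1) * ∏ k ∈ S, (X - C (Complex.I * t k))) u -
          Complex.I * t a * polyMeanExp t (X ^ p * ∏ k ∈ S, (X - C (Complex.I * t k))) u := by
      simp only [polyMeanExp, Finset.prod_insert ha, eval_mul, eval_sub, eval_X, eval_C, eval_pow]
      rw [mul_left_comm, ← mul_sub, Finset.mul_sum (a := Complex.I * t a),
        ← Finset.sum_sub_distrib]
      congr 1
      exact Finset.sum_congr rfl fun j _ => by ring
    have hcoeff : ‖Complex.I * t a‖ ≤ T := by simpa using hT a
    rw [hexpand]
    calc _ ≤ _ := norm_sub_le _ _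
      _ ≤ (1 + T) ^ S.card * κ + T * ((1 + T) ^ S.card * κ) := by
          rw [norm_mul (Complex.I * t a)]
          exact add_le_add (ih (p + 1) fun q hq => hp q (by omega))
            (mul_le_mul hcoeff (ih p fun q hq => hp q (by omega)) (norm_nonneg _) hT0)
      _ = (1 + T) ^ (S.card + 1) * κ := by ring

/-- A lower bound for the largest of the first `M` derivatives of `meanExp t`, where the
frequencies are bounded by `T` and one of them is `τ`-separated from all the others
(see `exists_le_norm_polyMeanExp_X_pow`). -/
noncomputable def derivBound (M : ℕ) (T τ : ℝ) : ℝ := τ ^ M / (M * (1 + T) ^ M)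

theorem derivBound_pos (hM : 0 < M) (hT0 : 0 ≤ T) (hτ : 0 < τ) : 0 < derivBound M T τ := by
  unfold derivBound
  positivity

theorem norm_polyMeanExp_prod_erase (t : Fin M → ℝ) (i₀ : Fin M) (u : ℝ) :
    ‖polyMeanExp t (∏ k ∈ Finset.univ.erase i₀, (X - C (Complex.I * t k))) u‖ =
      1 / M * ∏ k ∈ Finset.univ.erase i₀, |t i₀ - t k| := by
  simp only [polyMeanExp, eval_prod, eval_sub, eval_X, eval_C]
  rw [Finset.sum_eq_single_of_mem i₀ (Finset.mem_univ _) fun j _ hj => ?_]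
  · simp only [← mul_sub, ← Complex.ofReal_sub, norm_mul, norm_prod, Complex.norm_I, one_mul,
      Complex.norm_real, Real.norm_eq_abs, Complex.norm_exp_ofReal_mul_I, mul_one, norm_div,
      norm_one, Complex.norm_natCast]
  · rw [Finset.prod_eq_zero (Finset.mem_erase.2 ⟨hj, Finset.mem_univ j⟩) (sub_self _), zero_mul]

-- The operator `∏ (d/du - i * t k)`, over `k ≠ i₀`, annihilates every exponential except the one
-- of frequency `t i₀`, so it maps `meanExp t` to a function of large constant modulus.
theorem exists_le_norm_polyMeanExp_X_pow (hT1 : 1 ≤ T) (hT : ∀ j, |t j| ≤ T) (hτ : 0 < τ)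
    (hτ1 : τ ≤ 1) {i₀ : Fin M} (hsep : ∀ j ≠ i₀, τ ≤ |t i₀ - t j|) (u : ℝ) :
    ∃ p < M, derivBound M T τ ≤ ‖polyMeanExp t (X ^ p) u‖ := by
  obtain ⟨m, rfl⟩ : ∃ m, M = m + 1 := ⟨M - 1, by have := i₀.pos; omega⟩
  by_contra! hsmall
  have hcard : (Finset.univ.erase i₀).card = m := by simp
  have hupper := norm_polyMeanExp_prod_le (by linarith) hT u _ (Finset.univ.erase i₀) 0
    fun q hq => (hsmall q (by omega)).le
  rw [pow_zero, one_mul, hcard, norm_polyMeanExp_prod_erase] at hupper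
  have hprod : τ ^ m ≤ ∏ k ∈ Finset.univ.erase i₀, |t i₀ - t k| :=
    calc τ ^ m = ∏ _k ∈ Finset.univ.erase i₀, τ := by rw [Finset.prod_const, hcard]
      _ ≤ _ := Finset.prod_le_prod (fun _ _ => hτ.le) fun k hk => hsep k (Finset.ne_of_mem_erase hk)
  have hle : 1 / ((m + 1 : ℕ) : ℝ) * τ ^ m ≤ (1 + T) ^ m * derivBound (m + 1) T τ :=
    (mul_le_mul_of_nonneg_left hprod (by positivity)).trans hupper
  have hsplit : (1 + T) ^ m * derivBound (m + 1) T τ =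
      1 / ((m + 1 : ℕ) : ℝ) * τ ^ m * (τ / (1 + T)) := by
    have : 1 + T ≠ 0 := by linarith
    rw [derivBound]
    field_simp
    ring
  have hratio : τ / (1 + T) < 1 := (div_lt_one (by linarith)).2 (by linarith)
  exact (hsplit ▸ hle).not_gt (mul_lt_of_lt_one_right (by positivity) hratio)

theorem exists_half_derivBound_le_re (hT1 : 1 ≤ T) (hT : ∀ j, |t j| ≤ T) (hτ : 0 < τ)
    (hτ1 : τ ≤ 1) {i₀ : Fin M} (hsep : ∀ j ≠ i₀, τ ≤ |t i₀ - t j|) (u₀ : ℝ) :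
    ∃ p < M, ∃ ω : ℂ, ‖ω‖ = 1 ∧ ∀ u ∈ Set.Icc u₀ (u₀ + derivBound M T τ / (2 * T ^ M)),
      derivBound M T τ / 2 ≤ (ω * polyMeanExp t (X ^ p) u).re := by
  obtain ⟨p, hp, hlarge⟩ := exists_le_norm_polyMeanExp_X_pow hT1 hT hτ hτ1 hsep u₀
  obtain ⟨ω, hω, hωp⟩ := RCLike.exists_norm_eq_mul_self (polyMeanExp t (X ^ p) u₀)
  refine ⟨p, hp, ω, hω, fun u hu => ?_⟩
  have hderiv : ∀ v, HasDerivAt (fun v => (ω * polyMeanExp t (X ^ p) v).re)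
      (ω * polyMeanExp t (X ^ (p + 1)) v).re v := fun v => by
    rw [pow_succ']
    exact Complex.reCLM.hasFDerivAt.comp_hasDerivAt v
      ((hasDerivAt_polyMeanExp t (X ^ p) v).const_mul ω)
  have hlip : ∀ v, -T ^ M ≤ (ω * polyMeanExp t (X ^ (p + 1)) v).re := fun v => by
    refine (abs_le.1 ((Complex.abs_re_le_norm _).trans ?_)).1
    rw [norm_mul, hω, one_mul]
    exact (norm_polyMeanExp_X_pow_le (by linarith) hT _ v).trans (pow_le_pow_right₀ hT1 hp)
  have hdrop := mul_sub_le_sub_of_le_hasDerivAt hderiv convex_univ (fun v _ => hlip v)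
    (Set.mem_univ u₀) (Set.mem_univ u) hu.1
  rw [← hωp] at hdrop
  have hshort : T ^ M * (u - u₀) ≤ derivBound M T τ / 2 := by
    have _ : 0 < T := by linarith
    calc _ ≤ T ^ M * (derivBound M T τ / (2 * T ^ M)) := by gcongr; linarith [hu.2]
      _ = _ := by field_simp
  have hstart : (RCLike.ofReal ‖polyMeanExp t (X ^ p) u₀‖ : ℂ).re = ‖polyMeanExp t (X ^ p) u₀‖ :=
    Complex.ofReal_re _
  linarith

variable {ν : Measure ℝ} {β : ℝ≥0∞} {h : ℝ}

theorem measure_norm_meanExp_lt_le_of_mem_Icc (hT1 : 1 ≤ T) (hT : ∀ j, |t j| ≤ T) (hτ : 0 < τ)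
    (hτ1 : τ ≤ 1) {i₀ : Fin M} (hsep : ∀ j ≠ i₀, τ ≤ |t i₀ - t j|) (hh : 0 < h) (hh1 : h ≤ 1)
    (hν : ∀ S : Set ℝ, (∀ x ∈ S, ∀ y ∈ S, |x - y| ≤ 2 * h) → ν S ≤ β) (u₀ : ℝ) :
    ν {u | u ∈ Set.Icc u₀ (u₀ + derivBound M T τ / (2 * T ^ M)) ∧
      ‖meanExp t u‖ < derivBound M T τ / 2 * h ^ M} ≤ 3 ^ M * β := by
  have hκ := derivBound_pos i₀.pos (by linarith : 0 ≤ T) hτ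
  obtain ⟨p, hp, ω, hω, hlow⟩ := exists_half_derivBound_le_re hT1 hT hτ hτ1 hsep u₀
  have hderiv : ∀ i u, HasDerivAt (fun u => (ω * polyMeanExp t (X ^ i) u).re)
      (ω * polyMeanExp t (X ^ (i + 1)) u).re u := fun i u => by
    rw [pow_succ']
    exact Complex.reCLM.hasFDerivAt.comp_hasDerivAt u
      ((hasDerivAt_polyMeanExp t (X ^ i) u).const_mul ω)
  refine (measure_mono ?_).trans ((measure_abs_lt_le_of_le_hasDerivAt hh hν p (half_pos hκ) hderiv
    (convex_Icc _ _) hlow).trans (by gcongr; norm_num))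
  rintro u ⟨hu, hsmall⟩
  refine ⟨hu, ?_⟩
  calc |(ω * polyMeanExp t (X ^ 0) u).re| ≤ ‖ω * polyMeanExp t (X ^ 0) u‖ :=
        Complex.abs_re_le_norm _
    _ = ‖meanExp t u‖ := by rw [norm_mul, hω, one_mul, pow_zero, polyMeanExp_one]
    _ < derivBound M T τ / 2 * h ^ M := hsmall
    _ ≤ derivBound M T τ / 2 * h ^ p := by
        gcongr ?_ * ?_
        exact pow_le_pow_of_le_one hh.le hh1 hp.le

theorem measure_norm_meanExp_lt_le (hT1 : 1 ≤ T) (hT : ∀ j, |t j| ≤ T) (hτ : 0 < τ)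
    (hτ1 : τ ≤ 1) {i₀ : Fin M} (hsep : ∀ j ≠ i₀, τ ≤ |t i₀ - t j|) (hh : 0 < h) (hh1 : h ≤ 1)
    (hν : ∀ S : Set ℝ, (∀ x ∈ S, ∀ y ∈ S, |x - y| ≤ 2 * h) → ν S ≤ β) {L : ℝ} {m : ℕ}
    (hm : 2 * L ≤ m * (derivBound M T τ / (2 * T ^ M))) :
    ν {u | |u| ≤ L ∧ ‖meanExp t u‖ < derivBound M T τ / 2 * h ^ M} ≤ (m + 1) * (3 ^ M * β) := by
  have hκ := derivBound_pos i₀.pos (by linarith : 0 ≤ T) hτ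
  set b := derivBound M T τ / (2 * T ^ M)
  have hb0 : 0 < b := by positivity
  have hcover : {u | |u| ≤ L ∧ ‖meanExp t u‖ < derivBound M T τ / 2 * h ^ M} ⊆
      ⋃ i ∈ Finset.range (m + 1), {u | u ∈ Set.Icc (-L + i * b) (-L + i * b + b) ∧
        ‖meanExp t u‖ < derivBound M T τ / 2 * h ^ M} := by
    rintro u ⟨hu, hsmall⟩
    have hu' := abs_le.1 hu
    have hfloor := Nat.floor_le (div_nonneg (by linarith : 0 ≤ u + L) hb0.le)
    have hfloor' := Nat.lt_floor_add_one ((u + L) / b)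
    rw [le_div_iff₀ hb0] at hfloor
    rw [div_lt_iff₀ hb0] at hfloor'
    refine Set.mem_biUnion (x := ⌊(u + L) / b⌋₊) ?_ ⟨⟨by linarith, by linarith⟩, hsmall⟩
    rw [Finset.mem_coe, Finset.mem_range, Nat.lt_succ_iff]
    exact Nat.floor_le_of_le ((div_le_iff₀ hb0).2 (by linarith))
  calc _ ≤ _ := measure_mono hcover
    _ ≤ _ := measure_biUnion_finset_le _ _
    _ ≤ ∑ i ∈ Finset.range (m + 1), 3 ^ M * β := Finset.sum_le_sum fun i _ =>
        measure_norm_meanExp_lt_le_of_mem_Icc hT1 hT hτ hτ1 hsep hh hh1 hν _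
    _ = (m + 1) * (3 ^ M * β) := by simp

end SmallValues

section EnergyIncrement

variable {M : ℕ} {t : Fin M → ℝ} {T τ δ ε h B q : ℝ} {β : ℝ≥0∞} {l m r a k : ℕ}

theorem lintegral_Ioc_ofReal {f : ℝ → ℝ} (hf : Continuous f) (h0 : 0 ≤ f) {a b : ℝ} (hab : a ≤ b) :
    ∫⁻ y in Set.Ioc a b, ENNReal.ofReal (f y) = ENNReal.ofReal (∫ y in a..b, f y) := by
  rw [intervalIntegral.integral_of_le hab, ofReal_integral_eq_lintegral_ofReal
    hf.integrableOn_Ioc (Filter.Eventually.of_forall h0)]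

theorem integral_norm_rieszProd_sq (hM : 0 < M) (t : Fin M → ℝ) (m : ℕ) (a b : ℝ) :
    ∫ y in a..b, ‖rieszProd t m y‖ ^ 2 =
      (∫ y in a..b, expSumSq (fun w : Fin m → Fin M => (M : ℝ) ^ m * wordPoint t w) y) /
        ((M : ℝ) ^ m) ^ 2 := by
  simp_rw [norm_rieszProd_sq hM, intervalIntegral.integral_div]

theorem integral_norm_rieszProd_sq_symm (hM : 0 < M) (t : Fin M → ℝ) (m : ℕ) (b : ℝ) :
    ∫ y in (-b)..b, ‖rieszProd t m y‖ ^ 2 = 2 * ∫ y in (0 : ℝ)..b, ‖rieszProd t m y‖ ^ 2 := by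
  refine integral_neg_self_eq_two_mul_of_even (fun y => ?_) (by fun_prop) b
  simp only [norm_rieszProd_sq hM, expSumSq_eq_sum_cos, mul_neg, Real.cos_neg]

theorem div_pow_le_integral_norm_rieszProd_sq (hM : 0 < M) (t : Fin M → ℝ) (m : ℕ) {b : ℝ}
    (hb : 0 < b) : b / (M : ℝ) ^ m ≤ ∫ y in (-b)..b, ‖rieszProd t m y‖ ^ 2 := by
  have hcard := mul_card_le_integral_expSumSq
    (fun w : Fin m → Fin M => (M : ℝ) ^ m * wordPoint t w) hb
  rw [card_words, Nat.cast_pow] at hcard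
  rw [integral_norm_rieszProd_sq hM, div_le_div_iff₀ (by positivity) (by positivity)]
  calc b * ((M : ℝ) ^ m) ^ 2 = b * (M : ℝ) ^ m * (M : ℝ) ^ m := by ring
    _ ≤ _ := by gcongr

theorem integral_norm_rieszProd_sq_translate_le (hM : 0 < M) (hδ : 0 < δ) (x : ℝ) :
    ∫ y in (x - δ / 2)..(x + δ / 2), ‖rieszProd t m y‖ ^ 2 ≤
      2 * (rieszEnergy t δ m / (M : ℝ) ^ m) := by
  have htranslate := integral_expSumSq_translate_le
    (fun w : Fin m → Fin M => (M : ℝ) ^ m * wordPoint t w) x (half_pos hδ)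
  rw [mul_div_cancel₀ δ two_ne_zero] at htranslate
  rw [rieszEnergy, mul_div_cancel_left₀ _ (by positivity), integral_norm_rieszProd_sq hM,
    integral_norm_rieszProd_sq hM, ← mul_div_assoc]
  gcongr

/-- The measure on the shell `(δ / M ^ l, δ]` whose density is the squared modulus of
the product of the factors `l, …, l + m - 1` of the Riesz product of length `l + m`. -/
noncomputable def shellMeasure (t : Fin M → ℝ) (δ : ℝ) (l m : ℕ) : Measure ℝ :=
  (volume.restrict (Set.Ioc (δ / (M : ℝ) ^ l) δ)).withDensity
    fun y => ENNReal.ofReal (‖rieszProd t m ((M : ℝ) ^ l * y)‖ ^ 2)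

theorem shellMeasure_apply (t : Fin M → ℝ) (δ : ℝ) (l m : ℕ) (S : Set ℝ) :
    shellMeasure t δ l m S = ∫⁻ y in S ∩ Set.Ioc (δ / (M : ℝ) ^ l) δ,
      ENNReal.ofReal (‖rieszProd t m ((M : ℝ) ^ l * y)‖ ^ 2) := by
  rw [shellMeasure, withDensity_apply', Measure.restrict_restrict' measurableSet_Ioc]

theorem ofReal_le_shellMeasure_univ (hM : 0 < M) (hδ : 0 < δ) (hB : rieszEnergy t δ m ≤ B) :
    ENNReal.ofReal ((δ * (M : ℝ) ^ l - B) / (2 * (M : ℝ) ^ (l + m))) ≤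
      shellMeasure t δ l m Set.univ := by
  have hM1 : (1 : ℝ) ≤ (M : ℝ) ^ l := one_le_pow₀ (by exact_mod_cast hM)
  have hint : ∀ x y : ℝ, IntervalIntegrable (fun y => ‖rieszProd t m y‖ ^ 2) volume x y :=
    Continuous.intervalIntegrable (by fun_prop)
  have hlow := div_pow_le_integral_norm_rieszProd_sq hM t m
    (show 0 < (M : ℝ) ^ l * δ by positivity)
  have hupp : ∫ y in (-δ)..δ, ‖rieszProd t m y‖ ^ 2 ≤ B / (M : ℝ) ^ m := by
    rwa [le_div_iff₀' (by positivity)]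
  rw [integral_norm_rieszProd_sq_symm hM] at hlow hupp
  have hsplit := intervalIntegral.integral_add_adjacent_intervals (hint 0 δ)
    (hint δ ((M : ℝ) ^ l * δ))
  rw [shellMeasure_apply, Set.univ_inter, lintegral_Ioc_ofReal
    (f := fun y => ‖rieszProd t m ((M : ℝ) ^ l * y)‖ ^ 2) (by fun_prop) (fun _ => sq_nonneg _)
    (div_le_self hδ.le hM1), intervalIntegral.integral_comp_mul_left
    (fun y => ‖rieszProd t m y‖ ^ 2) (by positivity), mul_div_cancel₀ δ (by positivity)]
  refine ENNReal.ofReal_le_ofReal ?_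
  rw [smul_eq_mul, inv_mul_eq_div, le_div_iff₀ (by positivity)]
  calc (δ * (M : ℝ) ^ l - B) / (2 * (M : ℝ) ^ (l + m)) * (M : ℝ) ^ l
      = ((M : ℝ) ^ l * δ / (M : ℝ) ^ m - B / (M : ℝ) ^ m) / 2 := by rw [pow_add]; field_simp
    _ ≤ _ := by linarith

theorem shellMeasure_Icc_le (hM : 0 < M) (hδ : 0 < δ)
    (hq : ∀ y, δ < y → y ≤ δ * (M : ℝ) ^ l → ‖rieszProd t r y‖ ≤ q) (hB : rieszEnergy t δ a ≤ B)
    (hh : h = δ / (4 * (M : ℝ) ^ (l + r))) (x : ℝ) :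
    shellMeasure t δ l (r + a) (Set.Icc (x - 2 * h) (x + 2 * h)) ≤
      ENNReal.ofReal (2 * q ^ 2 * B / (M : ℝ) ^ (l + (r + a))) := by
  have hh0 : 0 < h := by rw [hh]; positivity
  have hfactor : ∀ y ∈ Set.Icc (x - 2 * h) (x + 2 * h) ∩ Set.Ioc (δ / (M : ℝ) ^ l) δ,
      ENNReal.ofReal (‖rieszProd t (r + a) ((M : ℝ) ^ l * y)‖ ^ 2) ≤
        ENNReal.ofReal (q ^ 2 * ‖rieszProd t a ((M : ℝ) ^ (l + r) * y)‖ ^ 2) := by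
    rintro y ⟨-, hy⟩
    rw [rieszProd_add, norm_mul, mul_pow, ← mul_assoc, ← pow_add, add_comm r l]
    have := hq ((M : ℝ) ^ l * y) (by rw [← div_lt_iff₀' (by positivity)]; exact hy.1)
      (by rw [mul_comm]; exact mul_le_mul_of_nonneg_right hy.2 (by positivity))
    gcongr
  have henergy : ∫ y in (x - 2 * h)..(x + 2 * h), ‖rieszProd t a ((M : ℝ) ^ (l + r) * y)‖ ^ 2 ≤
      ((M : ℝ) ^ (l + r))⁻¹ * (2 * (B / (M : ℝ) ^ a)) := by
    have hend : (M : ℝ) ^ (l + r) * (2 * h) = δ / 2 := by rw [hh]; field_simp; norm_num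
    rw [intervalIntegral.integral_comp_mul_left (fun y => ‖rieszProd t a y‖ ^ 2) (by positivity),
      smul_eq_mul, mul_sub, mul_add, hend]
    gcongr
    refine (integral_norm_rieszProd_sq_translate_le hM hδ _).trans ?_
    gcongr
  calc shellMeasure t δ l (r + a) (Set.Icc (x - 2 * h) (x + 2 * h))
      ≤ ∫⁻ y in Set.Icc (x - 2 * h) (x + 2 * h),
          ENNReal.ofReal (q ^ 2 * ‖rieszProd t a ((M : ℝ) ^ (l + r) * y)‖ ^ 2) := by
        rw [shellMeasure_apply]
        exact (setLIntegral_mono (by fun_prop) hfactor).trans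
          (lintegral_mono_set Set.inter_subset_left)
    _ = ENNReal.ofReal (q ^ 2 *
          ∫ y in (x - 2 * h)..(x + 2 * h), ‖rieszProd t a ((M : ℝ) ^ (l + r) * y)‖ ^ 2) := by
        rw [← restrict_Ioc_eq_restrict_Icc, lintegral_Ioc_ofReal (by fun_prop)
          (fun _ => by positivity) (by linarith), intervalIntegral.integral_const_mul]
    _ ≤ _ := by
        refine ENNReal.ofReal_le_ofReal ?_
        calc _ ≤ q ^ 2 * (((M : ℝ) ^ (l + r))⁻¹ * (2 * (B / (M : ℝ) ^ a))) := by gcongr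
          _ = _ := by rw [← add_assoc, pow_add _ (l + r)]; field_simp

/-- The frequencies at which one of the first `l` factors of the Riesz product is smaller than
`ε`; the bound on `|M ^ (k + 1) * y|` holds automatically on `(0, δ]`. -/
def smallFactorSet (t : Fin M → ℝ) (δ : ℝ) (l : ℕ) (ε : ℝ) : Set ℝ :=
  ⋃ k ∈ Finset.range l, (fun y => (M : ℝ) ^ (k + 1) * y) ⁻¹'
    {u | |u| ≤ δ * (M : ℝ) ^ l ∧ ‖meanExp t u‖ < ε}

theorem map_mul_apply_le_of_forall_sub_le {ν : Measure ℝ} (hh : 0 ≤ h)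
    (hν : ∀ x, ν (Set.Icc (x - 2 * h) (x + 2 * h)) ≤ β) {b : ℝ} (hb : 1 ≤ b) (S : Set ℝ)
    (hS : ∀ x ∈ S, ∀ y ∈ S, |x - y| ≤ 2 * h) : ν.map (fun y => b * y) S ≤ β := by
  rcases S.eq_empty_or_nonempty with rfl | ⟨x, hx⟩
  · rw [measure_empty]
    exact zero_le
  have hsub : S ⊆ Set.Icc (x - 2 * h) (x + 2 * h) := fun y hy => by
    have := abs_le.1 (hS x hx y hy)
    exact ⟨by linarith, by linarith⟩
  have hle : 2 * h / b ≤ 2 * h := div_le_self (by positivity) hb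
  calc ν.map (fun y => b * y) S ≤ ν.map (fun y => b * y) (Set.Icc (x - 2 * h) (x + 2 * h)) :=
        measure_mono hsub
    _ = ν (Set.Icc ((x - 2 * h) / b) ((x + 2 * h) / b)) := by
        rw [Measure.map_apply (by fun_prop) measurableSet_Icc,
          Set.preimage_const_mul_Icc₀ _ _ (by linarith)]
    _ ≤ ν (Set.Icc (x / b - 2 * h) (x / b + 2 * h)) := by
        refine measure_mono (Set.Icc_subset_Icc ?_ ?_)
        · rw [sub_div]; linarith
        · rw [add_div]; linarith
    _ ≤ β := hν _

theorem measure_smallFactorSet_le {ν : Measure ℝ} (hT1 : 1 ≤ T) (hT : ∀ j, |t j| ≤ T) (hτ : 0 < τ)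
    (hτ1 : τ ≤ 1) {i₀ : Fin M} (hsep : ∀ j ≠ i₀, τ ≤ |t i₀ - t j|) (hh : 0 < h) (hh1 : h ≤ 1)
    (hν : ∀ x, ν (Set.Icc (x - 2 * h) (x + 2 * h)) ≤ β)
    (hm : 2 * (δ * (M : ℝ) ^ l) ≤ m * (derivBound M T τ / (2 * T ^ M))) :
    ν (smallFactorSet t δ l (derivBound M T τ / 2 * h ^ M)) ≤ l * ((m + 1) * (3 ^ M * β)) := by
  have hfactor : ∀ k, ν ((fun y => (M : ℝ) ^ (k + 1) * y) ⁻¹' {u | |u| ≤ δ * (M : ℝ) ^ l ∧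
      ‖meanExp t u‖ < derivBound M T τ / 2 * h ^ M}) ≤ (m + 1) * (3 ^ M * β) := fun k =>
    (Measure.le_map_apply (by fun_prop) _).trans <|
      measure_norm_meanExp_lt_le hT1 hT hτ hτ1 hsep hh hh1
        (map_mul_apply_le_of_forall_sub_le hh.le hν (one_le_pow₀ (by exact_mod_cast i₀.pos))) hm
  calc _ ≤ ∑ k ∈ Finset.range l, (m + 1) * (3 ^ M * β) :=
        (measure_biUnion_finset_le _ _).trans (Finset.sum_le_sum fun k _ => hfactor k)
    _ = _ := by rw [Finset.sum_const, Finset.card_range, nsmul_eq_mul]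

theorem pow_le_norm_rieszProd_of_notMem_smallFactorSet (hM : 0 < M) (hε : 0 ≤ ε) {y : ℝ}
    (hyδ : |y| ≤ δ) (hy : y ∉ smallFactorSet t δ l ε) : ε ^ l ≤ ‖rieszProd t l y‖ := by
  have hfactor : ∀ k ∈ Finset.range l, ε ≤ ‖meanExp t ((M : ℝ) ^ (k + 1) * y)‖ := fun k hk => by
    by_contra! hsmall
    refine hy (Set.mem_biUnion (x := k) hk ⟨?_, hsmall⟩)
    rw [abs_mul, abs_of_pos (by positivity), mul_comm]
    gcongr
    · exact (abs_nonneg y).trans hyδ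
    · exact_mod_cast hM
    · exact Finset.mem_range.1 hk
  rw [rieszProd, norm_prod]
  simpa using Finset.prod_le_prod (fun _ _ => hε) hfactor

theorem shellMeasure_compl_smallFactorSet_le (hM : 0 < M) (hδ : 0 ≤ δ) (hε : 0 < ε) :
    shellMeasure t δ l m (smallFactorSet t δ l ε)ᶜ ≤ ENNReal.ofReal
      ((ε ^ (2 * l))⁻¹ * ∫ y in (δ / (M : ℝ) ^ l)..δ, ‖rieszProd t (l + m) y‖ ^ 2) := by
  have hM1 : (1 : ℝ) ≤ (M : ℝ) ^ l := one_le_pow₀ (by exact_mod_cast hM)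
  have hpoint : ∀ y ∈ (smallFactorSet t δ l ε)ᶜ ∩ Set.Ioc (δ / (M : ℝ) ^ l) δ,
      ENNReal.ofReal (‖rieszProd t m ((M : ℝ) ^ l * y)‖ ^ 2) ≤
        ENNReal.ofReal ((ε ^ (2 * l))⁻¹ * ‖rieszProd t (l + m) y‖ ^ 2) := by
    rintro y ⟨hy, hyI⟩
    have hy0 : 0 ≤ y := (by positivity : 0 ≤ δ / (M : ℝ) ^ l).trans hyI.1.le
    have hlow := pow_le_norm_rieszProd_of_notMem_smallFactorSet hM hε.le
      (by rw [abs_of_nonneg hy0]; exact hyI.2) hy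
    refine ENNReal.ofReal_le_ofReal ?_
    rw [rieszProd_add, norm_mul, mul_pow, inv_mul_eq_div, le_div_iff₀' (by positivity), mul_comm 2,
      pow_mul]
    gcongr
  calc _ ≤ ∫⁻ y in Set.Ioc (δ / (M : ℝ) ^ l) δ,
          ENNReal.ofReal ((ε ^ (2 * l))⁻¹ * ‖rieszProd t (l + m) y‖ ^ 2) := by
        rw [shellMeasure_apply]
        exact (setLIntegral_mono (by fun_prop) hpoint).trans
          (lintegral_mono_set Set.inter_subset_right)
    _ = _ := by
        rw [lintegral_Ioc_ofReal (by fun_prop) (fun _ => by positivity) (div_le_self hδ hM1),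
          intervalIntegral.integral_const_mul]

theorem mul_le_pow_mul_integral_of_shellMeasure_le (hM : 0 < M) (hδ : 0 < δ) (hε : 0 < ε)
    (hE : rieszEnergy t δ m ≤ B) (hB : 4 * B ≤ δ * (M : ℝ) ^ l)
    (hsmall : shellMeasure t δ l m (smallFactorSet t δ l ε) ≤
      ENNReal.ofReal (δ * (M : ℝ) ^ l / (4 * (M : ℝ) ^ (l + m)))) :
    ε ^ (2 * l) * δ / 8 ≤
      (M : ℝ) ^ (l + m) * ∫ y in (δ / (M : ℝ) ^ l)..δ, ‖rieszProd t (l + m) y‖ ^ 2 := by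
  have hM1 : (1 : ℝ) ≤ (M : ℝ) ^ l := one_le_pow₀ (by exact_mod_cast hM)
  set X := ∫ y in (δ / (M : ℝ) ^ l)..δ, ‖rieszProd t (l + m) y‖ ^ 2
  have hX : 0 ≤ X := intervalIntegral.integral_nonneg (div_le_self hδ.le hM1) fun _ _ => sq_nonneg _
  have hmass := (ofReal_le_shellMeasure_univ hM hδ hE).trans <|
    (measure_univ_le_add_compl (smallFactorSet t δ l ε)).trans <|
    add_le_add hsmall (shellMeasure_compl_smallFactorSet_le hM hδ.le hε)
  rw [← ENNReal.ofReal_add (by positivity) (by positivity),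
    ENNReal.ofReal_le_ofReal_iff (by positivity)] at hmass
  have hscaled : δ * (M : ℝ) ^ l / 8 ≤ (ε ^ (2 * l))⁻¹ * ((M : ℝ) ^ (l + m) * X) := by
    have hpos : (0 : ℝ) < (M : ℝ) ^ (l + m) := by positivity
    have hleft : (M : ℝ) ^ (l + m) * ((δ * (M : ℝ) ^ l - B) / (2 * (M : ℝ) ^ (l + m))) =
        (δ * (M : ℝ) ^ l - B) / 2 := by field_simp
    have hright : (M : ℝ) ^ (l + m) * (δ * (M : ℝ) ^ l / (4 * (M : ℝ) ^ (l + m))) =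
        δ * (M : ℝ) ^ l / 4 := by field_simp
    have := mul_le_mul_of_nonneg_left hmass hpos.le
    rw [mul_add, hleft, hright] at this
    linarith
  rw [inv_mul_eq_div, le_div_iff₀' (by positivity)] at hscaled
  refine le_trans ?_ hscaled
  rw [mul_div_assoc]
  gcongr
  exact le_mul_of_one_le_right hδ.le hM1

theorem mul_le_pow_mul_integral_shell (hT1 : 1 ≤ T) (hT : ∀ j, |t j| ≤ T) (hτ : 0 < τ)
    (hτ1 : τ ≤ 1) {i₀ : Fin M} (hsep : ∀ j ≠ i₀, τ ≤ |t i₀ - t j|) (hδ : 0 < δ) (hδ1 : δ ≤ 1)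
    (hq : ∀ y, δ < y → y ≤ δ * (M : ℝ) ^ l → ‖rieszProd t r y‖ ≤ q)
    (hE : rieszEnergy t δ (r + a) ≤ B) (hE' : rieszEnergy t δ a ≤ B)
    (hm : 2 * (δ * (M : ℝ) ^ l) ≤ m * (derivBound M T τ / (2 * T ^ M)))
    (hh : h = δ / (4 * (M : ℝ) ^ (l + r))) (hB : 4 * B ≤ δ * (M : ℝ) ^ l)
    (hsmall : l * ((m + 1) * (3 ^ M * (8 * q ^ 2 * B))) ≤ δ * (M : ℝ) ^ l) :
    (derivBound M T τ / 2 * h ^ M) ^ (2 * l) * δ / 8 ≤ (M : ℝ) ^ (l + (r + a)) *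
      ∫ y in (δ / (M : ℝ) ^ l)..δ, ‖rieszProd t (l + (r + a)) y‖ ^ 2 := by
  have hM := i₀.pos
  have hM1 : (1 : ℝ) ≤ (M : ℝ) ^ (l + r) := one_le_pow₀ (by exact_mod_cast hM)
  have hh0 : 0 < h := by rw [hh]; positivity
  have hh1 : h ≤ 1 := by
    rw [hh, div_le_one (by positivity)]
    linarith
  have hκ := derivBound_pos hM (by linarith : 0 ≤ T) hτ
  refine mul_le_pow_mul_integral_of_shellMeasure_le hM hδ (by positivity) hE hB ?_
  refine (measure_smallFactorSet_le hT1 hT hτ hτ1 hsep hh0 hh1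
    (shellMeasure_Icc_le hM hδ hq hE' hh) hm).trans ?_
  have hcast : (l : ℝ≥0∞) * ((m + 1) * 3 ^ M) = ENNReal.ofReal (l * ((m + 1) * 3 ^ M)) := by
    rw [← ENNReal.ofReal_natCast, ← ENNReal.ofReal_natCast m, ← ENNReal.ofReal_one,
      ← ENNReal.ofReal_ofNat 3, ← ENNReal.ofReal_pow (by norm_num),
      ← ENNReal.ofReal_add (by positivity) zero_le_one, ← ENNReal.ofReal_mul (by positivity),
      ← ENNReal.ofReal_mul (by positivity)]
  rw [← mul_assoc (m + 1 : ℝ≥0∞), ← mul_assoc (l : ℝ≥0∞), hcast,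
    ← ENNReal.ofReal_mul (by positivity)]
  refine ENNReal.ofReal_le_ofReal ?_
  calc (l : ℝ) * ((m + 1) * 3 ^ M) * (2 * q ^ 2 * B / (M : ℝ) ^ (l + (r + a)))
      = l * ((m + 1) * (3 ^ M * (8 * q ^ 2 * B))) / (4 * (M : ℝ) ^ (l + (r + a))) := by
        field_simp
        ring
    _ ≤ _ := by gcongr

theorem integral_le_four_mul_integral_rescale (hM : 2 ≤ M) (hT0 : 0 ≤ T) (hT : ∀ j, |t j| ≤ T)
    (hTδ : 4 * T * δ ≤ 1) {b : ℝ} (hb : 0 ≤ b) (hbδ : b ≤ δ) (k n : ℕ) :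
    ∫ y in b..δ, ‖rieszProd t n y‖ ^ 2 ≤
      4 * ((M : ℝ) ^ k * ∫ y in (b / (M : ℝ) ^ k)..(δ / (M : ℝ) ^ k),
        ‖rieszProd t (k + n) y‖ ^ 2) := by
  have hrescale : ∫ y in (b / (M : ℝ) ^ k)..(δ / (M : ℝ) ^ k),
      ‖rieszProd t n ((M : ℝ) ^ k * y)‖ ^ 2 =
        ((M : ℝ) ^ k)⁻¹ * ∫ y in b..δ, ‖rieszProd t n y‖ ^ 2 := by
    rw [intervalIntegral.integral_comp_mul_left (fun y => ‖rieszProd t n y‖ ^ 2) (by positivity),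
      mul_div_cancel₀ _ (by positivity), mul_div_cancel₀ _ (by positivity), smul_eq_mul]
  have hpoint : ∀ y ∈ Set.Icc (b / (M : ℝ) ^ k) (δ / (M : ℝ) ^ k),
      ‖rieszProd t n ((M : ℝ) ^ k * y)‖ ^ 2 ≤ 4 * ‖rieszProd t (k + n) y‖ ^ 2 := by
    rintro y ⟨hy, hyδ⟩
    have hy0 : 0 ≤ y := (by positivity : 0 ≤ b / (M : ℝ) ^ k).trans hy
    have hhalf := half_le_norm_rieszProd hM hT0 hT hTδ (n := k) (y := y)
      (by rwa [abs_of_nonneg hy0, ← le_div_iff₀' (by positivity)])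
    rw [rieszProd_add, norm_mul, mul_pow, ← mul_assoc]
    refine le_mul_of_one_le_left (sq_nonneg _) ?_
    nlinarith
  calc ∫ y in b..δ, ‖rieszProd t n y‖ ^ 2
      = (M : ℝ) ^ k * ∫ y in (b / (M : ℝ) ^ k)..(δ / (M : ℝ) ^ k),
          ‖rieszProd t n ((M : ℝ) ^ k * y)‖ ^ 2 := by
        rw [hrescale, mul_inv_cancel_left₀ (by positivity)]
    _ ≤ (M : ℝ) ^ k * ∫ y in (b / (M : ℝ) ^ k)..(δ / (M : ℝ) ^ k),
          4 * ‖rieszProd t (k + n) y‖ ^ 2 := by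
        gcongr
        exact intervalIntegral.integral_mono_on (by gcongr)
          (Continuous.intervalIntegrable (by fun_prop) _ _)
          (Continuous.intervalIntegrable (by fun_prop) _ _) hpoint
    _ = _ := by
        rw [intervalIntegral.integral_const_mul]
        ring

theorem sum_integral_shell_le {f : ℝ → ℝ} (hf : Continuous f) (h0 : 0 ≤ f) (hM : 0 < M)
    (hδ : 0 ≤ δ) (l Q : ℕ) :
    ∑ i ∈ Finset.range Q, ∫ y in (δ / (M : ℝ) ^ (l * (i + 1)))..(δ / (M : ℝ) ^ (l * i)), f y ≤
      ∫ y in (0 : ℝ)..δ, f y := by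
  have hM1 : (1 : ℝ) ≤ (M : ℝ) ^ (l * Q) := one_le_pow₀ (by exact_mod_cast hM)
  have hadj := intervalIntegral.sum_integral_adjacent_intervals (f := f) (μ := volume)
    (a := fun i => δ / (M : ℝ) ^ (l * i)) (n := Q) fun _ _ => hf.intervalIntegrable _ _
  rw [mul_zero, pow_zero, div_one] at hadj
  calc _ = ∫ y in (δ / (M : ℝ) ^ (l * Q))..δ, f y := by
        rw [intervalIntegral.integral_symm, ← hadj, ← Finset.sum_neg_distrib]
        exact Finset.sum_congr rfl fun i _ => intervalIntegral.integral_symm _ _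
    _ ≤ _ := intervalIntegral.integral_mono_interval (by positivity) (div_le_self hδ hM1) le_rfl
        (Filter.Eventually.of_forall h0) (hf.intervalIntegrable _ _)

theorem mul_le_two_mul_rieszEnergy (hM : 2 ≤ M) (hT0 : 0 ≤ T) (hT : ∀ j, |t j| ≤ T) (hδ : 0 ≤ δ)
    (hTδ : 4 * T * δ ≤ 1) {N Q : ℕ} (hQ : l * Q ≤ N) {η : ℝ}
    (hη : ∀ i < Q, η ≤ (M : ℝ) ^ (N - l * i) *
      ∫ y in (δ / (M : ℝ) ^ l)..δ, ‖rieszProd t (N - l * i) y‖ ^ 2) :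
    Q * η ≤ 2 * rieszEnergy t δ N := by
  have hM1 : (1 : ℝ) ≤ (M : ℝ) ^ l := one_le_pow₀ (by exact_mod_cast (by omega : 1 ≤ M))
  have hshell : ∀ i ∈ Finset.range Q, η ≤ 4 * (M : ℝ) ^ N *
      ∫ y in (δ / (M : ℝ) ^ (l * (i + 1)))..(δ / (M : ℝ) ^ (l * i)), ‖rieszProd t N y‖ ^ 2 := by
    intro i hi
    obtain ⟨n, hn⟩ := Nat.exists_eq_add_of_le <|
      (Nat.mul_le_mul_left l (Finset.mem_range.1 hi).le).trans hQ
    have hstep := integral_le_four_mul_integral_rescale hM hT0 hT hTδ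
      (by positivity) (div_le_self hδ hM1) (l * i) n
    rw [div_div, ← pow_add, ← hn, add_comm l, ← mul_add_one] at hstep
    have hlow := hη i (Finset.mem_range.1 hi)
    rw [show N - l * i = n by omega] at hlow
    calc η ≤ (M : ℝ) ^ n * ∫ y in (δ / (M : ℝ) ^ l)..δ, ‖rieszProd t n y‖ ^ 2 := hlow
      _ ≤ _ := mul_le_mul_of_nonneg_left hstep (by positivity)
      _ = _ := by rw [hn, pow_add]; ring
  calc Q * η = ∑ _i ∈ Finset.range Q, η := by rw [Finset.sum_const, Finset.card_range, nsmul_eq_mul]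
    _ ≤ _ := Finset.sum_le_sum hshell
    _ ≤ 4 * (M : ℝ) ^ N * ∫ y in (0 : ℝ)..δ, ‖rieszProd t N y‖ ^ 2 := by
        rw [← Finset.mul_sum]
        gcongr
        exact sum_integral_shell_le (f := fun y => ‖rieszProd t N y‖ ^ 2) (by fun_prop)
          (fun _ => sq_nonneg _) (by omega) hδ l Q
    _ = 2 * rieszEnergy t δ N := by
        rw [rieszEnergy, integral_norm_rieszProd_sq_symm (by omega)]
        ring

theorem exists_lt_rieszEnergy (hM : 2 ≤ M) (hT1 : 1 ≤ T) (hT : ∀ j, |t j| ≤ T) (hτ : 0 < τ)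
    (hτ1 : τ ≤ 1) {i₀ : Fin M} (hsep : ∀ j ≠ i₀, τ ≤ |t i₀ - t j|) (hδ : 0 < δ)
    (hTδ : 4 * T * δ ≤ 1) (hq : ∀ y, δ < y → y ≤ δ * (M : ℝ) ^ l → ‖rieszProd t r y‖ ≤ q)
    (hm : 2 * (δ * (M : ℝ) ^ l) ≤ m * (derivBound M T τ / (2 * T ^ M)))
    (hh : h = δ / (4 * (M : ℝ) ^ (l + r))) (hB : 4 * B ≤ δ * (M : ℝ) ^ l)
    (hsmall : l * ((m + 1) * (3 ^ M * (8 * q ^ 2 * B))) ≤ δ * (M : ℝ) ^ l) {Q : ℕ}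
    (hQ : 16 * B < Q * ((derivBound M T τ / 2 * h ^ M) ^ (2 * l) * δ)) :
    ∃ n ≤ l * Q + r, B < rieszEnergy t δ n := by
  by_contra! hle
  have hlow := mul_le_two_mul_rieszEnergy (l := l) (N := l * Q + r) (Q := Q)
    (η := (derivBound M T τ / 2 * h ^ M) ^ (2 * l) * δ / 8) hM (by linarith) hT hδ.le hTδ
    (by omega) fun i hi => ?_
  · linarith [hle (l * Q + r) le_rfl]
  · have hi' : l * i + l ≤ l * Q := by
      rw [← mul_add_one]
      exact Nat.mul_le_mul_left l hi
    obtain ⟨a, ha⟩ : ∃ a, l * Q + r - l * i = l + (r + a) := ⟨l * Q - l * i - l, by omega⟩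
    rw [ha]
    exact mul_le_pow_mul_integral_shell hT1 hT hτ hτ1 hsep hδ (by nlinarith) hq
      (hle _ (by omega)) (hle _ (by omega)) hm hh hB hsmall

end EnergyIncrement

section Direction

/-- The coordinate of `z` in the direction `θ`: the map whose images are the sets
`projDir θ E`. -/
noncomputable def dirProj (θ : ℝ) (z : ℂ) : ℝ := (Complex.exp (-(θ : ℂ) * Complex.I) * z).re

theorem dirProj_eq (θ : ℝ) (z : ℂ) : dirProj θ z = z.re * Real.cos θ + z.im * Real.sin θ := by
  rw [dirProj, ← Complex.ofReal_neg, Complex.mul_re, Complex.exp_ofReal_mul_I_re,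
    Complex.exp_ofReal_mul_I_im, Real.cos_neg, Real.sin_neg]
  ring

theorem dirProj_eq_norm_mul_cos (θ : ℝ) (z : ℂ) :
    dirProj θ z = ‖z‖ * Real.cos (θ - z.arg) := by
  rw [dirProj_eq, Real.cos_sub]
  linear_combination -Real.cos θ * Complex.norm_mul_cos_arg z -
    Real.sin θ * Complex.norm_mul_sin_arg z

theorem dirProj_sub (θ : ℝ) (z w : ℂ) : dirProj θ (z - w) = dirProj θ z - dirProj θ w := by
  rw [dirProj, mul_sub, Complex.sub_re, dirProj, dirProj]

theorem abs_dirProj_le_norm (θ : ℝ) (z : ℂ) : |dirProj θ z| ≤ ‖z‖ := by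
  rw [dirProj_eq_norm_mul_cos, abs_mul, abs_norm]
  exact mul_le_of_le_one_right (norm_nonneg z) (Real.abs_cos_le_one _)

theorem volume_le_of_abs_sin_sub_le_of_subset_Icc {a D : ℝ} {S : Set ℝ}
    (hS : S ⊆ Set.Icc a (a + Real.pi / 2))
    (hsin : ∀ x ∈ S, ∀ y ∈ S, |Real.sin (x - y)| ≤ D) :
    volume S ≤ ENNReal.ofReal (Real.pi / 2 * D) := by
  refine (Real.volume_le_diam S).trans (Metric.ediam_le fun x hx y hy => ?_)
  rw [edist_dist, Real.dist_eq]
  refine ENNReal.ofReal_le_ofReal ?_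
  have hxy : |x - y| ≤ Real.pi / 2 := by
    rw [abs_le]
    constructor <;> linarith [(hS hx).1, (hS hx).2, (hS hy).1, (hS hy).2]
  have hjordan : 2 / Real.pi * |x - y| ≤ D :=
    (Real.mul_abs_le_abs_sin hxy).trans (hsin x hx y hy)
  calc |x - y| = Real.pi / 2 * (2 / Real.pi * |x - y|) := by field_simp
    _ ≤ _ := by gcongr

theorem volume_le_of_abs_sin_sub_le {D : ℝ} {S : Set ℝ} (hS : S ⊆ Set.Icc 0 Real.pi)
    (hsin : ∀ x ∈ S, ∀ y ∈ S, |Real.sin (x - y)| ≤ D) :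
    volume S ≤ ENNReal.ofReal (Real.pi * D) := by
  have hhalf : ∀ a : ℝ, volume (S ∩ Set.Icc a (a + Real.pi / 2)) ≤
      ENNReal.ofReal (Real.pi / 2 * D) := fun a =>
    volume_le_of_abs_sin_sub_le_of_subset_Icc Set.inter_subset_right
      fun x hx y hy => hsin x hx.1 y hy.1
  have hcover : S ⊆ (S ∩ Set.Icc 0 (0 + Real.pi / 2)) ∪
      (S ∩ Set.Icc (Real.pi / 2) (Real.pi / 2 + Real.pi / 2)) := by
    intro y hy
    rcases le_total y (Real.pi / 2) with hle | hle
    · exact Or.inl ⟨hy, (hS hy).1, by rwa [zero_add]⟩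
    · exact Or.inr ⟨hy, hle, by rw [add_halves]; exact (hS hy).2⟩
  calc volume S ≤ _ := measure_mono hcover
    _ ≤ _ := measure_union_le _ _
    _ ≤ ENNReal.ofReal (Real.pi / 2 * D) + ENNReal.ofReal (Real.pi / 2 * D) :=
        add_le_add (hhalf 0) (hhalf _)
    _ = ENNReal.ofReal (Real.pi * D) := by
        rw [← two_mul, ← ENNReal.ofReal_ofNat, ← ENNReal.ofReal_mul (by norm_num)]
        congr 1
        ring

theorem volume_abs_dirProj_lt_le {z : ℂ} (hz : z ≠ 0) (τ : ℝ) :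
    volume {θ | θ ∈ Set.Icc 0 Real.pi ∧ |dirProj θ z| < τ} ≤
      ENNReal.ofReal (Real.pi * (2 * τ / ‖z‖)) := by
  refine volume_le_of_abs_sin_sub_le (fun _ hθ => hθ.1) ?_
  rintro x ⟨-, hx⟩ y ⟨-, hy⟩
  have hsin : ‖z‖ * Real.sin (x - y) =
      Real.sin (x - z.arg) * dirProj y z - dirProj x z * Real.sin (y - z.arg) := by
    rw [← sub_sub_sub_cancel_right x y z.arg, Real.sin_sub (x - z.arg), dirProj_eq_norm_mul_cos,
      dirProj_eq_norm_mul_cos]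
    ring
  rw [le_div_iff₀ (norm_pos_iff.2 hz), mul_comm]
  calc ‖z‖ * |Real.sin (x - y)| = |‖z‖ * Real.sin (x - y)| := by rw [abs_mul, abs_norm]
    _ ≤ |Real.sin (x - z.arg)| * |dirProj y z| + |dirProj x z| * |Real.sin (y - z.arg)| := by
        rw [hsin, ← abs_mul, ← abs_mul]
        exact abs_sub _ _
    _ ≤ 1 * τ + τ * 1 := by
        have hτ : 0 ≤ τ := (abs_nonneg _).trans hx.le
        gcongr <;> exact Real.abs_sin_le_one _
    _ = 2 * τ := by ring

/-- Twice the signed area of the triangle `0, z, w`. -/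
def areaForm (z w : ℂ) : ℝ := z.re * w.im - z.im * w.re

theorem abs_areaForm_mul_abs_sin_sub_le {a b : ℂ} {x x' θ θ' ρ : ℝ}
    (ha : |x * dirProj θ a - x' * dirProj θ' a| ≤ ρ)
    (hb : |x * dirProj θ b - x' * dirProj θ' b| ≤ ρ) :
    |areaForm a b| * |x * Real.sin (θ - θ')| ≤ ρ * (‖a‖ + ‖b‖) := by
  have hρ : 0 ≤ ρ := (abs_nonneg _).trans ha
  -- The terms in `x'` cancel.
  have hident : areaForm a b * (x * Real.sin (θ - θ')) =
      (x * dirProj θ b - x' * dirProj θ' b) * dirProj θ' a -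
        (x * dirProj θ a - x' * dirProj θ' a) * dirProj θ' b := by
    rw [areaForm, Real.sin_sub, dirProj_eq, dirProj_eq, dirProj_eq, dirProj_eq]
    ring
  rw [← abs_mul, hident]
  calc _ ≤ _ := abs_sub _ _
    _ ≤ ρ * ‖a‖ + ρ * ‖b‖ := by
        rw [abs_mul, abs_mul]
        gcongr <;> exact abs_dirProj_le_norm _ _
    _ = _ := by ring

end Direction

section Itinerary

/-- Some coordinate of `M ^ k • v` has distance at least `1 / (2 * M)` to the integers. -/
def IsFar {d : ℕ} (M : ℕ) (v : Fin d → ℝ) (k : ℕ) : Prop :=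
  ∃ i, 1 / (2 * (M : ℝ)) ≤ |(M : ℝ) ^ k * v i - round ((M : ℝ) ^ k * v i)|

open Classical in
/-- The number of levels `m < k` at which `M ^ m • v` is far from the integer lattice. -/
noncomputable def farCount {d : ℕ} (M : ℕ) (v : Fin d → ℝ) (k : ℕ) : ℕ :=
  ((Finset.range k).filter (IsFar M v)).card

variable {d M : ℕ} {v : Fin d → ℝ} {k : ℕ}

theorem farCount_succ_of_isFar (h : IsFar M v k) : farCount M v (k + 1) = farCount M v k + 1 := by
  rw [farCount, Finset.range_add_one, Finset.filter_insert, if_pos h,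
    Finset.card_insert_of_notMem (by simp), farCount]

theorem farCount_succ_of_not_isFar (h : ¬IsFar M v k) : farCount M v (k + 1) = farCount M v k := by
  rw [farCount, Finset.range_add_one, Finset.filter_insert, if_neg h, farCount]

/-- The integer vectors with all coordinates at most `S` in absolute value. -/
noncomputable def intBox (d S : ℕ) : Finset (Fin d → ℤ) :=
  Fintype.piFinset fun _ => Finset.Icc (-(S : ℤ)) S

theorem mem_intBox {S : ℕ} {p : Fin d → ℤ} : p ∈ intBox d S ↔ ∀ i, |(p i : ℝ)| ≤ S := by
  simp only [intBox, Fintype.mem_piFinset, Finset.mem_Icc, abs_le]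
  refine forall_congr' fun i => ?_
  norm_cast

theorem card_intBox (d S : ℕ) : (intBox d S).card = (2 * S + 1) ^ d := by
  rw [intBox, Fintype.card_piFinset_const, Int.card_Icc]
  congr 1
  lia

open scoped Pointwise in
/-- Candidates for the rounding of `M ^ k • v` when `v` is rounded into `intBox d S` and at most `j`
of the levels before `k` are far from the lattice (see `round_mem_itineraries`): the rounding is
multiplied by `M` at each level, and corrected by an element of `intBox d M` at the far ones. -/
noncomputable def itineraries (d M S : ℕ) : ℕ → ℕ → Finset (Fin d → ℤ)
  | 0, _ => intBox d S
  | k + 1, 0 => (itineraries d M S k 0).image ((M : ℤ) • ·)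
  | k + 1, j + 1 => (itineraries d M S k (j + 1)).image ((M : ℤ) • ·) ∪
      ((itineraries d M S k j).image ((M : ℤ) • ·) + intBox d M)

theorem image_smul_itineraries_subset (d M S k j : ℕ) :
    (itineraries d M S k j).image ((M : ℤ) • ·) ⊆ itineraries d M S (k + 1) j := by
  cases j with
  | zero => exact subset_rfl
  | succ j => exact Finset.subset_union_left

theorem card_itineraries_succ_succ_le (d M S k j : ℕ) :
    (itineraries d M S (k + 1) (j + 1)).card ≤
      (itineraries d M S k (j + 1)).card + (itineraries d M S k j).card * (2 * M + 1) ^ d :=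
  calc _ ≤ _ := Finset.card_union_le _ _
    _ ≤ _ := by
      refine add_le_add Finset.card_image_le (Finset.card_add_le.trans ?_)
      rw [card_intBox]
      exact Nat.mul_le_mul_right _ Finset.card_image_le

theorem card_itineraries_le (d M S k j : ℕ) :
    ((itineraries d M S k j).card : ℝ) ≤
      (2 * S + 1) ^ d * (4 * (2 * M + 1) ^ d) ^ j * (5 / 4) ^ k := by
  induction k generalizing j with
  | zero =>
    have hbase : (1 : ℝ) ≤ (4 * (2 * M + 1) ^ d) ^ j :=
      one_le_pow₀ (by linarith [one_le_pow₀ (n := d) (by linarith [Nat.cast_nonneg (α := ℝ) M] :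
        (1 : ℝ) ≤ 2 * M + 1)])
    rw [itineraries, card_intBox, pow_zero, mul_one]
    push_cast
    exact le_mul_of_one_le_right (by positivity) hbase
  | succ k ih =>
    cases j with
    | zero =>
      have hstep : ((itineraries d M S (k + 1) 0).card : ℝ) ≤ (itineraries d M S k 0).card := by
        exact_mod_cast Finset.card_image_le
      refine hstep.trans ((ih 0).trans ?_)
      gcongr
      · norm_num
      · exact k.le_succ
    | succ j =>
      calc ((itineraries d M S (k + 1) (j + 1)).card : ℝ) ≤
            (itineraries d M S k (j + 1)).card +
              (itineraries d M S k j).card * (2 * M + 1) ^ d := by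
            exact_mod_cast card_itineraries_succ_succ_le d M S k j
        _ ≤ (2 * S + 1) ^ d * (4 * (2 * M + 1) ^ d) ^ (j + 1) * (5 / 4) ^ k +
              (2 * S + 1) ^ d * (4 * (2 * M + 1) ^ d) ^ j * (5 / 4) ^ k * (2 * M + 1) ^ d := by
            gcongr
            · exact ih (j + 1)
            · exact ih j
        _ = _ := by ring

theorem abs_round_le (x : ℝ) : |(round x : ℝ)| ≤ |x| + 1 / 2 := by
  have h := abs_sub_abs_le_abs_sub (round x : ℝ) x
  rw [abs_sub_comm] at h
  linarith [abs_sub_round x]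

theorem round_natCast_mul_of_near (hM : 0 < M) {x : ℝ} (hx : |x - round x| < 1 / (2 * (M : ℝ))) :
    round ((M : ℝ) * x) = M * round x := by
  rw [lt_div_iff₀ (by positivity)] at hx
  have hnear : |(M : ℝ) * x - M * round x| < 1 / 2 := by
    rw [← mul_sub, abs_mul, Nat.abs_cast]
    linarith
  rw [abs_lt] at hnear
  rw [round_eq, Int.floor_eq_iff]
  push_cast
  constructor <;> linarith

theorem abs_round_natCast_mul_sub_le (hM : 1 ≤ M) (x : ℝ) :
    |(round ((M : ℝ) * x) - M * round x : ℝ)| ≤ M := by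
  have hM1 : (1 : ℝ) ≤ M := by exact_mod_cast hM
  calc |(round ((M : ℝ) * x) - M * round x : ℝ)|
      = |(M : ℝ) * (x - round x) - (M * x - round ((M : ℝ) * x))| := by congr 1; ring
    _ ≤ |(M : ℝ) * (x - round x)| + |M * x - round ((M : ℝ) * x)| := abs_sub _ _
    _ ≤ M * (1 / 2) + 1 / 2 := by
        rw [abs_mul, Nat.abs_cast]
        gcongr <;> exact abs_sub_round _
    _ ≤ M := by linarith

theorem round_mem_itineraries (hM : 1 ≤ M) {S : ℕ} (hS : ∀ i, |v i| + 1 / 2 ≤ S) {j : ℕ}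
    (hj : farCount M v k ≤ j) :
    (fun i => round ((M : ℝ) ^ k * v i)) ∈ itineraries d M S k j := by
  induction k generalizing j with
  | zero =>
    rw [itineraries, mem_intBox]
    intro i
    rw [pow_zero, one_mul]
    exact (abs_round_le _).trans (hS i)
  | succ k ih =>
    simp_rw [pow_succ', mul_assoc]
    by_cases hfar : IsFar M v k
    · rw [farCount_succ_of_isFar hfar] at hj
      obtain ⟨j, rfl⟩ := Nat.exists_eq_add_of_le' (Nat.le_of_add_left_le hj)
      refine Finset.mem_union_right _ (Finset.mem_add.2
        ⟨_, Finset.mem_image_of_mem _ (ih (Nat.le_of_succ_le_succ hj)),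
          fun i => round ((M : ℝ) * ((M : ℝ) ^ k * v i)) - M * round ((M : ℝ) ^ k * v i),
          mem_intBox.2 fun i => ?_, ?_⟩)
      · push_cast
        exact abs_round_natCast_mul_sub_le hM _
      · ext i
        simp
    · rw [farCount_succ_of_not_isFar hfar] at hj
      simp only [IsFar, not_exists, not_le] at hfar
      simp_rw [fun i => round_natCast_mul_of_near hM (hfar i)]
      exact image_smul_itineraries_subset d M S k j (Finset.mem_image_of_mem _ (ih hj))

end Itinerary

section NearOrbit

variable {M : ℕ} {z : Fin 2 → ℂ} {δ : ℝ}

theorem abs_sub_le_of_round_mul_eq {c x y : ℝ} (hc : 0 < c) {p : ℤ} (hx : round (c * x) = p)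
    (hy : round (c * y) = p) : |x - y| ≤ 1 / c := by
  have hsub : |c * x - c * y| ≤ 1 := by
    have hx' := abs_sub_round (c * x)
    have hy' := abs_sub_round (c * y)
    rw [hx] at hx'
    rw [hy] at hy'
    rw [abs_le] at hx' hy' ⊢
    constructor <;> linarith
  rwa [← mul_sub, abs_mul, abs_of_pos hc, ← le_div_iff₀' hc] at hsub

/-- The vector of projections of the points `z i` in direction `θ`, scaled by `x / (2 * π)`. -/
noncomputable def scaledProj {d : ℕ} (z : Fin d → ℂ) (x θ : ℝ) (i : Fin d) : ℝ :=
  x * dirProj θ (z i) / (2 * Real.pi)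

theorem volume_round_scaledProj_eq_le (hM : 0 < M) (hz : areaForm (z 0) (z 1) ≠ 0) (hδ : 0 < δ)
    (r : ℕ) (p : Fin 2 → ℤ) :
    volume {θ | θ ∈ Set.Icc 0 Real.pi ∧
      ∃ x, δ ≤ x ∧ (fun i => round ((M : ℝ) ^ r * scaledProj z x θ i)) = p} ≤
      ENNReal.ofReal (2 * Real.pi ^ 2 * (‖z 0‖ + ‖z 1‖) / (|areaForm (z 0) (z 1)| * δ) /
        (M : ℝ) ^ r) := by
  have hMr : (0 : ℝ) < (M : ℝ) ^ r := by positivity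
  have hdiam := volume_le_of_abs_sin_sub_le (S := {θ | θ ∈ Set.Icc 0 Real.pi ∧
      ∃ x, δ ≤ x ∧ (fun i => round ((M : ℝ) ^ r * scaledProj z x θ i)) = p})
    (D := 2 * Real.pi / (M : ℝ) ^ r * (‖z 0‖ + ‖z 1‖) / (|areaForm (z 0) (z 1)| * δ))
    (fun _ hθ => hθ.1) ?_
  · refine hdiam.trans_eq (congrArg _ ?_)
    field_simp
  rintro θ ⟨-, x, hx, hθ⟩ θ' ⟨-, x', -, hθ'⟩
  have hclose : ∀ i, |x * dirProj θ (z i) - x' * dirProj θ' (z i)| ≤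
      2 * Real.pi / (M : ℝ) ^ r := fun i => by
    have h := abs_sub_le_of_round_mul_eq hMr (congrFun hθ i) (congrFun hθ' i)
    rw [scaledProj, scaledProj, ← sub_div, abs_div, abs_of_pos Real.two_pi_pos,
      div_le_iff₀ Real.two_pi_pos] at h
    rwa [div_eq_mul_one_div, mul_comm (2 * Real.pi)]
  rw [le_div_iff₀ (by positivity)]
  calc |Real.sin (θ - θ')| * (|areaForm (z 0) (z 1)| * δ)
      ≤ |Real.sin (θ - θ')| * (|areaForm (z 0) (z 1)| * x) := by gcongr
    _ = |areaForm (z 0) (z 1)| * |x * Real.sin (θ - θ')| := by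
        rw [abs_mul, abs_of_pos (hδ.trans_le hx)]
        ring
    _ ≤ _ := abs_areaForm_mul_abs_sin_sub_le (hclose 0) (hclose 1)

theorem volume_farCount_le_le_of_abs_scaledProj_le (hM : 0 < M)
    (hz : areaForm (z 0) (z 1) ≠ 0) (hδ : 0 < δ) {X : ℝ} {S : ℕ}
    (hS : ∀ θ x i, δ ≤ x → x ≤ X → |scaledProj z x θ i| + 1 / 2 ≤ S) (k j : ℕ) :
    volume {θ | θ ∈ Set.Icc 0 Real.pi ∧
      ∃ x, δ ≤ x ∧ x ≤ X ∧ farCount M (scaledProj z x θ) k ≤ j} ≤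
      ENNReal.ofReal ((2 * S + 1) ^ 2 * (4 * (2 * M + 1) ^ 2) ^ j * (5 / 4) ^ k *
        (2 * Real.pi ^ 2 * (‖z 0‖ + ‖z 1‖) / (|areaForm (z 0) (z 1)| * δ) / (M : ℝ) ^ k)) := by
  have hcover : {θ | θ ∈ Set.Icc 0 Real.pi ∧
      ∃ x, δ ≤ x ∧ x ≤ X ∧ farCount M (scaledProj z x θ) k ≤ j} ⊆
      ⋃ p ∈ itineraries 2 M S k j, {θ | θ ∈ Set.Icc 0 Real.pi ∧
        ∃ x, δ ≤ x ∧ (fun i => round ((M : ℝ) ^ k * scaledProj z x θ i)) = p} := by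
    rintro θ ⟨hθ, x, hδx, hxX, hcount⟩
    exact Set.mem_iUnion₂.2
      ⟨_, round_mem_itineraries hM (fun i => hS θ x i hδx hxX) hcount, hθ, x, hδx, rfl⟩
  calc _ ≤ _ := measure_mono hcover
    _ ≤ _ := measure_biUnion_finset_le _ _
    _ ≤ _ := Finset.sum_le_card_nsmul _ _ _
        fun p _ => volume_round_scaledProj_eq_le hM hz hδ k p
    _ ≤ _ := by
        rw [nsmul_eq_mul, ← ENNReal.ofReal_natCast, ← ENNReal.ofReal_mul (Nat.cast_nonneg _)]
        gcongr
        exact card_itineraries_le 2 M S k j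

theorem exists_natCast_mul_pow_abs_scaledProj_le (z : Fin 2 → ℂ) (hM : 0 < M) (hδ : 0 ≤ δ) :
    ∃ S : ℕ, 0 < S ∧ ∀ (l : ℕ) (θ x : ℝ) (i : Fin 2), 0 ≤ x → x ≤ δ * (M : ℝ) ^ (l + 1) →
      |scaledProj z x θ i| + 1 / 2 ≤ (S * M ^ l : ℕ) := by
  obtain ⟨S, hS⟩ := exists_nat_ge (δ * M * (‖z 0‖ + ‖z 1‖) + 1)
  have hS1 : (1 : ℝ) ≤ S := le_trans (le_add_of_nonneg_left (by positivity)) hS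
  refine ⟨S, by exact_mod_cast hS1, fun l θ x i hx0 hx => ?_⟩
  have hzi : ‖z i‖ ≤ ‖z 0‖ + ‖z 1‖ := by
    fin_cases i
    · exact le_add_of_nonneg_right (norm_nonneg _)
    · exact le_add_of_nonneg_left (norm_nonneg _)
  have hproj : |scaledProj z x θ i| ≤ δ * (M : ℝ) ^ (l + 1) * (‖z 0‖ + ‖z 1‖) := by
    rw [scaledProj, abs_div, abs_mul, abs_of_nonneg hx0, abs_of_pos Real.two_pi_pos]
    refine (div_le_self (by positivity) (by linarith [Real.pi_gt_three])).trans ?_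
    gcongr
    exact (abs_dirProj_le_norm θ (z i)).trans hzi
  have hMl : (1 : ℝ) ≤ (M : ℝ) ^ l := one_le_pow₀ (by exact_mod_cast hM)
  calc |scaledProj z x θ i| + 1 / 2
      ≤ (δ * M * (‖z 0‖ + ‖z 1‖) + 1) * (M : ℝ) ^ l := by
        rw [pow_succ] at hproj
        linarith
    _ ≤ S * (M : ℝ) ^ l := by gcongr
    _ = (S * M ^ l : ℕ) := by push_cast; rfl

theorem four_mul_sq_pow_mul_pow_le (hM : 3 ≤ M) (J : ℕ) :
    ((4 : ℝ) * (2 * M + 1) ^ 2) ^ J * (5 / 4) ^ (24 * J) ≤ (M : ℝ) ^ (12 * J) := by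
  have hM3 : (3 : ℝ) ≤ M := by exact_mod_cast hM
  have hdigits : (4 : ℝ) * (2 * M + 1) ^ 2 ≤ (M : ℝ) ^ 6 :=
    calc (4 : ℝ) * (2 * M + 1) ^ 2 ≤ (M : ℝ) ^ 2 * ((M : ℝ) ^ 2) ^ 2 := by
          gcongr <;> nlinarith
      _ = (M : ℝ) ^ 6 := by ring
  have hlevels : ((5 : ℝ) / 4) ^ 24 ≤ (M : ℝ) ^ 6 :=
    calc ((5 : ℝ) / 4) ^ 24 ≤ 3 ^ 6 := by norm_num
      _ ≤ (M : ℝ) ^ 6 := by gcongr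
  rw [pow_mul, pow_mul, ← mul_pow]
  gcongr
  calc _ ≤ (M : ℝ) ^ 6 * (M : ℝ) ^ 6 := by gcongr
    _ = _ := by ring

theorem exists_volume_farCount_le_le (hM : 3 ≤ M) (hz : areaForm (z 0) (z 1) ≠ 0) (hδ : 0 < δ) :
    ∃ C : ℝ, 0 < C ∧ ∀ l J : ℕ,
      volume {θ | θ ∈ Set.Icc 0 Real.pi ∧
        ∃ x, δ ≤ x ∧ x ≤ δ * (M : ℝ) ^ (l + 1) ∧ farCount M (scaledProj z x θ) (24 * J) ≤ J} ≤
        ENNReal.ofReal (C * (M : ℝ) ^ (2 * l) / (M : ℝ) ^ (12 * J)) := by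
  obtain ⟨S, hS0, hS⟩ := exists_natCast_mul_pow_abs_scaledProj_le z (by lia : 0 < M) hδ.le
  set D := 2 * Real.pi ^ 2 * (‖z 0‖ + ‖z 1‖) / (|areaForm (z 0) (z 1)| * δ)
  refine ⟨(3 * S) ^ 2 * (D + 1), by positivity, fun l J => ?_⟩
  refine (volume_farCount_le_le_of_abs_scaledProj_le (by lia) hz hδ
    (fun θ x i hx => hS l θ x i (hδ.le.trans hx)) (24 * J) J).trans (ENNReal.ofReal_le_ofReal ?_)
  have hbox : 2 * ((S * M ^ l : ℕ) : ℝ) + 1 ≤ 3 * S * (M : ℝ) ^ l := by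
    have hone : (1 : ℝ) ≤ (S * M ^ l : ℕ) := by exact_mod_cast Nat.succ_le_of_lt (by positivity)
    push_cast at hone ⊢
    linarith
  have hcard := four_mul_sq_pow_mul_pow_le hM J
  rw [mul_assoc ((2 * ((S * M ^ l : ℕ) : ℝ) + 1) ^ 2)]
  calc _ ≤ (3 * S * (M : ℝ) ^ l) ^ 2 * (M : ℝ) ^ (12 * J) * ((D + 1) / (M : ℝ) ^ (24 * J)) := by
        gcongr
        exact le_add_of_nonneg_right zero_le_one
    _ = _ := by
        rw [show 24 * J = 12 * J + 12 * J by ring, pow_add, pow_mul' (M : ℝ) 2 l]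
        field_simp

end NearOrbit

section Decay

theorem norm_exp_mul_I_add_exp_mul_I (a b : ℝ) :
    ‖Complex.exp (a * Complex.I) + Complex.exp (b * Complex.I)‖ = 2 * |Real.cos ((a - b) / 2)| := by
  have hfactor : Complex.exp (a * Complex.I) + Complex.exp (b * Complex.I) =
      Complex.exp (((a + b) / 2 : ℝ) * Complex.I) * (2 * (Real.cos ((a - b) / 2) : ℂ)) := by
    rw [Complex.ofReal_cos, Complex.two_cos, mul_add, ← Complex.exp_add, ← Complex.exp_add]
    congr 2 <;> push_cast <;> ring
  rw [hfactor, norm_mul, Complex.norm_exp_ofReal_mul_I, one_mul, norm_mul, Complex.norm_real,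
    Complex.norm_ofNat, Real.norm_eq_abs]

theorem abs_cos_mul_pi_le {γ s : ℝ} (hγ : 0 ≤ γ) (hs : γ ≤ |s - round s|) :
    |Real.cos (Real.pi * s)| ≤ Real.cos (Real.pi * γ) := by
  have hhalf : Real.pi * |s - round s| ≤ Real.pi / 2 := by
    linarith [mul_le_mul_of_nonneg_left (abs_sub_round s) Real.pi_nonneg]
  have hperiod : |Real.cos (Real.pi * s)| = |Real.cos (Real.pi * |s - round s|)| := by
    rw [← abs_of_pos Real.pi_pos, ← abs_mul, Real.cos_abs, abs_of_pos Real.pi_pos, mul_sub,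
      mul_comm Real.pi (round s : ℝ), Real.cos_sub_int_mul_pi]
    simp [abs_mul]
  rw [hperiod, abs_of_nonneg (Real.cos_nonneg_of_mem_Icc
    ⟨by linarith [Real.pi_pos, mul_nonneg Real.pi_nonneg (abs_nonneg (s - round s))], hhalf⟩)]
  exact Real.cos_le_cos_of_nonneg_of_le_pi (by positivity) (by linarith [Real.pi_pos])
    (by gcongr)

/-- A bound for `‖meanExp t u‖` when two of the phases `u * t j / (2 * π)` differ by at least
`1 / (2 * M)` modulo `1`: those two terms then sum to at most `2 * cos (π / (2 * M))`. -/
noncomputable def farFactor (M : ℕ) : ℝ := (M - 2 + 2 * Real.cos (Real.pi * (1 / (2 * M)))) / M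

variable {M : ℕ}

theorem farFactor_pos (hM : 2 ≤ M) : 0 < farFactor M := by
  have hM2 : (2 : ℝ) ≤ M := by exact_mod_cast hM
  have hangle : Real.pi * (1 / (2 * (M : ℝ))) < Real.pi / 2 := by
    rw [div_eq_mul_one_div Real.pi 2]
    gcongr
    linarith
  have hangle0 : 0 ≤ Real.pi * (1 / (2 * (M : ℝ))) := by positivity
  have hcos : 0 < Real.cos (Real.pi * (1 / (2 * (M : ℝ)))) :=
    Real.cos_pos_of_mem_Ioo ⟨by linarith [Real.pi_pos], hangle⟩
  exact div_pos (by linarith) (by linarith)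

theorem farFactor_lt_one (hM : 0 < M) : farFactor M < 1 := by
  have hM1 : (1 : ℝ) ≤ M := by exact_mod_cast hM
  have hcos : Real.cos (Real.pi * (1 / (2 * (M : ℝ)))) < 1 := by
    refine (Real.cos_lt_cos_of_nonneg_of_le_pi le_rfl ?_ (by positivity)).trans_eq Real.cos_zero
    refine mul_le_of_le_one_right Real.pi_nonneg ?_
    rw [div_le_one (by positivity)]
    linarith
  rw [farFactor, div_lt_one (by positivity)]
  linarith

theorem norm_meanExp_le_farFactor {t : Fin M → ℝ} {i j : Fin M} (hij : i ≠ j) {u : ℝ}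
    (hu : 1 / (2 * (M : ℝ)) ≤
      |u * (t j - t i) / (2 * Real.pi) - round (u * (t j - t i) / (2 * Real.pi))|) :
    ‖meanExp t u‖ ≤ farFactor M := by
  have hji : j ∈ Finset.univ.erase i := Finset.mem_erase.2 ⟨hij.symm, Finset.mem_univ j⟩
  have hpair : ‖Complex.exp ((u * t j : ℝ) * Complex.I) + Complex.exp ((u * t i : ℝ) * Complex.I)‖ ≤
      2 * Real.cos (Real.pi * (1 / (2 * M))) := by
    rw [norm_exp_mul_I_add_exp_mul_I]
    have hphase : (u * t j - u * t i) / 2 = Real.pi * (u * (t j - t i) / (2 * Real.pi)) := by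
      field_simp
    rw [hphase]
    gcongr
    exact abs_cos_mul_pi_le (by positivity) hu
  have hcard : (((Finset.univ.erase i).erase j).card : ℝ) = M - 2 := by
    have h := Finset.card_erase_add_one hji
    have h' := Finset.card_erase_add_one (Finset.mem_univ i)
    rw [Finset.card_univ, Fintype.card_fin] at h'
    rw [eq_sub_iff_add_eq]
    exact_mod_cast (by lia : ((Finset.univ.erase i).erase j).card + 2 = M)
  have hrest : ‖∑ k ∈ (Finset.univ.erase i).erase j, Complex.exp ((u * t k : ℝ) * Complex.I)‖ ≤
      M - 2 := by
    refine (norm_sum_le _ _).trans_eq ?_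
    simp_rw [Complex.norm_exp_ofReal_mul_I]
    rw [Finset.sum_const, nsmul_one, hcard]
  rw [meanExp, norm_mul, norm_div, norm_one, Complex.norm_natCast, one_div_mul_eq_div, farFactor,
    ← Finset.sum_erase_add _ _ (Finset.mem_univ i), ← Finset.sum_erase_add _ _ hji, add_assoc]
  gcongr
  exact (norm_add_le _ _).trans (add_le_add hrest hpair)

theorem norm_rieszProd_le_farFactor_pow (hM : 2 ≤ M) {d : ℕ} {t : Fin M → ℝ} {i₀ : Fin M}
    {i : Fin d → Fin M} (hi : ∀ e, i₀ ≠ i e) {y : ℝ} {r J : ℕ}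
    (hfar : J ≤ farCount M (fun e => M * y * (t (i e) - t i₀) / (2 * Real.pi)) r) :
    ‖rieszProd t r y‖ ≤ farFactor M ^ J := by
  classical
  set v : Fin d → ℝ := fun e => M * y * (t (i e) - t i₀) / (2 * Real.pi) with hv
  have hfactor : ∀ m ∈ (Finset.range r).filter (IsFar M v),
      ‖meanExp t ((M : ℝ) ^ (m + 1) * y)‖ ≤ farFactor M := fun m hm => by
    obtain ⟨e, he⟩ := (Finset.mem_filter.1 hm).2
    refine norm_meanExp_le_farFactor (hi e) ?_
    rwa [show (M : ℝ) ^ (m + 1) * y * (t (i e) - t i₀) / (2 * Real.pi) = (M : ℝ) ^ m * v e by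
      rw [hv]; ring]
  rw [rieszProd, norm_prod, ← Finset.prod_filter_mul_prod_filter_not (Finset.range r) (IsFar M v)]
  calc _ ≤ ∏ m ∈ (Finset.range r).filter (IsFar M v), ‖meanExp t ((M : ℝ) ^ (m + 1) * y)‖ :=
        mul_le_of_le_one_right (Finset.prod_nonneg fun _ _ => norm_nonneg _)
          (Finset.prod_le_one (fun _ _ => norm_nonneg _) fun _ _ => norm_meanExp_le_one _ _)
    _ ≤ ∏ _m ∈ (Finset.range r).filter (IsFar M v), farFactor M :=
        Finset.prod_le_prod (fun _ _ => norm_nonneg _) hfactor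
    _ = farFactor M ^ ((Finset.range r).filter (IsFar M v)).card := Finset.prod_const _
    _ ≤ farFactor M ^ J :=
        pow_le_pow_of_le_one (farFactor_pos hM).le (farFactor_lt_one (by lia)).le
          hfar

end Decay

section EnergyGrowth

variable {M A c l s : ℕ} {T W B₀ δ : ℝ}

theorem inv_pow_le_half_derivBound (hM : 0 < M) (hT : 0 ≤ T) (hW : 0 < W)
    (hA : 2 * (M * (1 + T) ^ M) ≤ W ^ A) : (W ^ (A + M))⁻¹ ≤ derivBound M T (1 / W) / 2 := by
  calc (W ^ (A + M))⁻¹ = (W ^ M)⁻¹ * (W ^ A)⁻¹ := by rw [add_comm, pow_add, mul_inv]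
    _ ≤ (W ^ M)⁻¹ * (2 * (M * (1 + T) ^ M))⁻¹ := by gcongr
    _ = derivBound M T (1 / W) / 2 := by
        rw [derivBound, one_div, inv_pow]
        field_simp

theorem inv_pow_le_half_derivBound_mul_pow (hM : 0 < M) (hT : 0 ≤ T) (hW : 0 < W) (hδ : 0 < δ)
    (hA : 2 * (M * (1 + T) ^ M) ≤ W ^ A) (hAδ : 4 / δ ≤ W ^ A) :
    (W ^ (A + M + (A + c) * M))⁻¹ ≤
      derivBound M T (1 / W) / 2 * (δ / (4 * W ^ c)) ^ M := by
  have hscale : (W ^ (A + c))⁻¹ ≤ δ / (4 * W ^ c) := by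
    calc (W ^ (A + c))⁻¹ = (W ^ A)⁻¹ * (W ^ c)⁻¹ := by rw [pow_add, mul_inv]
      _ ≤ (4 / δ)⁻¹ * (W ^ c)⁻¹ := by gcongr
      _ = δ / (4 * W ^ c) := by rw [inv_div, div_mul_eq_div_div, div_eq_mul_inv (δ / 4)]
  rw [pow_add, pow_mul, mul_inv, ← inv_pow (W ^ (A + c))]
  gcongr
  · exact (half_pos (derivBound_pos hM hT (by positivity))).le
  · exact inv_pow_le_half_derivBound hM hT hW hA

/-- The exponent `A` turns all the constants that enter the choice of parameters in
`exists_lt_rieszEnergy_of_norm_rieszProd_le` into powers of `W`. -/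
structure AbsorbsConstants (M : ℕ) (T δ B₀ : ℝ) (A : ℕ) (W : ℝ) : Prop where
  derivBound_le : 2 * (M * (1 + T) ^ M) ≤ W ^ A
  four_div_le : 4 / δ ≤ W ^ A
  energy_lt : 16 * B₀ / δ < W ^ A
  count_le : 4 * T ^ M * (M * (1 + T) ^ M) * δ ≤ W ^ A
  measure_le : 16 * 3 ^ M * B₀ / δ ≤ W ^ A

theorem exists_absorbsConstants (hM : 2 ≤ M) (T δ B₀ : ℝ) :
    ∃ A, ∀ s, 1 ≤ s → AbsorbsConstants M T δ B₀ A ((M : ℝ) ^ s) := by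
  have hM1 : (1 : ℝ) < M := by exact_mod_cast hM
  set X := max (max (max (2 * (M * (1 + T) ^ M)) (4 / δ)) (max (16 * B₀ / δ)
    (4 * T ^ M * (M * (1 + T) ^ M) * δ))) (16 * 3 ^ M * B₀ / δ) with hX
  obtain ⟨A, hA⟩ := pow_unbounded_of_one_lt X hM1
  refine ⟨A, fun s hs => ?_⟩
  have hAs : X < ((M : ℝ) ^ s) ^ A := hA.trans_le (by
    rw [← pow_mul]
    exact pow_le_pow_right₀ hM1.le (Nat.le_mul_of_pos_left A hs))
  simp only [hX, max_lt_iff] at hAs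
  obtain ⟨⟨⟨h₁, h₂⟩, h₃, h₄⟩, h₅⟩ := hAs
  exact ⟨h₁.le, h₂.le, h₃, h₄.le, h₅.le⟩

namespace AbsorbsConstants

theorem four_mul_le (h : AbsorbsConstants M T δ B₀ A W) (hW : 0 ≤ W) (hδ : 0 < δ) (hB : 0 ≤ B₀) :
    4 * (B₀ * W) ≤ δ * W ^ (A + 1) := by
  have henergy : 4 * B₀ ≤ W ^ A * δ := by linarith [(div_lt_iff₀ hδ).1 h.energy_lt]
  calc 4 * (B₀ * W) = 4 * B₀ * W := by ring
    _ ≤ W ^ A * δ * W := by gcongr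
    _ = δ * W ^ (A + 1) := by ring

theorem two_mul_le (h : AbsorbsConstants M T δ B₀ A W) (hM : 0 < M) (hT : 0 < T) (hW : 0 < W) :
    2 * (δ * W ^ (A + 1)) ≤ W ^ (2 * A + 1 + M) * (derivBound M T (1 / W) / (2 * T ^ M)) := by
  have hfactor : W ^ (2 * A + 1 + M) * (derivBound M T (1 / W) / (2 * T ^ M)) =
      W ^ A * W ^ (A + 1) / (2 * T ^ M * (M * (1 + T) ^ M)) := by
    rw [derivBound, one_div, inv_pow]
    field_simp
    ring
  rw [hfactor, le_div_iff₀ (by positivity)]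
  calc _ = 4 * T ^ M * (M * (1 + T) ^ M) * δ * W ^ (A + 1) := by ring
    _ ≤ W ^ A * W ^ (A + 1) := mul_le_mul_of_nonneg_right h.count_le (by positivity)

theorem mul_sq_le (h : AbsorbsConstants M T δ B₀ A W) (hW : 1 ≤ W) (hδ : 0 < δ) (hB : 0 ≤ B₀)
    (hl : l ≤ W ^ (A + 1)) :
    l * ((W ^ (2 * A + 1 + M) + 1) * (3 ^ M * (8 * ((W ^ (3 * A + M + 2))⁻¹) ^ 2 * (B₀ * W)))) ≤
      δ * W ^ (A + 1) := by
  have hcount : W ^ (2 * A + 1 + M) + 1 ≤ 2 * W ^ (2 * A + 1 + M) := by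
    linarith [one_le_pow₀ hW (n := 2 * A + 1 + M)]
  have hsq : ((W ^ (3 * A + M + 2))⁻¹) ^ 2 ≤ (W ^ (3 * A + M + 2))⁻¹ :=
    pow_le_of_le_one (by positivity) (inv_le_one_of_one_le₀ (one_le_pow₀ hW)) two_ne_zero
  calc _ ≤ W ^ (A + 1) * (2 * W ^ (2 * A + 1 + M) *
          (3 ^ M * (8 * (W ^ (3 * A + M + 2))⁻¹ * (B₀ * W)))) := by gcongr
    _ = 16 * 3 ^ M * B₀ / δ * (δ * W) := by
        field_simp
        ring
    _ ≤ W ^ A * (δ * W) := mul_le_mul_of_nonneg_right h.measure_le (by positivity)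
    _ = δ * W ^ (A + 1) := by ring

theorem sixteen_mul_lt (h : AbsorbsConstants M T δ B₀ A W) (hM : 0 < M) (hT : 0 ≤ T) (hW : 0 < W)
    (hδ : 0 < δ) (c k : ℕ) :
    16 * (B₀ * W) < W ^ (A + 1 + (A + M + (A + c) * M) * k) *
      ((derivBound M T (1 / W) / 2 * (δ / (4 * W ^ c)) ^ M) ^ k * δ) := by
  calc 16 * (B₀ * W) = 16 * B₀ / δ * (δ * W) := by field_simp
    _ < W ^ A * (δ * W) := mul_lt_mul_of_pos_right h.energy_lt (by positivity)
    _ = W ^ (A + 1 + (A + M + (A + c) * M) * k) * (((W ^ (A + M + (A + c) * M))⁻¹) ^ k * δ) := by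
        rw [pow_add _ (A + 1), pow_mul W _ k, inv_pow]
        field_simp
        ring
    _ ≤ _ := by
        gcongr
        exact inv_pow_le_half_derivBound_mul_pow hM hT hW hδ h.derivBound_le h.four_div_le

end AbsorbsConstants

theorem add_le_pow_add_add_one (hM : 2 ≤ M) {x y a b : ℕ} (hx : x ≤ M ^ a) (hy : y ≤ M ^ b) :
    x + y ≤ M ^ (a + b + 1) :=
  calc x + y ≤ M ^ (a + b) + M ^ (a + b) :=
        add_le_add (hx.trans (Nat.pow_le_pow_right (by lia) (Nat.le_add_right a b)))
          (hy.trans (Nat.pow_le_pow_right (by lia) (Nat.le_add_left b a)))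
    _ = M ^ (a + b) * 2 := by ring
    _ ≤ M ^ (a + b + 1) := Nat.mul_le_mul_left _ hM

theorem exists_lt_rieszEnergy_of_norm_rieszProd_le (hM : 2 ≤ M) (hT1 : 1 ≤ T) (hδ : 0 < δ)
    (hTδ : 4 * T * δ ≤ 1) (hB : 0 ≤ B₀) :
    ∃ a d : ℕ, ∀ c : ℕ, ∃ p : ℕ, ∀ s, 1 ≤ s → ∀ (t : Fin M → ℝ) (i₀ : Fin M),
      (∀ j, |t j| ≤ T) → (∀ j ≠ i₀, 1 / (M : ℝ) ^ s ≤ |t i₀ - t j|) →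
      (∀ y, δ < y → y ≤ δ * (M : ℝ) ^ (a * s) →
        ‖rieszProd t (c * s) y‖ ≤ (((M : ℝ) ^ s) ^ d)⁻¹) →
      ∃ n ≤ M ^ (p * s ^ 2), B₀ * (M : ℝ) ^ s < rieszEnergy t δ n := by
  obtain ⟨A, hA⟩ := exists_absorbsConstants hM T δ B₀
  refine ⟨A + 1, 3 * A + M + 2, fun c => ?_⟩
  set g := A + M + (A + (A + 1 + c)) * M
  refine ⟨2 * (A + 1) + 2 * (A + 1) * g + c + 1, fun s hs t i₀ hT hsep hdecay => ?_⟩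
  have hM0 : 0 < M := by lia
  have hW1 : (1 : ℝ) ≤ (M : ℝ) ^ s := one_le_pow₀ (by exact_mod_cast hM0)
  have hW0 : (0 : ℝ) < (M : ℝ) ^ s := zero_lt_one.trans_le hW1
  have hl : (((A + 1) * s : ℕ) : ℝ) ≤ ((M : ℝ) ^ s) ^ (A + 1) := by
    rw [← pow_mul']
    exact_mod_cast (Nat.lt_pow_self hM).le
  have hscale : (M : ℝ) ^ ((A + 1) * s) = ((M : ℝ) ^ s) ^ (A + 1) := pow_mul' _ _ _
  obtain ⟨n, hn, hlt⟩ := exists_lt_rieszEnergy (l := (A + 1) * s) (r := c * s)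
    (m := (M ^ s) ^ (2 * A + 1 + M)) (h := δ / (4 * ((M : ℝ) ^ s) ^ (A + 1 + c)))
    (B := B₀ * (M : ℝ) ^ s) (Q := (M ^ s) ^ (A + 1 + g * (2 * ((A + 1) * s))))
    hM hT1 hT (τ := 1 / (M : ℝ) ^ s) (by positivity) (div_le_one_of_le₀ hW1 hW0.le) hsep hδ hTδ
    hdecay
    (by rw [hscale]; push_cast; exact (hA s hs).two_mul_le hM0 (by linarith) hW0)
    (by rw [← add_mul, pow_mul'])
    (by rw [hscale]; exact (hA s hs).four_mul_le hW0.le hδ hB)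
    (by rw [hscale]; push_cast; exact_mod_cast (hA s hs).mul_sq_le hW1 hδ hB hl)
    (by push_cast; exact (hA s hs).sixteen_mul_lt hM0 (by linarith) hW0 hδ (A + 1 + c) _)
  have hQ : (A + 1) * s * (M ^ s) ^ (A + 1 + g * (2 * ((A + 1) * s))) ≤
      M ^ ((A + 1) * s + s * (A + 1 + g * (2 * ((A + 1) * s)))) := by
    rw [pow_add M ((A + 1) * s), pow_mul M s]
    exact Nat.mul_le_mul_right _ (Nat.lt_pow_self hM).le
  refine ⟨n, hn.trans ((add_le_pow_add_add_one hM hQ (Nat.lt_pow_self hM).le).trans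
    (Nat.pow_le_pow_right hM0 ?_)), hlt⟩
  nlinarith [Nat.mul_le_mul_left (2 * (A + 1) + c) (Nat.le_self_pow two_ne_zero s),
    Nat.one_le_pow 2 s hs]

end EnergyGrowth

section ShadowDecay

variable {M n N p s : ℕ} {t : Fin M → ℝ} {T R δ : ℝ}

theorem one_sub_one_div_pow_mul_le_inv_pow (hM : 0 < M) {D : ℕ} (hD : 1 ≤ D) :
    (1 - 1 / (D : ℝ)) ^ (D * (s * M)) ≤ ((M : ℝ) ^ s)⁻¹ := by
  have hbase : 0 ≤ 1 - 1 / (D : ℝ) :=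
    sub_nonneg.2 (div_le_one_of_le₀ (by exact_mod_cast hD) (by positivity))
  have hexp : (1 - 1 / (D : ℝ)) ^ D ≤ Real.exp (-1) :=
    Real.one_sub_div_pow_le_exp_neg (by exact_mod_cast hD)
  have hMexp : Real.exp (-1) ^ M ≤ (M : ℝ)⁻¹ := by
    rw [← Real.exp_nat_mul, mul_neg_one, Real.exp_neg]
    gcongr
    linarith [Real.add_one_le_exp (M : ℝ)]
  calc (1 - 1 / (D : ℝ)) ^ (D * (s * M)) = (((1 - 1 / (D : ℝ)) ^ D) ^ M) ^ s := by
        rw [← pow_mul, ← pow_mul, mul_comm s M, ← mul_assoc]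
    _ ≤ ((M : ℝ)⁻¹) ^ s := by
        gcongr
        exact (pow_le_pow_left₀ (pow_nonneg hbase D) hexp M).trans hMexp
    _ = ((M : ℝ) ^ s)⁻¹ := inv_pow _ _

theorem volume_shadow_le_of_lt_rieszEnergy (hM : 2 ≤ M) (hR1 : 1 ≤ R)
    (hR : ∀ j, R / M + |t j| ≤ R) (hδ : 0 < δ) (hδ4 : δ ≤ 1 / 4) (hs : 1 ≤ s) (hN : 1 ≤ N)
    (hn : n ≤ N)
    (henergy : 20 * intCauchySum * (4 * R) / δ * (M : ℝ) ^ s < rieszEnergy t δ n) :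
    volume (shadow t R (2 * M * M ^ s * N * (s * M) * N)) ≤
      ENNReal.ofReal (8 * R / (M : ℝ) ^ s) := by
  have hM0 : 0 < M := by lia
  have hcauchy : 0 < 20 * intCauchySum := by linarith [one_le_intCauchySum]
  have hoverlap : ENNReal.ofReal (4 * R * (M ^ s : ℕ)) < ∫⁻ x, (overlap t R n x : ℝ≥0∞) ^ 2 := by
    refine lt_of_mul_lt_mul_left' (a := ENNReal.ofReal (20 * intCauchySum)) ?_
    rw [← ENNReal.ofReal_mul hcauchy.le]
    refine (ENNReal.ofReal_lt_ofReal_iff_of_nonneg (by positivity) |>.2 ?_).trans_le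
      (mul_rieszEnergy_le_lintegral_overlap_sq hM0 t hR1 hδ.le hδ4 n)
    calc 20 * intCauchySum * (4 * R * (M ^ s : ℕ))
        = δ * (20 * intCauchySum * (4 * R) / δ * (M : ℝ) ^ s) := by
          push_cast
          field_simp
      _ < δ * rieszEnergy t δ n := by gcongr
  refine (volume_shadow_le_of_lt_lintegral_overlap_sq hM0 (by linarith) hR
    (hM.trans (Nat.le_self_pow (by lia) M)) hn hoverlap _).trans (ENNReal.ofReal_le_ofReal ?_)
  have hdecay := one_sub_one_div_pow_mul_le_inv_pow (s := s) hM0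
    (D := 2 * M * M ^ s * N) (Nat.one_le_iff_ne_zero.2 (by positivity))
  push_cast at hdecay ⊢
  calc _ ≤ 6 * R / (M : ℝ) ^ s + 2 * R * ((M : ℝ) ^ s)⁻¹ := by gcongr
    _ = 8 * R / (M : ℝ) ^ s := by ring

theorem two_mul_pow_mul_pow_le (hM : 2 ≤ M) (hs : 1 ≤ s) :
    2 * M * M ^ s * M ^ (p * s ^ 2) * (s * M) * M ^ (p * s ^ 2) ≤ M ^ ((2 * p + 5) * s ^ 2) :=
  calc _ ≤ M * M * M ^ s * M ^ (p * s ^ 2) * (M ^ s * M) * M ^ (p * s ^ 2) := by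
        gcongr
        exact (Nat.lt_pow_self hM).le
    _ = M ^ (3 + 2 * s + 2 * p * s ^ 2) := by ring
    _ ≤ M ^ ((2 * p + 5) * s ^ 2) := by
        refine Nat.pow_le_pow_right (by lia) ?_
        nlinarith [Nat.le_self_pow two_ne_zero s]

theorem exists_farFactor_pow_mul_le (hM : 2 ≤ M) (a d : ℕ) :
    ∃ b, 2 * a + 1 ≤ 12 * b ∧ ∀ s, farFactor M ^ (b * s) ≤ (((M : ℝ) ^ s) ^ d)⁻¹ := by
  have hM0 : (0 : ℝ) < M := by positivity
  obtain ⟨b, hb⟩ := exists_pow_lt_of_lt_one (inv_pos.2 (pow_pos hM0 d))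
    (farFactor_lt_one (M := M) (by lia))
  have hpos := (farFactor_pos hM).le
  refine ⟨b + (a + 1), by lia, fun s => ?_⟩
  calc farFactor M ^ ((b + (a + 1)) * s) = (farFactor M ^ (b + (a + 1))) ^ s := pow_mul _ _ _
    _ ≤ (((M : ℝ) ^ d)⁻¹) ^ s := by
        gcongr
        exact (pow_le_pow_of_le_one hpos (farFactor_lt_one (by lia)).le
          (Nat.le_add_right b _)).trans hb.le
    _ = (((M : ℝ) ^ s) ^ d)⁻¹ := by rw [inv_pow, pow_right_comm]

theorem exists_volume_shadow_le_of_le_farCount (hM : 2 ≤ M) (hT1 : 1 ≤ T) (hR1 : 1 ≤ R)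
    (hδ : 0 < δ) (hTδ : 4 * T * δ ≤ 1) :
    ∃ a b p : ℕ, 2 * a + 1 ≤ 12 * b ∧ ∀ s, 1 ≤ s →
      ∀ {t : Fin M → ℝ} {i₀ : Fin M} {d : ℕ} {i : Fin d → Fin M},
      (∀ j, |t j| ≤ T) → (∀ j, R / M + |t j| ≤ R) → (∀ e, i₀ ≠ i e) →
      (∀ j ≠ i₀, 1 / (M : ℝ) ^ s ≤ |t i₀ - t j|) →
      (∀ x, δ ≤ x → x ≤ δ * (M : ℝ) ^ (a * s + 1) →
        b * s ≤ farCount M (fun e => x * (t (i e) - t i₀) / (2 * Real.pi)) (24 * (b * s))) →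
      ∀ n, M ^ (p * s ^ 2) ≤ n →
        volume (shadow t R n) ≤ ENNReal.ofReal (8 * R / (M : ℝ) ^ s) := by
  have hM1 : (1 : ℝ) ≤ M := by exact_mod_cast (by lia : 1 ≤ M)
  have hB : 0 ≤ 20 * intCauchySum * (4 * R) / δ := by
    have := one_le_intCauchySum
    positivity
  obtain ⟨a, d', hgrowth⟩ := exists_lt_rieszEnergy_of_norm_rieszProd_le hM hT1 hδ hTδ hB
  obtain ⟨b, hab, hb⟩ := exists_farFactor_pow_mul_le hM a d'
  obtain ⟨p, hp⟩ := hgrowth (24 * b)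
  refine ⟨a, b, 2 * p + 5, hab, fun s hs t i₀ d i hT hR hi hsep hfar n hn => ?_⟩
  obtain ⟨m, hm, henergy⟩ := hp s hs t i₀ hT hsep fun y hy hy' => by
    rw [mul_assoc]
    refine (norm_rieszProd_le_farFactor_pow hM hi (hfar (M * y) ?_ ?_)).trans (hb s)
    · exact hy.le.trans (le_mul_of_one_le_left (hδ.le.trans hy.le) hM1)
    · calc M * y ≤ M * (δ * (M : ℝ) ^ (a * s)) := by gcongr
        _ = δ * (M : ℝ) ^ (a * s + 1) := by ring
  refine (measure_mono (antitone_shadow (by lia) hR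
    ((two_mul_pow_mul_pow_le hM hs).trans hn))).trans
    (volume_shadow_le_of_lt_rieszEnergy hM hR1 hR hδ ?_ hs (Nat.one_le_pow _ _ (by lia)) hm henergy)
  nlinarith

end ShadowDecay

section Noncollinear

theorem areaForm_self (z : ℂ) : areaForm z z = 0 := by
  rw [areaForm]
  ring

theorem areaForm_zero_left (z : ℂ) : areaForm 0 z = 0 := by
  simp [areaForm]

theorem areaForm_zero_right (z : ℂ) : areaForm z 0 = 0 := by
  simp [areaForm]

theorem exists_eq_smul_of_areaForm_eq_zero {z w : ℂ} (hz : z ≠ 0) (h : areaForm z w = 0) :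
    ∃ r : ℝ, w = r • z := by
  have him : (w / z).im = 0 := by
    rw [Complex.div_im, ← sub_div]
    rw [areaForm] at h
    exact div_eq_zero_iff.2 (Or.inl (by linarith))
  have hre : w / z = ((w / z).re : ℂ) := Complex.ext rfl him
  exact ⟨(w / z).re, by rw [Complex.real_smul, ← hre, div_mul_cancel₀ w hz]⟩

theorem exists_areaForm_ne_zero_of_not_collinear {ι : Type*} {c : ι → ℂ}
    (hcol : ¬Collinear ℝ (Set.range c)) :
    ∃ i₀ i₁ i₂, areaForm (c i₁ - c i₀) (c i₂ - c i₀) ≠ 0 := by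
  by_contra! harea
  rcases (Set.range c).subsingleton_or_nontrivial with hsub | ⟨_, ⟨i₀, rfl⟩, _, ⟨i₁, rfl⟩, hne⟩
  · rcases hsub.eq_empty_or_singleton with h | ⟨z, h⟩
    · exact hcol (h ▸ collinear_empty ℝ ℂ)
    · exact hcol (h ▸ collinear_singleton ℝ z)
  · refine hcol ((collinear_iff_of_mem (Set.mem_range_self i₀)).2 ⟨c i₁ - c i₀, ?_⟩)
    rintro _ ⟨i₂, rfl⟩
    obtain ⟨r, hr⟩ :=
      exists_eq_smul_of_areaForm_eq_zero (sub_ne_zero.2 hne.symm) (harea i₀ i₁ i₂)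
    exact ⟨r, by rw [vadd_eq_add, ← hr, sub_add_cancel]⟩

theorem exists_ne_areaForm_ne_zero_of_not_collinear {ι : Type*} {c : ι → ℂ}
    (hcol : ¬Collinear ℝ (Set.range c)) :
    ∃ i₀ i₁ i₂, i₀ ≠ i₁ ∧ i₀ ≠ i₂ ∧ i₁ ≠ i₂ ∧ areaForm (c i₁ - c i₀) (c i₂ - c i₀) ≠ 0 := by
  obtain ⟨i₀, i₁, i₂, h⟩ := exists_areaForm_ne_zero_of_not_collinear hcol
  refine ⟨i₀, i₁, i₂, ?_, ?_, ?_, h⟩ <;> rintro rfl <;>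
    simp [areaForm_self, areaForm_zero_left, areaForm_zero_right] at h

theorem two_lt_card_of_not_collinear {ι : Type*} [Fintype ι] {c : ι → ℂ}
    (hcol : ¬Collinear ℝ (Set.range c)) : 2 < Fintype.card ι := by
  obtain ⟨i₀, i₁, i₂, h₀₁, h₀₂, h₁₂, -⟩ := exists_ne_areaForm_ne_zero_of_not_collinear hcol
  exact Fintype.two_lt_card_iff.2 ⟨i₀, i₁, i₂, h₀₁, h₀₂, h₁₂⟩

end Noncollinear

section ExceptionalDirections

variable {M : ℕ} {c : Fin M → ℂ} {T R δ : ℝ}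

theorem exists_volume_abs_dirProj_sub_lt_le {ι : Type*} [Finite ι] {c : ι → ℂ}
    (hinj : Function.Injective c) (i₀ : ι) :
    ∃ C, 0 ≤ C ∧ ∀ τ, 0 ≤ τ →
      volume {θ | θ ∈ Set.Icc 0 Real.pi ∧ ∃ j ≠ i₀, |dirProj θ (c i₀ - c j)| < τ} ≤
        ENNReal.ofReal (C * τ) := by
  have := Fintype.ofFinite ι
  refine ⟨∑ j, Real.pi * (2 / ‖c i₀ - c j‖), by positivity, fun τ hτ => ?_⟩
  set V : ι → Set ℝ := fun j => {θ | θ ∈ Set.Icc 0 Real.pi ∧ j ≠ i₀ ∧ |dirProj θ (c i₀ - c j)| < τ}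
  have hV : ∀ j, volume (V j) ≤ ENNReal.ofReal (Real.pi * (2 / ‖c i₀ - c j‖) * τ) := by
    intro j
    by_cases hj : j = i₀
    · simp [V, hj]
    · calc volume (V j) ≤ volume {θ | θ ∈ Set.Icc 0 Real.pi ∧ |dirProj θ (c i₀ - c j)| < τ} :=
            measure_mono fun θ hθ => ⟨hθ.1, hθ.2.2⟩
        _ ≤ ENNReal.ofReal (Real.pi * (2 * τ / ‖c i₀ - c j‖)) :=
            volume_abs_dirProj_lt_le (sub_ne_zero.2 fun h => hj (hinj h).symm) τ
        _ = ENNReal.ofReal (Real.pi * (2 / ‖c i₀ - c j‖) * τ) := by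
            congr 1
            ring
  calc volume {θ | θ ∈ Set.Icc 0 Real.pi ∧ ∃ j ≠ i₀, |dirProj θ (c i₀ - c j)| < τ}
      ≤ volume (⋃ j, V j) :=
        measure_mono fun θ ⟨hθ, j, hj, hlt⟩ => Set.mem_iUnion.2 ⟨j, hθ, hj, hlt⟩
    _ ≤ ∑ j, volume (V j) := measure_iUnion_fintype_le _ _
    _ ≤ ∑ j, ENNReal.ofReal (Real.pi * (2 / ‖c i₀ - c j‖) * τ) := Finset.sum_le_sum fun j _ => hV j
    _ = ENNReal.ofReal ((∑ j, Real.pi * (2 / ‖c i₀ - c j‖)) * τ) := by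
        rw [Finset.sum_mul, ENNReal.ofReal_sum_of_nonneg fun j _ => by positivity]

theorem exists_volume_shadow_dirProj_le (hM : 3 ≤ M) (hcol : ¬Collinear ℝ (Set.range c))
    (hinj : Function.Injective c) (hT1 : 1 ≤ T) (hT : ∀ j, ‖c j‖ ≤ T) (hR1 : 1 ≤ R)
    (hR : ∀ j, R / M + ‖c j‖ ≤ R) :
    ∃ (p : ℕ) (C : ℝ), 0 ≤ C ∧ ∀ s, 1 ≤ s →
      ∃ S : Set ℝ, volume S ≤ ENNReal.ofReal (C / (M : ℝ) ^ s) ∧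
        ∀ θ ∈ Set.Icc 0 Real.pi, θ ∉ S → ∀ n, M ^ (p * s ^ 2) ≤ n →
          volume (shadow (fun j => dirProj θ (c j)) R n) ≤
            ENNReal.ofReal (8 * R / (M : ℝ) ^ s) := by
  have hM1 : (1 : ℝ) ≤ M := by exact_mod_cast (by lia : 1 ≤ M)
  obtain ⟨i₀, i₁, i₂, h₁, h₂, -, harea⟩ := exists_ne_areaForm_ne_zero_of_not_collinear hcol
  obtain ⟨a, b, p, hab, hshadow⟩ := exists_volume_shadow_le_of_le_farCount (M := M) (T := T)
    (R := R) (δ := 1 / (4 * T)) (by lia) hT1 hR1 (by positivity)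
    (mul_one_div_cancel (by positivity)).le
  obtain ⟨C₁, hC₁, hvol₁⟩ := exists_volume_abs_dirProj_sub_lt_le hinj i₀
  obtain ⟨C₂, hC₂, hvol₂⟩ := exists_volume_farCount_le_le (M := M) (δ := 1 / (4 * T))
    (z := fun e => c (![i₁, i₂] e) - c i₀) hM harea (by positivity)
  refine ⟨p, C₁ + C₂, by positivity, fun s hs => ⟨_ ∪ _,
    (measure_union_le _ _).trans (add_le_add (hvol₁ (1 / (M : ℝ) ^ s) (by positivity))
      (hvol₂ (a * s) (b * s))) |>.trans ?_, fun θ hθ hθS n hn => ?_⟩⟩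
  · rw [← ENNReal.ofReal_add (by positivity) (by positivity), add_div, mul_one_div]
    refine ENNReal.ofReal_le_ofReal (add_le_add_right ?_ _)
    rw [div_le_div_iff₀ (by positivity) (by positivity), mul_assoc, ← pow_add]
    gcongr
    calc 2 * (a * s) + s = (2 * a + 1) * s := by ring
      _ ≤ 12 * b * s := Nat.mul_le_mul_right s hab
      _ = 12 * (b * s) := mul_assoc _ _ _
  · simp only [Set.mem_union, Set.mem_ofPred_eq, not_or, not_and, not_exists, not_lt, not_le] at hθS
    obtain ⟨hsep, hfar⟩ := hθS
    refine hshadow s hs (i₀ := i₀) (i := ![i₁, i₂])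
      (fun j => (abs_dirProj_le_norm θ _).trans (hT j))
      (fun j => (by grw [abs_dirProj_le_norm, hR])) (by simp [Fin.forall_fin_two, h₁, h₂])
      (fun j hj => ?_) (fun x hx hx' => ?_) n hn
    · simpa only [dirProj_sub] using hsep hθ j hj
    · simp only [← dirProj_sub]
      exact (hfar hθ x hx hx').le

end ExceptionalDirections

section FavardBound

theorem lintegral_le_mul_add_mul {α : Type*} [MeasurableSpace α] {μ : Measure α} {f : α → ℝ≥0∞}
    {S : Set α} {a b : ℝ≥0∞} (ha : ∀ᵐ x ∂μ, x ∉ S → f x ≤ a) (hb : ∀ x, f x ≤ b) :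
    ∫⁻ x, f x ∂μ ≤ a * μ Set.univ + b * μ S := by
  calc ∫⁻ x, f x ∂μ ≤ ∫⁻ x, a + (toMeasurable μ S).indicator (fun _ => b) x ∂μ := by
        refine lintegral_mono_ae (ha.mono fun x hx => ?_)
        by_cases hxS : x ∈ toMeasurable μ S
        · rw [Set.indicator_of_mem hxS]
          exact (hb x).trans le_add_self
        · exact (hx fun h => hxS (subset_toMeasurable μ S h)).trans le_self_add
    _ = a * μ Set.univ + b * μ S := by
        rw [lintegral_add_left measurable_const, lintegral_const,
          lintegral_indicator_const (measurableSet_toMeasurable μ S), measure_toMeasurable]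

theorem fav_le_add_mul {E : Set ℂ} {S : Set ℝ} {a b v : ℝ} (ha : 0 ≤ a) (hb : 0 ≤ b) (hv : 0 ≤ v)
    (hS : volume S ≤ ENNReal.ofReal v)
    (hgood : ∀ θ ∈ Set.Icc 0 Real.pi, θ ∉ S → volume (projDir θ E) ≤ ENNReal.ofReal a)
    (hbad : ∀ θ, volume (projDir θ E) ≤ ENNReal.ofReal b) : fav E ≤ a + b * v := by
  have hint : ∫ θ in (0 : ℝ)..Real.pi, (volume (projDir θ E)).toReal ≤ a * Real.pi + b * v := by
    rw [intervalIntegral.integral_of_le Real.pi_nonneg]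
    refine (Real.le_norm_self _).trans ((norm_integral_le_lintegral_norm _).trans
      (ENNReal.toReal_le_of_le_ofReal (by positivity) ?_))
    simp only [Real.norm_of_nonneg ENNReal.toReal_nonneg]
    calc ∫⁻ θ in Set.Ioc 0 Real.pi, ENNReal.ofReal (volume (projDir θ E)).toReal
        ≤ ∫⁻ θ in Set.Ioc 0 Real.pi, volume (projDir θ E) :=
          lintegral_mono fun θ => ENNReal.ofReal_toReal_le
      _ ≤ ENNReal.ofReal a * volume.restrict (Set.Ioc 0 Real.pi) Set.univ +
            ENNReal.ofReal b * volume.restrict (Set.Ioc 0 Real.pi) S :=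
          lintegral_le_mul_add_mul ((ae_restrict_iff' measurableSet_Ioc).2
            (.of_forall fun θ hθ => hgood θ (Set.Ioc_subset_Icc_self hθ))) hbad
      _ ≤ ENNReal.ofReal a * ENNReal.ofReal Real.pi + ENNReal.ofReal b * ENNReal.ofReal v := by
          gcongr
          · simp
          · exact (Measure.restrict_apply_le _ _).trans hS
      _ = ENNReal.ofReal (a * Real.pi + b * v) := by
          rw [ENNReal.ofReal_add (by positivity) (by positivity), ENNReal.ofReal_mul ha,
            ENNReal.ofReal_mul hb]
  calc fav E ≤ 1 / Real.pi * (a * Real.pi + b * v) := by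
        rw [fav]
        gcongr
    _ = a + b * v / Real.pi := by field_simp
    _ ≤ a + b * v := by
        gcongr
        exact div_le_self (by positivity) (by linarith [Real.pi_gt_three])

end FavardBound

section Generations

variable {M : ℕ} {c : Fin M → ℂ} {T : Fin M → ℂ → ℂ} {U : Set ℂ} {R : ℝ}

/-- The `n`-th generation `E_n` of the construction: the union of the images of `U` under all
`n`-fold compositions of the maps `T j`. -/
def generation (T : Fin M → ℂ → ℂ) (U : Set ℂ) (n : ℕ) : Set ℂ :=
  ⋃ w : Fin n → Fin M, iterImg T U (List.ofFn w)

theorem dirProj_div_natCast_add (θ : ℝ) (z w : ℂ) (M : ℕ) :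
    dirProj θ (z / M + w) = dirProj θ w + dirProj θ z / M := by
  simp only [dirProj_eq, Complex.add_re, Complex.add_im, Complex.div_natCast_re,
    Complex.div_natCast_im]
  ring

theorem abs_dirProj_sub_wordPoint_le (hT : ∀ j z, T j z = z / (M : ℂ) + c j)
    (hU : ∀ z ∈ U, ‖z‖ ≤ R) (θ : ℝ) {n : ℕ} (w : Fin n → Fin M) {z : ℂ}
    (hz : z ∈ iterImg T U (List.ofFn w)) :
    |dirProj θ z - wordPoint (fun j => dirProj θ (c j)) w| ≤ R / (M : ℝ) ^ n := by
  induction n generalizing z with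
  | zero =>
    rw [List.ofFn_zero, iterImg] at hz
    simpa [wordPoint] using (abs_dirProj_le_norm θ z).trans (hU z hz)
  | succ n ih =>
    cases w using Fin.consCases with
    | cons j w =>
      rw [List.ofFn_cons, iterImg] at hz
      obtain ⟨z', hz', rfl⟩ := hz
      rw [hT, dirProj_div_natCast_add, wordPoint_cons, add_sub_add_left_eq_sub, ← sub_div, abs_div,
        Nat.abs_cast, pow_succ, ← div_div]
      gcongr
      exact ih w hz'

theorem projDir_generation_subset_shadow (hT : ∀ j z, T j z = z / (M : ℂ) + c j)
    (hU : ∀ z ∈ U, ‖z‖ ≤ R) (θ : ℝ) (n : ℕ) :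
    projDir θ (generation T U n) ⊆ shadow (fun j => dirProj θ (c j)) R n := by
  rintro _ ⟨z, hz, rfl⟩
  obtain ⟨w, hw⟩ := Set.mem_iUnion.1 hz
  exact Finset.card_ne_zero_of_mem
    (mem_wordsNear.2 (abs_dirProj_sub_wordPoint_le hT hU θ w hw))

theorem exists_fav_generation_le_div_pow (hM : 3 ≤ M) (hcol : ¬Collinear ℝ (Set.range c))
    (hinj : Function.Injective c) (hT : ∀ j z, T j z = z / (M : ℂ) + c j)
    (hU : Bornology.IsBounded U) :
    ∃ (p : ℕ) (C : ℝ), 0 < C ∧ ∀ s n, M ^ (p * s ^ 2) ≤ n →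
      fav (generation T U n) ≤ C / (M : ℝ) ^ s := by
  obtain ⟨r, hr, hUr⟩ := hU.exists_pos_norm_le
  set K : ℝ := 1 + ∑ j, ‖c j‖ with hK
  set R : ℝ := 2 * K + r
  have hK1 : 1 ≤ K := le_add_of_nonneg_right (by positivity)
  have hcK : ∀ j, ‖c j‖ ≤ K := fun j =>
    (Finset.single_le_sum (fun j _ => norm_nonneg (c j)) (Finset.mem_univ j)).trans (by simp [hK])
  have hR1 : 1 ≤ R := by linarith
  have hR : ∀ j, R / M + ‖c j‖ ≤ R := fun j => by
    have : R / M ≤ R / 3 := by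
      gcongr
      exact_mod_cast hM
    linarith [hcK j]
  obtain ⟨p, C, hC, hshadow⟩ := exists_volume_shadow_dirProj_le hM hcol hinj hK1 hcK hR1 hR
  have hsubset := projDir_generation_subset_shadow (R := R) hT fun z hz =>
    (hUr z hz).trans (by linarith)
  have htriv : ∀ n θ, volume (projDir θ (generation T U n)) ≤ ENNReal.ofReal (2 * R) := fun n θ =>
    (measure_mono (hsubset θ n)).trans (volume_shadow_le (by lia)
      (fun j => by grw [abs_dirProj_le_norm, hR]) n)
  refine ⟨p, 8 * R + 2 * R * C, by positivity, fun s n hn => ?_⟩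
  rcases s.eq_zero_or_pos with rfl | hs
  · have := fav_le_add_mul (S := ∅) (a := 2 * R) (v := 0) (by positivity) (by positivity) le_rfl
      (by simp) (fun θ _ _ => htriv n θ) (htriv n)
    rw [pow_zero, div_one]
    linarith [show 0 ≤ 2 * R * C by positivity]
  · obtain ⟨S, hS, hgood⟩ := hshadow s hs
    calc fav (generation T U n) ≤ 8 * R / (M : ℝ) ^ s + 2 * R * (C / (M : ℝ) ^ s) :=
          fav_le_add_mul (by positivity) (by positivity) (by positivity) hS
            (fun θ hθ hθS => (measure_mono (hsubset θ n)).trans (hgood θ hθ hθS n hn)) (htriv n)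
      _ = (8 * R + 2 * R * C) / (M : ℝ) ^ s := by ring

end Generations

theorem exists_le_mul_exp_neg_mul_sqrt_log {M p : ℕ} (hM : 2 ≤ M) (hp : p ≠ 0) {f : ℕ → ℝ} {C : ℝ}
    (hC : 0 < C) (hf : ∀ s n, M ^ (p * s ^ 2) ≤ n → f n ≤ C / (M : ℝ) ^ s) :
    ∃ c' > (0 : ℝ), ∃ C' > (0 : ℝ), ∀ n, 1 ≤ n →
      f n ≤ C' * Real.exp (-c' * Real.sqrt (Real.log n)) := by
  have hlog : 0 < Real.log M := Real.log_pos (by exact_mod_cast hM)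
  have hM0 : (0 : ℝ) < M := by positivity
  refine ⟨Real.log M / Real.sqrt (p * Real.log M), by positivity, C * M, by positivity,
    fun n hn => ?_⟩
  set x := Real.sqrt (Real.log n) / Real.sqrt (p * Real.log M) with hx
  have hx2 : x ^ 2 * (p * Real.log M) = Real.log n := by
    rw [hx, div_pow, Real.sq_sqrt (Real.log_natCast_nonneg n), Real.sq_sqrt (by positivity)]
    field_simp
  have hx0 : 0 ≤ x := by positivity
  have hfloor : M ^ (p * ⌊x⌋₊ ^ 2) ≤ n := by
    have : Real.log ((M : ℝ) ^ (p * ⌊x⌋₊ ^ 2)) ≤ Real.log n := by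
      rw [Real.log_pow, ← hx2]
      push_cast
      calc (p : ℝ) * ⌊x⌋₊ ^ 2 * Real.log M = (⌊x⌋₊ : ℝ) ^ 2 * (p * Real.log M) := by ring
        _ ≤ x ^ 2 * (p * Real.log M) := by
            gcongr
            exact Nat.floor_le hx0
    exact_mod_cast (Real.log_le_log_iff (by positivity) (by exact_mod_cast hn)).1 this
  have hpow : ((M : ℝ) ^ ⌊x⌋₊)⁻¹ ≤ M * Real.exp (-(Real.log M * x)) := by
    calc ((M : ℝ) ^ ⌊x⌋₊)⁻¹ = Real.exp (-(Real.log M * ⌊x⌋₊)) := by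
          rw [Real.exp_neg, mul_comm, Real.exp_nat_mul, Real.exp_log hM0]
      _ ≤ Real.exp (Real.log M + -(Real.log M * x)) := by
          gcongr
          nlinarith [Nat.lt_floor_add_one x]
      _ = M * Real.exp (-(Real.log M * x)) := by rw [Real.exp_add, Real.exp_log hM0]
  calc f n ≤ C * ((M : ℝ) ^ ⌊x⌋₊)⁻¹ := (hf _ n hfloor).trans_eq (div_eq_mul_inv _ _)
    _ ≤ C * (M * Real.exp (-(Real.log M * x))) := by gcongr
    _ = C * M * Real.exp (-(Real.log M / Real.sqrt (p * Real.log M)) * Real.sqrt (Real.log n)) := by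
        rw [mul_assoc, hx]
        ring_nf

theorem injective_of_pairwise_disjoint_image {ι α β : Type*} {T : ι → α → β} {U : Set α}
    (hU : U.Nonempty) (hdisj : Pairwise fun i j => Disjoint (T i '' U) (T j '' U)) :
    Function.Injective T := by
  intro i j hij
  by_contra hne
  have hempty : Disjoint (T i '' U) (T j '' U) := hdisj hne
  rw [hij, disjoint_self] at hempty
  exact (hU.image (T j)).ne_empty hempty

end FavardLength

open FavardLength in
theorem favard_selfsimilar_sqrtlog_general
    (M : ℕ) (c : Fin M → ℂ) (hcol : ¬Collinear ℝ (Set.range c)) (hinj : Function.Injective c)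
    (T : Fin M → ℂ → ℂ) (hT : ∀ j z, T j z = z / (M : ℂ) + c j)
    (U : Set ℂ) (hUbdd : Bornology.IsBounded U) :
    ∃ c' > (0 : ℝ), ∃ C > (0 : ℝ), ∀ n : ℕ, 2 ≤ n →
      fav (⋃ w : Fin n → Fin M, iterImg T U (List.ofFn w)) ≤
        C * Real.exp (-c' * Real.sqrt (Real.log n)) := by
  have hM : 2 < M := by simpa only [Fintype.card_fin] using two_lt_card_of_not_collinear hcol
  obtain ⟨p, C, hC, hfav⟩ := exists_fav_generation_le_div_pow hM hcol hinj hT hUbdd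
  obtain ⟨c', hc', C', hC', h⟩ := exists_le_mul_exp_neg_mul_sqrt_log (by lia) p.succ_ne_zero hC
    fun s n hn => hfav s n ((Nat.pow_le_pow_right (by lia) (by gcongr; lia)).trans hn)
  exact ⟨c', hc', C', hC', fun n hn => h n (by lia)⟩

/-- For a non-degenerate self-similar family of `M ≥ 3` maps of ratio `1/M`
satisfying the open set condition, `Fav(E_n) ≤ C e^{-c√(log n)}`. -/
theorem favard_selfsimilar_sqrtlog
    (M : ℕ) (hM : 3 ≤ M) (c : Fin M → ℂ)
    (hcol : ¬ Collinear ℝ (Set.range c))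
    (T : Fin M → ℂ → ℂ) (hT : ∀ j z, T j z = z / (M : ℂ) + c j)
    (U : Set ℂ) (hUne : U.Nonempty) (hUopen : IsOpen U)
    (hUbdd : Bornology.IsBounded U)
    (hsub : ∀ j, T j '' U ⊆ U)
    (hdisj : Pairwise fun i j => Disjoint (T i '' U) (T j '' U)) :
    ∃ c' > (0:ℝ), ∃ C > (0:ℝ), ∀ n : ℕ, 2 ≤ n →
      fav (⋃ w : Fin n → Fin M, iterImg T U (List.ofFn w)) ≤
        C * Real.exp (-c' * Real.sqrt (Real.log n)) :=
  favard_selfsimilar_sqrtlog_general M c hcol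
    (fun i j hij => FavardLength.injective_of_pairwise_disjoint_image hUne hdisj
      (funext fun z => by rw [hT, hT, hij])) T hT U hUbdd
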